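/- Let ℓ ∈ ℤ≥0, n ∈ ℤ≥0, ℓ₁,…,ℓₙ ∈ ℤ≥1, and a₁,…,aₙ ∈ ℂ∖{0}. The tensor product U'_q(L(sl₂))-module V = V(ℓ) ⊗ V(ℓ₁,a₁) ⊗ ⋯ ⊗ V(ℓₙ,aₙ) is irreducible if and only if the q-strings S(ℓᵢ,aᵢ) and S(ℓⱼ,aⱼ) are in general position for all i, j ∈ {1,…,n}; moreover, in this case V is of type (1,1). -/

import Mathlib

/-!
A tensor product of evaluation modules is studied in the list form
`Mod q L = V(ℓ₁,a₁) ⊗ (V(ℓ₂,a₂) ⊗ (⋯ ⊗ 1))`, to which the tensor product `⨂ᵢ` is compared by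
`tp_iso`. In terms of the parameters, `S(ℓ,a)` and `S(m,b)` are in general position iff
`a ≠ b q^{±(ℓ+m-2p)}` for all `p < min(ℓ,m)` (`Good`, `genPos_iff_good`).

**L-operators.** Each `Mod q L` carries a `2 × 2` matrix `T(u) = [[A, B], [C, D]]` of operators,
polynomial in `u`, given by an explicit formula on `V(ℓ,a)` (`evT`) and multiplicatively on tensor
products (`LOp.tens`). It intertwines the coproduct with its opposite on `ℂ² ⊗ M` and has a scalar
`q`-determinant (`Law`, `modLaw`). These relations express all coefficients of `T(u)` through the
five generators, so `A(u)`, `B(u)`, `C(u)`, `D(u)` preserve every submodule (`Law.coeff_mem`); and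
since `C(u)` raises the weight, a nonzero submodule contains a nonzero vector killed by all `C(u)`
(`Law.exists_killed`). Therefore `Mod q L` is irreducible if its highest weight vector `Ω` generates
it (`Cyc`) and is, up to scalars, the only vector killed by `C(u)` (`Ckill`).

**General position implies irreducible.** Let the factors be sorted by increasing dimension and add
them one at a time on the left. On `vₖ ⊗ Ω` with `vₖ ∈ V(ℓ,a)`, choosing `u` such that `D(u) vₖ = 0`
turns `B(u)` into a multiple of `vₖ ⊗ Ω ↦ vₖ₊₁ ⊗ Ω`, and choosing `u` such that `A(u) vₖ = 0` forces
the components of a vector killed by `C(u)` to vanish; the scalars which must not vanish are the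
eigenvalues of `A(u)`, `D(u)` on `Ω`, and `Good` says precisely that they do not (`Cyc_step_ne`,
`Ckill_step_ne`). For the remaining factor `V(ℓ) = V(ℓ,0)` one uses the leading coefficients in `u`
instead (`Cyc_step_zero`, `Ckill_step_zero`). This gives `sorted_irr_zero`.

**Reordering the factors.** If `V(ℓ,a) ⊗ V(m,b)` is irreducible it is isomorphic to
`V(m,b) ⊗ V(ℓ,a)` (`swap_iso`): the submodule of their direct sum generated by the pair `(ω, ω')` of
highest weight vectors is spanned by the `FⁱXʲ(ω, ω')` (`gen_hw`), so it does not contain `(ω, 0)`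
and is the graph of an isomorphism. Hence pairwise good factors may be permuted (`perm_iso`).

**Irreducible implies general position.** Tensor factors of an irreducible module are irreducible
(`irr_left`, `irr_right`). By induction all pairs not involving the first factor are good, so any
other factor can be moved next to the first one, and this pair of factors is then irreducible. A pair
which is not good is reducible: for one sign of the exponent there is an explicit proper submodule
(`bad_red`), and the other sign reduces to this one by `swap_iso`.

Finally `K₀` is diagonalizable with the required eigenvalues because weight vectors span (the
field `Law.weights` and `isType11_of_iso`).
-/

open scoped TensorProduct

noncomputable section

/-- The `q`-integer `[t] = (q^t - q^(-t))/(q - q⁻¹)`. -/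
def qnum (q : ℂ) (t : ℤ) : ℂ := (q ^ t - q ^ (-t)) / (q - q⁻¹)

/-- The `q`-factorial `[t]! = [t][t-1]⋯[1]`. -/
def qfac (q : ℂ) (t : ℕ) : ℂ := ∏ k ∈ Finset.range t, qnum q ((k : ℤ) + 1)

/-- Commutator `[X,Y] = XY - YX`. -/
def brk {V : Type*} [AddCommGroup V] [Module ℂ V] (X Y : Module.End ℂ V) :
    Module.End ℂ V := X * Y - Y * X

/-- `q`-commutator `[X,Y]_t = t XY - t⁻¹ YX`. -/
def brkq {V : Type*} [AddCommGroup V] [Module ℂ V] (t : ℂ) (X Y : Module.End ℂ V) :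
    Module.End ℂ V := t • (X * Y) - t⁻¹ • (Y * X)

/-- A `U'_q(L(sl₂))`-module structure on a complex vector space `V`:
operators `(E₀⁺, E₁⁺, E₁⁻, K₀, K₁)` with `K₀, K₁` mutually inverse (hence invertible) and
the defining relations; `K₀ = K₁⁻¹` throughout. -/
structure IsUqpRep (q : ℂ) {V : Type*} [AddCommGroup V] [Module ℂ V]
    (E0 E1p E1m K0 K1 : Module.End ℂ V) : Prop where
  K0K1 : K0 * K1 = 1
  K1K0 : K1 * K0 = 1
  K0E0 : K0 * E0 = q ^ 2 • (E0 * K0)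
  K1E1p : K1 * E1p = q ^ 2 • (E1p * K1)
  K1E1m : K1 * E1m = (q ^ 2)⁻¹ • (E1m * K1)
  K1E0 : K1 * E0 = (q ^ 2)⁻¹ • (E0 * K1)
  K0E1p : K0 * E1p = (q ^ 2)⁻¹ • (E1p * K0)
  K0E1m : K0 * E1m = q ^ 2 • (E1m * K0)
  e1comm : E1p * E1m - E1m * E1p = (q - q⁻¹)⁻¹ • (K1 - K0)
  e0e1m : E0 * E1m = E1m * E0
  serre01 : brk E0 (brkq q⁻¹ E0 (brkq q E0 E1p)) = 0
  serre10 : brk E1p (brkq q⁻¹ E1p (brkq q E1p E0)) = 0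

/-- `K₀` of the evaluation module `V(ℓ,a)`: `K₀ vᵢ = q^(2i-ℓ) vᵢ`. -/
def evalK0 (q : ℂ) (ℓ : ℕ) : Module.End ℂ (Fin (ℓ + 1) → ℂ) :=
  (Matrix.diagonal fun i : Fin (ℓ + 1) => q ^ (2 * (i : ℤ) - ℓ)).mulVecLin

/-- `K₁` of the evaluation module `V(ℓ,a)`: `K₁ vᵢ = q^(ℓ-2i) vᵢ`. -/
def evalK1 (q : ℂ) (ℓ : ℕ) : Module.End ℂ (Fin (ℓ + 1) → ℂ) :=
  (Matrix.diagonal fun i : Fin (ℓ + 1) => q ^ ((ℓ : ℤ) - 2 * i)).mulVecLin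

/-- `E₀⁺` of the evaluation module `V(ℓ,a)`: `E₀⁺ vᵢ = a q [i+1] vᵢ₊₁`. -/
def evalE0 (q a : ℂ) (ℓ : ℕ) : Module.End ℂ (Fin (ℓ + 1) → ℂ) :=
  (Matrix.of fun j i : Fin (ℓ + 1) =>
    if (j : ℕ) = (i : ℕ) + 1 then a * q * qnum q ((i : ℤ) + 1) else 0).mulVecLin

/-- `E₁⁺` of the evaluation module `V(ℓ,a)`: `E₁⁺ vᵢ = [ℓ-i+1] vᵢ₋₁`. -/
def evalE1p (q : ℂ) (ℓ : ℕ) : Module.End ℂ (Fin (ℓ + 1) → ℂ) :=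
  (Matrix.of fun j i : Fin (ℓ + 1) =>
    if (i : ℕ) = (j : ℕ) + 1 then qnum q ((ℓ : ℤ) - (i : ℤ) + 1) else 0).mulVecLin

/-- `E₁⁻` of the evaluation module `V(ℓ,a)`: `E₁⁻ vᵢ = [i+1] vᵢ₊₁`. -/
def evalE1m (q : ℂ) (ℓ : ℕ) : Module.End ℂ (Fin (ℓ + 1) → ℂ) :=
  (Matrix.of fun j i : Fin (ℓ + 1) =>
    if (j : ℕ) = (i : ℕ) + 1 then qnum q ((i : ℤ) + 1) else 0).mulVecLin

/-- Irreducibility: the only subspaces invariant under all five operators are `⊥` and `⊤`. -/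
def IsIrred {V : Type*} [AddCommGroup V] [Module ℂ V]
    (E0 E1p E1m K0 K1 : Module.End ℂ V) : Prop :=
  ∀ W : Submodule ℂ V, (∀ v ∈ W, E0 v ∈ W) → (∀ v ∈ W, E1p v ∈ W) →
    (∀ v ∈ W, E1m v ∈ W) → (∀ v ∈ W, K0 v ∈ W) → (∀ v ∈ W, K1 v ∈ W) →
    W = ⊥ ∨ W = ⊤

/-- Type `(1,1)`: `K₀` is diagonalizable with all eigenvalues of the form `q^(2i-d)`,
`0 ≤ i ≤ d`, i.e. the corresponding eigenspaces span. -/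
def IsType11 (q : ℂ) {V : Type*} [AddCommGroup V] [Module ℂ V] (K0 : Module.End ℂ V) : Prop :=
  ∃ d : ℕ, ⨆ i : Fin (d + 1), Module.End.eigenspace K0 (q ^ (2 * (i : ℤ) - d)) = ⊤

/-- `Δ(K₀) = K₀ ⊗ K₀` on `V(ℓ,a) ⊗ V(m,b)`. -/
def dK0 (q : ℂ) (ℓ m : ℕ) :
    Module.End ℂ (TensorProduct ℂ (Fin (ℓ + 1) → ℂ) (Fin (m + 1) → ℂ)) :=
  TensorProduct.map (evalK0 q ℓ) (evalK0 q m)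

/-- `Δ(K₁) = K₁ ⊗ K₁` on `V(ℓ,a) ⊗ V(m,b)`. -/
def dK1 (q : ℂ) (ℓ m : ℕ) :
    Module.End ℂ (TensorProduct ℂ (Fin (ℓ + 1) → ℂ) (Fin (m + 1) → ℂ)) :=
  TensorProduct.map (evalK1 q ℓ) (evalK1 q m)

/-- `Δ(E₀⁺) = K₀ ⊗ E₀⁺ + E₀⁺ ⊗ 1` on `V(ℓ,a) ⊗ V(m,b)`. -/
def dE0 (q : ℂ) (ℓ m : ℕ) (a b : ℂ) :
    Module.End ℂ (TensorProduct ℂ (Fin (ℓ + 1) → ℂ) (Fin (m + 1) → ℂ)) :=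
  TensorProduct.map (evalK0 q ℓ) (evalE0 q b m) +
    TensorProduct.map (evalE0 q a ℓ) LinearMap.id

/-- `Δ(E₁⁺) = K₁ ⊗ E₁⁺ + E₁⁺ ⊗ 1` on `V(ℓ,a) ⊗ V(m,b)`. -/
def dE1p (q : ℂ) (ℓ m : ℕ) :
    Module.End ℂ (TensorProduct ℂ (Fin (ℓ + 1) → ℂ) (Fin (m + 1) → ℂ)) :=
  TensorProduct.map (evalK1 q ℓ) (evalE1p q m) +
    TensorProduct.map (evalE1p q ℓ) LinearMap.id

/-- `Δ(E₁⁻) = 1 ⊗ E₁⁻ + E₁⁻ ⊗ K₁⁻¹` on `V(ℓ,a) ⊗ V(m,b)` (note `K₁⁻¹ = K₀`). -/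
def dE1m (q : ℂ) (ℓ m : ℕ) :
    Module.End ℂ (TensorProduct ℂ (Fin (ℓ + 1) → ℂ) (Fin (m + 1) → ℂ)) :=
  TensorProduct.map LinearMap.id (evalE1m q m) +
    TensorProduct.map (evalE1m q ℓ) (evalK0 q m)

/-- A linear map intertwines the five structure operators of two
`U'_q(L(sl₂))`-module structures. -/
def IntertwinesAll {V W : Type*} [AddCommGroup V] [Module ℂ V] [AddCommGroup W] [Module ℂ W]
    (σ : V →ₗ[ℂ] W) (A0 A1p A1m AK0 AK1 : Module.End ℂ V)
    (B0 B1p B1m BK0 BK1 : Module.End ℂ W) : Prop :=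
  σ ∘ₗ A0 = B0 ∘ₗ σ ∧ σ ∘ₗ A1p = B1p ∘ₗ σ ∧ σ ∘ₗ A1m = B1m ∘ₗ σ ∧
    σ ∘ₗ AK0 = BK0 ∘ₗ σ ∧ σ ∘ₗ AK1 = BK1 ∘ₗ σ

/-- The underlying space of an iterated tensor product of evaluation modules. -/
abbrev TPS {N : ℕ} (ns : Fin N → ℕ) : Type := ⨂[ℂ] i, (Fin (ns i + 1) → ℂ)

/-- `Δ(K₀)` on an iterated tensor product of evaluation modules. -/
def tpK0 (q : ℂ) {N : ℕ} (ns : Fin N → ℕ) : Module.End ℂ (TPS ns) :=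
  PiTensorProduct.map fun i => evalK0 q (ns i)

/-- `Δ(K₁)` on an iterated tensor product of evaluation modules. -/
def tpK1 (q : ℂ) {N : ℕ} (ns : Fin N → ℕ) : Module.End ℂ (TPS ns) :=
  PiTensorProduct.map fun i => evalK1 q (ns i)

/-- `Δ(E₀⁺) = Σⱼ K₀ ⊗ ⋯ ⊗ K₀ ⊗ E₀⁺ ⊗ 1 ⊗ ⋯ ⊗ 1` (iterated coproduct of
`Δ(E₀⁺) = K₀ ⊗ E₀⁺ + E₀⁺ ⊗ 1`). -/
def tpE0 (q : ℂ) {N : ℕ} (ns : Fin N → ℕ) (as : Fin N → ℂ) : Module.End ℂ (TPS ns) :=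
  ∑ j : Fin N, PiTensorProduct.map fun i =>
    if i < j then evalK0 q (ns i)
    else if i = j then evalE0 q (as i) (ns i)
    else LinearMap.id

/-- `Δ(E₁⁺) = Σⱼ K₁ ⊗ ⋯ ⊗ K₁ ⊗ E₁⁺ ⊗ 1 ⊗ ⋯ ⊗ 1`. -/
def tpE1p (q : ℂ) {N : ℕ} (ns : Fin N → ℕ) : Module.End ℂ (TPS ns) :=
  ∑ j : Fin N, PiTensorProduct.map fun i =>
    if i < j then evalK1 q (ns i)
    else if i = j then evalE1p q (ns i)
    else LinearMap.id

/-- `Δ(E₁⁻) = Σⱼ 1 ⊗ ⋯ ⊗ 1 ⊗ E₁⁻ ⊗ K₁⁻¹ ⊗ ⋯ ⊗ K₁⁻¹` (note `K₁⁻¹ = K₀`). -/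
def tpE1m (q : ℂ) {N : ℕ} (ns : Fin N → ℕ) : Module.End ℂ (TPS ns) :=
  ∑ j : Fin N, PiTensorProduct.map fun i =>
    if i < j then LinearMap.id
    else if i = j then evalE1m q (ns i)
    else evalK0 q (ns i)

/-- The `q`-string `S(ℓ,a) = {a q^(2i-ℓ+1) : 0 ≤ i ≤ ℓ-1}`. -/
def qString (q a : ℂ) (ℓ : ℕ) : Set ℂ :=
  {z | ∃ i : ℕ, i < ℓ ∧ z = a * q ^ (2 * (i : ℤ) - ℓ + 1)}

/-- A set is a `q`-string if it is of the form `S(L,b)` for some `L ≥ 1`, `b ≠ 0`. -/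
def IsQString (q : ℂ) (S : Set ℂ) : Prop :=
  ∃ (L : ℕ) (b : ℂ), 1 ≤ L ∧ b ≠ 0 ∧ S = qString q b L

/-- Two `q`-strings are in general position if their union is not a `q`-string or
one contains the other. -/
def GenPos (q : ℂ) (S S' : Set ℂ) : Prop :=
  ¬ IsQString q (S ∪ S') ∨ S ⊆ S' ∨ S' ⊆ S

/-! ### Evaluation modules and tensor products -/

/-- `q` is nonzero and not a root of unity. -/
structure Generic (q : ℂ) : Prop where
  ne0 : q ≠ 0
  pow_ne : ∀ n : ℕ, 0 < n → q ^ n ≠ 1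

theorem Generic.zpow_ne {q : ℂ} (h : Generic q) {n : ℤ} (hn : n ≠ 0) : q ^ n ≠ 1 := by
  intro h1
  rcases lt_or_gt_of_ne hn with h2 | h2
  · refine h.pow_ne (-n).toNat (by omega) ?_
    rw [← zpow_natCast, Int.toNat_of_nonneg (by omega), zpow_neg, h1, inv_one]
  · refine h.pow_ne n.toNat (by omega) ?_
    rw [← zpow_natCast, Int.toNat_of_nonneg (by omega), h1]

theorem Generic.zpow_inj {q : ℂ} (h : Generic q) {m n : ℤ} (hmn : q ^ m = q ^ n) : m = n := by
  by_contra hne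
  refine h.zpow_ne (sub_ne_zero.2 hne) ?_
  rw [zpow_sub₀ h.ne0, hmn, div_self (zpow_ne_zero _ h.ne0)]

theorem Generic.sub_inv_ne {q : ℂ} (h : Generic q) : q - q⁻¹ ≠ 0 := by
  intro h1
  have : q ^ (1 : ℤ) = q ^ (-1 : ℤ) := by
    rw [zpow_one, zpow_neg, zpow_one]; exact sub_eq_zero.1 h1
  have := h.zpow_inj this
  omega

theorem Generic.sq_sub_one_ne {q : ℂ} (h : Generic q) : q ^ 2 - 1 ≠ 0 :=
  sub_ne_zero.2 (h.pow_ne 2 (by norm_num))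

theorem Generic.qnum_ne {q : ℂ} (h : Generic q) {t : ℤ} (ht : t ≠ 0) : qnum q t ≠ 0 := by
  unfold qnum
  refine div_ne_zero (fun h1 => ?_) h.sub_inv_ne
  have := h.zpow_inj (sub_eq_zero.1 h1)
  omega

theorem qnum_zero (q : ℂ) : qnum q 0 = 0 := by simp [qnum]

/-- The vector `vᵢ` of `V(ℓ,a)`, for every `i : ℕ`; it is `0` when `i > ℓ`. -/
def vec (ℓ i : ℕ) : Fin (ℓ + 1) → ℂ := fun j => if (j : ℕ) = i then 1 else 0

theorem vec_eq_zero {ℓ i : ℕ} (h : ℓ < i) : vec ℓ i = 0 := by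
  funext j
  have := j.2
  simp only [vec, Pi.zero_apply, ite_eq_right_iff]
  omega

theorem vec_ext {ℓ : ℕ} {M : Type*} [AddCommGroup M] [Module ℂ M]
    {f g : (Fin (ℓ + 1) → ℂ) →ₗ[ℂ] M} (h : ∀ i ≤ ℓ, f (vec ℓ i) = g (vec ℓ i)) : f = g := by
  refine (Pi.basisFun ℂ (Fin (ℓ + 1))).ext fun i => ?_
  have : (Pi.basisFun ℂ (Fin (ℓ + 1))) i = vec ℓ i := by
    funext j
    simp [vec, Pi.single_apply, Fin.ext_iff]
  rw [this]
  exact h i (by omega)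

theorem vec_decomp {ℓ : ℕ} (v : Fin (ℓ + 1) → ℂ) :
    v = ∑ i : Fin (ℓ + 1), v i • vec ℓ i := by
  funext j
  simp [vec, Finset.sum_apply, ← Fin.ext_iff]

/-- The `i`-th coordinate functional; it is `0` when `i > ℓ`. -/
def vcoord (ℓ i : ℕ) : (Fin (ℓ + 1) → ℂ) →ₗ[ℂ] ℂ :=
  if h : i < ℓ + 1 then LinearMap.proj (φ := fun _ : Fin (ℓ + 1) => ℂ) ⟨i, h⟩ else 0

theorem vcoord_vec {ℓ i j : ℕ} (h : i ≤ ℓ) : vcoord ℓ i (vec ℓ j) = if i = j then 1 else 0 := by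
  rw [vcoord, dif_pos (by omega)]
  rfl

theorem vcoord_decomp {ℓ : ℕ} (v : Fin (ℓ + 1) → ℂ) :
    v = ∑ i ∈ Finset.range (ℓ + 1), vcoord ℓ i v • vec ℓ i := by
  rw [Finset.sum_range]
  conv_lhs => rw [vec_decomp v]
  refine Finset.sum_congr rfl fun i _ => ?_
  rw [vcoord, dif_pos i.2]
  rfl

theorem matrix_vec {ℓ : ℕ} (M : Matrix (Fin (ℓ + 1)) (Fin (ℓ + 1)) ℂ) {i : ℕ} (hi : i < ℓ + 1) :
    M.mulVecLin (vec ℓ i) = fun j => M j ⟨i, hi⟩ := by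
  funext j
  simp only [Matrix.mulVecLin_apply, Matrix.mulVec, dotProduct, vec, mul_ite, mul_one, mul_zero]
  rw [Finset.sum_eq_single ⟨i, hi⟩]
  · simp
  · intro b _ hb
    rw [if_neg]
    exact fun h => hb (Fin.ext h)
  · simp

theorem evalE0_vec (q a : ℂ) (ℓ i : ℕ) :
    evalE0 q a ℓ (vec ℓ i) = (a * q * qnum q ((i : ℤ) + 1)) • vec ℓ (i + 1) := by
  rcases Nat.lt_or_ge i (ℓ + 1) with hi | hi
  · rw [evalE0, matrix_vec _ hi]
    funext j
    simp [vec]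
  · rw [vec_eq_zero (by omega), vec_eq_zero (by omega), map_zero, smul_zero]

theorem evalE1m_vec (q : ℂ) (ℓ i : ℕ) :
    evalE1m q ℓ (vec ℓ i) = (qnum q ((i : ℤ) + 1)) • vec ℓ (i + 1) := by
  rcases Nat.lt_or_ge i (ℓ + 1) with hi | hi
  · rw [evalE1m, matrix_vec _ hi]
    funext j
    simp [vec]
  · rw [vec_eq_zero (by omega), vec_eq_zero (by omega), map_zero, smul_zero]

theorem evalE1p_vec_zero (q : ℂ) (ℓ : ℕ) : evalE1p q ℓ (vec ℓ 0) = 0 := by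
  rw [evalE1p, matrix_vec _ (by omega)]
  funext j
  simp

theorem evalE1p_vec_succ (q : ℂ) (ℓ i : ℕ) :
    evalE1p q ℓ (vec ℓ (i + 1)) = (qnum q ((ℓ : ℤ) - i)) • vec ℓ i := by
  rcases Nat.lt_or_ge (i + 1) (ℓ + 1) with hi | hi
  · rw [evalE1p, matrix_vec _ hi]
    funext j
    simp only [Matrix.of_apply, add_left_inj, vec, Pi.smul_apply, smul_eq_mul, mul_ite, mul_one,
      mul_zero, eq_comm (a := i)]
    push_cast
    ring_nf
  · rw [vec_eq_zero (by omega), map_zero]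
    rcases Nat.lt_or_ge ℓ i with h | h
    · rw [vec_eq_zero h, smul_zero]
    · have : i = ℓ := by omega
      rw [this, sub_self, qnum_zero, zero_smul]

theorem diagonal_vec (ℓ i : ℕ) (g : ℕ → ℂ) :
    (Matrix.diagonal fun j : Fin (ℓ + 1) => g j).mulVecLin (vec ℓ i) = g i • vec ℓ i := by
  rcases Nat.lt_or_ge i (ℓ + 1) with hi | hi
  · rw [matrix_vec _ hi]
    funext j
    simp only [Matrix.diagonal_apply, vec, Pi.smul_apply, smul_eq_mul, mul_ite, mul_one, mul_zero,
      Fin.ext_iff]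
    split_ifs with h
    · rw [h]
    · rfl
  · rw [vec_eq_zero (by omega), map_zero, smul_zero]

theorem evalK0_vec (q : ℂ) (ℓ i : ℕ) :
    evalK0 q ℓ (vec ℓ i) = (q ^ (2 * (i : ℤ) - ℓ)) • vec ℓ i :=
  diagonal_vec ℓ i fun i => q ^ (2 * (i : ℤ) - ℓ)

theorem evalK1_vec (q : ℂ) (ℓ i : ℕ) :
    evalK1 q ℓ (vec ℓ i) = (q ^ ((ℓ : ℤ) - 2 * i)) • vec ℓ i :=
  diagonal_vec ℓ i fun i => q ^ ((ℓ : ℤ) - 2 * i)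

/-- A finite-dimensional space with five operators `X = E₀⁺`, `E = E₁⁺`, `F = E₁⁻`, `K₀`, `K₁`. -/
structure UMod where
  V : Type
  [acg : AddCommGroup V]
  [mod : Module ℂ V]
  [fd : FiniteDimensional ℂ V]
  X : Module.End ℂ V
  E : Module.End ℂ V
  F : Module.End ℂ V
  K0 : Module.End ℂ V
  K1 : Module.End ℂ V

attribute [instance] UMod.acg UMod.mod UMod.fd

namespace UMod

/-- Invariance of a subspace under the five operators. -/
structure Inv (M : UMod) (W : Submodule ℂ M.V) : Prop where
  X : ∀ v ∈ W, M.X v ∈ W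
  E : ∀ v ∈ W, M.E v ∈ W
  F : ∀ v ∈ W, M.F v ∈ W
  K0 : ∀ v ∈ W, M.K0 v ∈ W
  K1 : ∀ v ∈ W, M.K1 v ∈ W

/-- The only invariant subspaces are `0` and the whole space. -/
def Irr (M : UMod) : Prop := ∀ W : Submodule ℂ M.V, M.Inv W → W = ⊥ ∨ W = ⊤

/-- The tensor product, with the operators given by the coproduct. -/
def tens (A B : UMod) : UMod where
  V := A.V ⊗[ℂ] B.V
  X := TensorProduct.map A.K0 B.X + TensorProduct.map A.X LinearMap.id
  E := TensorProduct.map A.K1 B.E + TensorProduct.map A.E LinearMap.id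
  F := TensorProduct.map LinearMap.id B.F + TensorProduct.map A.F B.K0
  K0 := TensorProduct.map A.K0 B.K0
  K1 := TensorProduct.map A.K1 B.K1

/-- The evaluation module `V(ℓ,a)`. -/
def ev (q : ℂ) (ℓ : ℕ) (a : ℂ) : UMod where
  V := Fin (ℓ + 1) → ℂ
  X := evalE0 q a ℓ
  E := evalE1p q ℓ
  F := evalE1m q ℓ
  K0 := evalK0 q ℓ
  K1 := evalK1 q ℓ

/-- The trivial one-dimensional module. -/
def one : UMod where
  V := ℂ
  X := 0
  E := 0
  F := 0
  K0 := 1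
  K1 := 1

/-- The iterated tensor product of the evaluation modules in a list. -/
def Mod (q : ℂ) : List (ℕ × ℂ) → UMod
  | [] => one
  | x :: L => tens (ev q x.1 x.2) (Mod q L)

/-- A linear isomorphism of modules. -/
structure Iso (M N : UMod) where
  e : M.V ≃ₗ[ℂ] N.V
  X : ∀ v, e (M.X v) = N.X (e v)
  E : ∀ v, e (M.E v) = N.E (e v)
  F : ∀ v, e (M.F v) = N.F (e v)
  K0 : ∀ v, e (M.K0 v) = N.K0 (e v)
  K1 : ∀ v, e (M.K1 v) = N.K1 (e v)

def Iso.refl (M : UMod) : Iso M M where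
  e := LinearEquiv.refl ℂ M.V
  X _ := rfl
  E _ := rfl
  F _ := rfl
  K0 _ := rfl
  K1 _ := rfl

def Iso.symm {M N : UMod} (f : Iso M N) : Iso N M where
  e := f.e.symm
  X v := by rw [LinearEquiv.symm_apply_eq, f.X, f.e.apply_symm_apply]
  E v := by rw [LinearEquiv.symm_apply_eq, f.E, f.e.apply_symm_apply]
  F v := by rw [LinearEquiv.symm_apply_eq, f.F, f.e.apply_symm_apply]
  K0 v := by rw [LinearEquiv.symm_apply_eq, f.K0, f.e.apply_symm_apply]
  K1 v := by rw [LinearEquiv.symm_apply_eq, f.K1, f.e.apply_symm_apply]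

def Iso.trans {M N P : UMod} (f : Iso M N) (g : Iso N P) : Iso M P where
  e := f.e.trans g.e
  X v := by simp [f.X, g.X]
  E v := by simp [f.E, g.E]
  F v := by simp [f.F, g.F]
  K0 v := by simp [f.K0, g.K0]
  K1 v := by simp [f.K1, g.K1]

theorem Iso.irr {M N : UMod} (f : Iso M N) (h : M.Irr) : N.Irr := by
  intro W hW
  have hi : M.Inv (W.comap (f.e : M.V →ₗ[ℂ] N.V)) :=
    ⟨fun v hv => by
      simp only [Submodule.mem_comap, LinearEquiv.coe_coe] at hv ⊢; rw [f.X]; exact hW.X _ hv,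
    fun v hv => by
      simp only [Submodule.mem_comap, LinearEquiv.coe_coe] at hv ⊢; rw [f.E]; exact hW.E _ hv,
    fun v hv => by
      simp only [Submodule.mem_comap, LinearEquiv.coe_coe] at hv ⊢; rw [f.F]; exact hW.F _ hv,
    fun v hv => by
      simp only [Submodule.mem_comap, LinearEquiv.coe_coe] at hv ⊢; rw [f.K0]; exact hW.K0 _ hv,
    fun v hv => by
      simp only [Submodule.mem_comap, LinearEquiv.coe_coe] at hv ⊢; rw [f.K1]; exact hW.K1 _ hv⟩
  have hmem : ∀ w, w ∈ W ↔ f.e.symm w ∈ W.comap (f.e : M.V →ₗ[ℂ] N.V) := fun w => by simp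
  rcases h _ hi with h0 | h0
  · left
    rw [eq_bot_iff]
    intro w hw
    rw [hmem, h0, Submodule.mem_bot] at hw
    simpa using hw
  · right
    rw [eq_top_iff]
    intro w _
    rw [hmem, h0]
    trivial

theorem Iso.irr_iff {M N : UMod} (f : Iso M N) : M.Irr ↔ N.Irr := ⟨f.irr, f.symm.irr⟩

section tens
variable {A B : UMod}

/-- The pure tensor `x ⊗ y` in `A ⊗ B`, bilinear in `x` and `y`. -/
def tm : A.V →ₗ[ℂ] B.V →ₗ[ℂ] (tens A B).V := TensorProduct.mk ℂ A.V B.V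

theorem tens_ext {P : Type*} [AddCommGroup P] [Module ℂ P] {f g : (tens A B).V →ₗ[ℂ] P}
    (h : ∀ x y, f (tm x y) = g (tm x y)) : f = g := TensorProduct.ext' h

theorem tens_ext₃ {C : UMod} {P : Type*} [AddCommGroup P] [Module ℂ P]
    {f g : (tens (tens A B) C).V →ₗ[ℂ] P}
    (h : ∀ x y z, f (tm (tm x y) z) = g (tm (tm x y) z)) : f = g :=
  TensorProduct.ext_threefold h

/-- The linear map on `A ⊗ B` defined by a bilinear map. -/
def tlift {P : Type*} [AddCommGroup P] [Module ℂ P] (f : A.V →ₗ[ℂ] B.V →ₗ[ℂ] P) :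
    (tens A B).V →ₗ[ℂ] P := TensorProduct.lift f

@[simp] theorem tlift_tm {P : Type*} [AddCommGroup P] [Module ℂ P] (f : A.V →ₗ[ℂ] B.V →ₗ[ℂ] P)
    (x : A.V) (y : B.V) : tlift f (tm x y) = f x y := TensorProduct.lift.tmul x y

@[simp] theorem tens_X (x : A.V) (y : B.V) :
    (tens A B).X (tm x y) = tm (A.K0 x) (B.X y) + tm (A.X x) y := rfl
@[simp] theorem tens_E (x : A.V) (y : B.V) :
    (tens A B).E (tm x y) = tm (A.K1 x) (B.E y) + tm (A.E x) y := rfl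
@[simp] theorem tens_F (x : A.V) (y : B.V) :
    (tens A B).F (tm x y) = tm x (B.F y) + tm (A.F x) (B.K0 y) := rfl
@[simp] theorem tens_K0 (x : A.V) (y : B.V) :
    (tens A B).K0 (tm x y) = tm (A.K0 x) (B.K0 y) := rfl
@[simp] theorem tens_K1 (x : A.V) (y : B.V) :
    (tens A B).K1 (tm x y) = tm (A.K1 x) (B.K1 y) := rfl

/-- `f ↦ f ⊗ 1`. -/
def iL (A B : UMod) : Module.End ℂ A.V →ₐ[ℂ] Module.End ℂ (tens A B).V :=
  Module.End.rTensorAlgHom ℂ A.V B.V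

/-- `f ↦ 1 ⊗ f`. -/
def iR (A B : UMod) : Module.End ℂ B.V →ₐ[ℂ] Module.End ℂ (tens A B).V :=
  Module.End.lTensorAlgHom ℂ B.V A.V

@[simp] theorem iL_tm (f : Module.End ℂ A.V) (x : A.V) (y : B.V) :
    iL A B f (tm x y) = tm (f x) y := rfl
@[simp] theorem iR_tm (f : Module.End ℂ B.V) (x : A.V) (y : B.V) :
    iR A B f (tm x y) = tm x (f y) := rfl

theorem iL_iR_comm (f : Module.End ℂ A.V) (g : Module.End ℂ B.V) :
    iL A B f * iR A B g = iR A B g * iL A B f :=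
  tens_ext fun x y => by simp

theorem tens_X' : (tens A B).X = iL A B A.K0 * iR A B B.X + iL A B A.X :=
  tens_ext fun x y => by simp
theorem tens_E' : (tens A B).E = iL A B A.K1 * iR A B B.E + iL A B A.E :=
  tens_ext fun x y => by simp
theorem tens_F' : (tens A B).F = iR A B B.F + iL A B A.F * iR A B B.K0 :=
  tens_ext fun x y => by simp
theorem tens_K0' : (tens A B).K0 = iL A B A.K0 * iR A B B.K0 :=
  tens_ext fun x y => by simp
theorem tens_K1' : (tens A B).K1 = iL A B A.K1 * iR A B B.K1 :=
  tens_ext fun x y => by simp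

end tens

/-- An isomorphism from operator identities. -/
def Iso.mk' {M N : UMod} (e : M.V ≃ₗ[ℂ] N.V)
    (X : (e : M.V →ₗ[ℂ] N.V) ∘ₗ M.X = N.X ∘ₗ (e : M.V →ₗ[ℂ] N.V))
    (E : (e : M.V →ₗ[ℂ] N.V) ∘ₗ M.E = N.E ∘ₗ (e : M.V →ₗ[ℂ] N.V))
    (F : (e : M.V →ₗ[ℂ] N.V) ∘ₗ M.F = N.F ∘ₗ (e : M.V →ₗ[ℂ] N.V))
    (K0 : (e : M.V →ₗ[ℂ] N.V) ∘ₗ M.K0 = N.K0 ∘ₗ (e : M.V →ₗ[ℂ] N.V))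
    (K1 : (e : M.V →ₗ[ℂ] N.V) ∘ₗ M.K1 = N.K1 ∘ₗ (e : M.V →ₗ[ℂ] N.V)) : Iso M N :=
  ⟨e, LinearMap.congr_fun X, LinearMap.congr_fun E, LinearMap.congr_fun F,
    LinearMap.congr_fun K0, LinearMap.congr_fun K1⟩

/-- The linear equivalence underlying the tensor product of isomorphisms. -/
def congrE {A A' B B' : UMod} (f : Iso A A') (g : Iso B B') :
    (tens A B).V ≃ₗ[ℂ] (tens A' B').V := TensorProduct.congr f.e g.e

@[simp] theorem congrE_tm {A A' B B' : UMod} (f : Iso A A') (g : Iso B B') (x : A.V) (y : B.V) :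
    congrE f g (tm x y) = tm (f.e x) (g.e y) := rfl

/-- Tensor product of isomorphisms. -/
def Iso.tens {A A' B B' : UMod} (f : Iso A A') (g : Iso B B') :
    Iso (tens A B) (tens A' B') :=
  Iso.mk' (congrE f g) (tens_ext fun x y => by simp [f.K0, g.X, f.X])
    (tens_ext fun x y => by simp [f.K1, g.E, f.E]) (tens_ext fun x y => by simp [f.F, g.K0, g.F])
    (tens_ext fun x y => by simp [f.K0, g.K0]) (tens_ext fun x y => by simp [f.K1, g.K1])

/-- The linear equivalence underlying associativity. -/
def assocE (A B C : UMod) :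
    (UMod.tens (UMod.tens A B) C).V ≃ₗ[ℂ] (UMod.tens A (UMod.tens B C)).V :=
  TensorProduct.assoc ℂ A.V B.V C.V

@[simp] theorem assocE_tm {A B C : UMod} (x : A.V) (y : B.V) (z : C.V) :
    assocE A B C (tm (tm x y) z) = tm x (tm y z) := rfl

/-- Associativity of the tensor product of modules. -/
def Iso.assoc (A B C : UMod) :
    Iso (UMod.tens (UMod.tens A B) C) (UMod.tens A (UMod.tens B C)) :=
  Iso.mk' (assocE A B C) (tens_ext₃ fun x y z => by simp [add_assoc])
    (tens_ext₃ fun x y z => by simp [add_assoc]) (tens_ext₃ fun x y z => by simp [add_assoc])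
    (tens_ext₃ fun x y z => by simp) (tens_ext₃ fun x y z => by simp)

section ev
variable {q : ℂ} {ℓ : ℕ} {a : ℂ}

/-- The vector `vᵢ` of `V(ℓ,a)`. -/
def bv (q : ℂ) (ℓ : ℕ) (a : ℂ) (i : ℕ) : (ev q ℓ a).V := vec ℓ i

theorem bv_eq_zero {i : ℕ} (h : ℓ < i) : bv q ℓ a i = 0 := vec_eq_zero h

theorem bv_ne_zero {i : ℕ} (h : i ≤ ℓ) : bv q ℓ a i ≠ 0 := by
  intro h1
  have := congrFun (show vec ℓ i = 0 from h1) ⟨i, by omega⟩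
  simp [vec] at this

theorem bv_ext {P : Type*} [AddCommGroup P] [Module ℂ P] {f g : (ev q ℓ a).V →ₗ[ℂ] P}
    (h : ∀ i ≤ ℓ, f (bv q ℓ a i) = g (bv q ℓ a i)) : f = g := vec_ext h

/-- The `i`-th coordinate functional of `V(ℓ,a)`. -/
def bc (q : ℂ) (ℓ : ℕ) (a : ℂ) (i : ℕ) : (ev q ℓ a).V →ₗ[ℂ] ℂ := vcoord ℓ i

theorem bc_bv {i j : ℕ} (h : i ≤ ℓ) : bc q ℓ a i (bv q ℓ a j) = if i = j then 1 else 0 :=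
  vcoord_vec h

theorem bv_decomp (v : (ev q ℓ a).V) :
    v = ∑ i ∈ Finset.range (ℓ + 1), bc q ℓ a i v • bv q ℓ a i := vcoord_decomp v

/-- The diagonal operator `vᵢ ↦ g(i) vᵢ`. -/
def dg (q : ℂ) (ℓ : ℕ) (a : ℂ) (g : ℕ → ℂ) : Module.End ℂ (ev q ℓ a).V :=
  (Matrix.diagonal fun j : Fin (ℓ + 1) => g j).mulVecLin

@[simp] theorem dg_bv (g : ℕ → ℂ) (i : ℕ) : dg q ℓ a g (bv q ℓ a i) = g i • bv q ℓ a i :=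
  diagonal_vec ℓ i g
@[simp] theorem ev_X (i : ℕ) :
    (ev q ℓ a).X (bv q ℓ a i) = (a * q * qnum q ((i : ℤ) + 1)) • bv q ℓ a (i + 1) :=
  evalE0_vec q a ℓ i
@[simp] theorem ev_F (i : ℕ) :
    (ev q ℓ a).F (bv q ℓ a i) = (qnum q ((i : ℤ) + 1)) • bv q ℓ a (i + 1) :=
  evalE1m_vec q ℓ i
@[simp] theorem ev_E_zero : (ev q ℓ a).E (bv q ℓ a 0) = 0 := evalE1p_vec_zero q ℓ
@[simp] theorem ev_E_succ (i : ℕ) :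
    (ev q ℓ a).E (bv q ℓ a (i + 1)) = (qnum q ((ℓ : ℤ) - i)) • bv q ℓ a i :=
  evalE1p_vec_succ q ℓ i
@[simp] theorem ev_K0 (i : ℕ) :
    (ev q ℓ a).K0 (bv q ℓ a i) = (q ^ (2 * (i : ℤ) - ℓ)) • bv q ℓ a i := evalK0_vec q ℓ i
@[simp] theorem ev_K1 (i : ℕ) :
    (ev q ℓ a).K1 (bv q ℓ a i) = (q ^ ((ℓ : ℤ) - 2 * i)) • bv q ℓ a i := evalK1_vec q ℓ i

end ev

end UMod

/-! ### L-operators -/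

/-- `2 × 2` matrices. -/
abbrev Mat (R : Type*) := Matrix (Fin 2) (Fin 2) R

/-- The scalar matrix with entry `x`. -/
abbrev sm {R : Type*} [Ring R] : R →+* Mat R := Matrix.scalar (Fin 2)

theorem comm_sm {R : Type*} [Ring R] {m : Mat R} {x : R} (h : ∀ i j, m i j * x = x * m i j) : m * sm x = sm x * m := by
  ext i j
  simp [sm, h]

/-- Transposition reverses products of matrices whose entries commute with each other. -/
theorem transpose_mul_of_comm {R : Type*} [Ring R] {m n : Mat R} (h : ∀ i j k l, m i j * n k l = n k l * m i j) :
    (m * n).transpose = n.transpose * m.transpose := by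
  ext i j
  simp only [Matrix.transpose_apply, Matrix.mul_apply]
  exact Finset.sum_congr rfl fun k _ => h _ _ _ _

/-- If `T` and `T'` commute with `kK` and `kK'`, the product `T'T` commutes with `kKK'`: the
computation behind the compatibility of `T(u)` with `Δ(K) = K ⊗ K`. -/
theorem coprod_aux' {R : Type*} [Ring R] {T T' k K K' : R}
    (hK : T * (k * K) = k * K * T) (hK' : T' * (k * K') = k * K' * T')
    (c1 : T * K' = K' * T) (c3 : T' * K = K * T') (c4 : K * K' = K' * K) :
    T' * T * (k * (K * K')) = k * (K * K') * (T' * T) := by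
  calc T' * T * (k * (K * K')) = T' * (T * (k * K)) * K' := by noncomm_ring
    _ = T' * k * K * (T * K') := by rw [hK]; noncomm_ring
    _ = T' * k * (K * K') * T := by rw [c1]; noncomm_ring
    _ = (T' * (k * K')) * K * T := by rw [c4]; noncomm_ring
    _ = k * K' * (T' * K) * T := by rw [hK']; noncomm_ring
    _ = k * (K' * K) * (T' * T) := by rw [c3]; noncomm_ring
    _ = _ := by rw [c4]

section loops
variable {R : Type*} [Ring R] [Algebra ℂ R]

/-- Evaluation at the scalar `u` of a polynomial with coefficients in a noncommutative algebra. -/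
def evu (R : Type*) [Ring R] [Algebra ℂ R] (u : ℂ) : Polynomial R →+* R :=
  Polynomial.eval₂RingHom' (RingHom.id R) (algebraMap ℂ R u) fun a => (Algebra.commutes u a).symm

@[simp] theorem evu_C (u : ℂ) (x : R) : evu R u (Polynomial.C x) = x :=
  Polynomial.eval₂_C _ _

@[simp] theorem evu_X (u : ℂ) : evu R u Polynomial.X = algebraMap ℂ R u :=
  Polynomial.eval₂_X _ _

theorem evu_sum (u : ℂ) (p : Polynomial R) {n : ℕ} (hn : p.natDegree < n) :
    evu R u p = ∑ k ∈ Finset.range n, u ^ k • p.coeff k := by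
  change Polynomial.eval₂ _ _ p = _
  rw [Polynomial.eval₂_eq_sum_range' _ hn]
  refine Finset.sum_congr rfl fun k _ => ?_
  rw [← map_pow, RingHom.id_apply, Algebra.smul_def, Algebra.commutes]

theorem evu_map {S : Type*} [Ring S] [Algebra ℂ S] (f : R →ₐ[ℂ] S) (u : ℂ) (p : Polynomial R) :
    evu S u (Polynomial.map (f : R →+* S) p) = f (evu R u p) := by
  change Polynomial.eval₂ _ _ _ = f (Polynomial.eval₂ _ _ p)
  rw [Polynomial.eval₂_map, Polynomial.eval₂_eq_sum_range, Polynomial.eval₂_eq_sum_range, map_sum]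
  simp

theorem evu_zero (p : Polynomial R) : evu R 0 p = p.coeff 0 := by
  rw [evu_sum 0 p (Nat.lt_succ_self _), Finset.sum_range_succ', Finset.sum_eq_zero]
  · simp
  · intro k _
    simp

/-- A complex matrix, viewed with entries in an algebra. -/
def sc (R : Type*) [Ring R] [Algebra ℂ R] : Mat ℂ →+* Mat R := (algebraMap ℂ R).mapMatrix

theorem sc_sm (m : Mat ℂ) (x : R) : sc R m * sm x = sm x * sc R m := by
  ext i j
  simp [sc, sm, Algebra.commutes]

/-- If `T` and `T'` intertwine as in `Law.relE`, so does the product `T'T`, with the coproduct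
`K ⊗ E' + E ⊗ 1` in place of `E`. -/
theorem coprod_aux {R : Type*} [Ring R] {T T' k e E E' K K' : R}
    (h : T * (k * E + e) = (K * e + E) * T) (h' : T' * (k * E' + e) = (K' * e + E') * T')
    (hK : T * (k * K) = k * K * T) (c1 : T * E' = E' * T) (c2 : T' * E = E * T')
    (c3 : T' * K = K * T') (c6 : k * K = K * k) :
    T' * T * (k * (K * E' + E) + e) = (K * K' * e + (K * E' + E)) * (T' * T) := by
  have h1 : T' * T * (k * (K * E' + E) + e)
      = T' * ((T * (k * K)) * E') + T' * (T * (k * E + e)) := by noncomm_ring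
  have h2 : T' * (k * K * T * E') = K * (T' * (k * E')) * T := by
    calc T' * (k * K * T * E') = T' * (k * K * (T * E')) := by noncomm_ring
      _ = (T' * K) * k * E' * T := by rw [c1, c6]; noncomm_ring
      _ = _ := by rw [c3]; noncomm_ring
  have h3 : T' * ((K * e + E) * T) = K * (T' * e) * T + E * T' * T := by
    calc T' * ((K * e + E) * T) = (T' * K) * e * T + (T' * E) * T := by noncomm_ring
      _ = _ := by rw [c3, c2]; noncomm_ring
  rw [h1, hK, h, h2, h3]
  have h4 : K * (T' * (k * E')) * T + (K * (T' * e) * T + E * T' * T)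
      = K * (T' * (k * E' + e)) * T + E * T' * T := by noncomm_ring
  rw [h4, h']
  noncomm_ring

/-- An algebra homomorphism applied entrywise. -/
def lm {S : Type*} [Ring S] [Algebra ℂ S] (f : R →ₐ[ℂ] S) : Mat R →+* Mat S :=
  (f : R →+* S).mapMatrix

@[simp] theorem lm_apply {S : Type*} [Ring S] [Algebra ℂ S] (f : R →ₐ[ℂ] S) (m : Mat R)
    (i j : Fin 2) : lm f m i j = f (m i j) := rfl

theorem lm_smul {S : Type*} [Ring S] [Algebra ℂ S] (f : R →ₐ[ℂ] S) (c : ℂ) (m : Mat R) :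
    lm f (c • m) = c • lm f m := by
  ext i j
  simp

theorem lm_sc {S : Type*} [Ring S] [Algebra ℂ S] (f : R →ₐ[ℂ] S)
    (m : Mat ℂ) : lm f (sc R m) = sc S m := by
  ext i j
  simp [sc, lm]

theorem lm_sm {S : Type*} [Ring S] [Algebra ℂ S] (f : R →ₐ[ℂ] S)
    (x : R) : lm f (sm x) = sm (f x) := by
  ext i j
  simp [sm, lm, Matrix.diagonal_apply, apply_ite f]

end loops

namespace UMod

/-- The matrix `diag(q, q⁻¹)`. -/
def kM (q : ℂ) : Mat ℂ := !![q, 0; 0, q⁻¹]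
/-- The matrix `diag(q⁻¹, q)`. -/
def kM' (q : ℂ) : Mat ℂ := !![q⁻¹, 0; 0, q]
/-- The matrix unit `E₁₂`. -/
def eM : Mat ℂ := !![0, 1; 0, 0]
/-- The matrix unit `E₂₁`. -/
def fM : Mat ℂ := !![0, 0; 1, 0]
/-- The matrix `J` with `T(u) J T(q²u)ᵀ = δ(u) J`, where `δ(u)` is the `q`-determinant. -/
def jM (q : ℂ) : Mat ℂ := !![0, 1; -q, 0]

/-- A `2 × 2` matrix of operator-valued polynomials. -/
abbrev LOp (M : UMod) := Mat (Polynomial (Module.End ℂ M.V))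

/-- The value at `u` of an operator-valued polynomial matrix. -/
def LOp.at {M : UMod} (T : LOp M) (u : ℂ) : Mat (Module.End ℂ M.V) :=
  (evu (Module.End ℂ M.V) u).mapMatrix T

/-- The relations between an L-operator and the five generators: it intertwines the coproduct with
its opposite on `ℂ² ⊗ M` and has a scalar `q`-determinant. Moreover `M` is spanned by weight vectors
of weights `q^{d-2i}`, on which `A(0)` acts by `q^{-i}`. -/
structure Law (q : ℂ) (M : UMod) (T : LOp M) : Prop where
  K0K1 : M.K0 * M.K1 = 1
  K1K0 : M.K1 * M.K0 = 1
  relE : ∀ u, T.at u * (sc _ (kM q) * sm M.E + sc _ eM) = (sm M.K1 * sc _ eM + sm M.E) * T.at u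
  relX : ∀ u, T.at u * (sc _ (kM' q) * sm (u • M.X) + sc _ fM) =
    (sm M.K0 * sc _ fM + sm (u • M.X)) * T.at u
  relK1 : ∀ u, T.at u * (sc _ (kM q) * sm M.K1) = sc _ (kM q) * sm M.K1 * T.at u
  relK0 : ∀ u, T.at u * (sc _ (kM' q) * sm M.K0) = sc _ (kM' q) * sm M.K0 * T.at u
  qdet : ∃ δ : Polynomial ℂ, ∀ u, T.at u * sc _ (jM q) * (T.at (q ^ 2 * u)).transpose =
    δ.eval u • sc _ (jM q)
  weights : ∃ d : ℕ, Submodule.span ℂ {v : M.V | ∃ i ≤ d, M.K1 v = q ^ ((d : ℤ) - 2 * i) • v ∧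
    T.at 0 0 0 v = q ^ (-(i : ℤ)) • v} = ⊤

/-- The L-operator of a tensor product `A ⊗ B`: the matrix product with the factor acting on `B` on
the left. -/
def LOp.tens {A B : UMod} (S : LOp A) (T : LOp B) : LOp (UMod.tens A B) :=
  (Polynomial.mapRingHom (RingHomClass.toRingHom (iR A B))).mapMatrix T *
    (Polynomial.mapRingHom (RingHomClass.toRingHom (iL A B))).mapMatrix S

theorem LOp.tens_at {A B : UMod} (S : LOp A) (T : LOp B) (u : ℂ) :
    (S.tens T).at u = lm (iR A B) (T.at u) * lm (iL A B) (S.at u) := by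
  rw [LOp.tens, LOp.at, map_mul]
  congr 1 <;>
  · ext i j : 2
    simp [LOp.at, evu_map]

theorem Law.B_zero {q : ℂ} {M : UMod} {T : LOp M} (h : Law q M T) : T.at 0 0 1 = 0 := by
  have := congrFun (congrFun (h.relX 0) 0) 0
  simpa [sc, sm, kM', fM, Matrix.mul_apply, Fin.sum_univ_two] using this

/-- The relations of an L-operator are inherited by tensor products. -/
theorem Law.tens {q : ℂ} {A B : UMod} {S : LOp A} {T : LOp B} (hS : Law q A S)
    (hT : Law q B T) (hq : q ≠ 0) : Law q (UMod.tens A B) (S.tens T) := by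
  have cLR : ∀ f g, iL A B f * iR A B g = iR A B g * iL A B f := iL_iR_comm
  have c1 : ∀ u y, (lm (iL A B) (S.at u)) * sm (iR A B y) =
      sm (iR A B y) * (lm (iL A B) (S.at u)) := fun u y =>
    comm_sm fun i j => by simp [cLR]
  have c2 : ∀ u x, (lm (iR A B) (T.at u)) * sm (iL A B x) =
      sm (iL A B x) * (lm (iR A B) (T.at u)) := fun u x =>
    comm_sm fun i j => by simp [cLR]
  have mS := fun u => congrArg (lm (iL A B)) (hS.relE u)
  have mT := fun u => congrArg (lm (iR A B)) (hT.relE u)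
  have mS' := fun u => congrArg (lm (iL A B)) (hS.relX u)
  have mT' := fun u => congrArg (lm (iR A B)) (hT.relX u)
  have kS := fun u => congrArg (lm (iL A B)) (hS.relK1 u)
  have kT := fun u => congrArg (lm (iR A B)) (hT.relK1 u)
  have kS' := fun u => congrArg (lm (iL A B)) (hS.relK0 u)
  have kT' := fun u => congrArg (lm (iR A B)) (hT.relK0 u)
  simp only [map_mul, map_add, lm_sc, lm_sm] at mS mT mS' mT' kS kT kS' kT'
  refine ⟨?_, ?_, fun u => ?_, fun u => ?_, fun u => ?_, fun u => ?_, ?_, ?_⟩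
  · exact tens_ext fun x y => by
      have h1 := LinearMap.congr_fun hS.K0K1 x
      have h2 := LinearMap.congr_fun hT.K0K1 y
      simp_all
  · exact tens_ext fun x y => by
      have h1 := LinearMap.congr_fun hS.K1K0 x
      have h2 := LinearMap.congr_fun hT.K1K0 y
      simp_all
  · have := coprod_aux (mS u) (mT u) (kS u) (c1 u _) (c2 u _) (c2 u _) (sc_sm _ _)
    rw [LOp.tens_at, tens_E', tens_K1']
    simpa only [map_add, map_mul] using this
  · have := coprod_aux (mS' u) (mT' u) (kS' u) (c1 u _) (c2 u _) (c2 u _) (sc_sm _ _)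
    rw [LOp.tens_at, tens_X', tens_K0', smul_add, ← mul_smul_comm, ← map_smul, ← map_smul]
    simpa only [map_add, map_mul] using this
  · rw [LOp.tens_at, tens_K1', map_mul sm]
    exact coprod_aux' (kS u) (kT u) (c1 u _) (c2 u _) (by rw [← map_mul, cLR, map_mul])
  · rw [LOp.tens_at, tens_K0', map_mul sm]
    exact coprod_aux' (kS' u) (kT' u) (c1 u _) (c2 u _) (by rw [← map_mul, cLR, map_mul])
  · obtain ⟨δ, h1⟩ := hS.qdet
    obtain ⟨δ', h2⟩ := hT.qdet
    refine ⟨δ * δ', fun u => ?_⟩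
    rw [LOp.tens_at, LOp.tens_at, transpose_mul_of_comm (fun i j k l => by simp [cLR])]
    have e1 := congrArg (lm (iL A B)) (h1 u)
    have e2 := congrArg (lm (iR A B)) (h2 u)
    rw [map_mul, map_mul, lm_smul, lm_sc] at e1 e2
    change _ * _ * (lm (iL A B) (S.at (q ^ 2 * u))).transpose = _ at e1
    change _ * _ * (lm (iR A B) (T.at (q ^ 2 * u))).transpose = _ at e2
    rw [mul_assoc, mul_assoc, ← mul_assoc (sc _ (jM q)), ← mul_assoc _ (_ * _), ← mul_assoc _ (sc _ (jM q)),
      e1, smul_mul_assoc, mul_smul_comm, ← mul_assoc, e2, smul_smul, Polynomial.eval_mul]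
  · obtain ⟨d, h1⟩ := hS.weights
    obtain ⟨d', h2⟩ := hT.weights
    refine ⟨d + d', ?_⟩
    have h3 := TensorProduct.map₂_mk_top_top_eq_top (R := ℂ) (M := A.V) (N := B.V)
    rw [← h1, ← h2, Submodule.map₂_span_span] at h3
    refine eq_top_iff.2 (h3.symm.le.trans (Submodule.span_mono ?_))
    rintro _ ⟨x, ⟨i, hi, hx, hx'⟩, y, ⟨j, hj, hy, hy'⟩, rfl⟩
    refine ⟨i + j, by omega, ?_, ?_⟩
    · change (UMod.tens A B).K1 (tm x y) = _ • (tm x y)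
      rw [tens_K1, hx, hy, map_smul, map_smul, LinearMap.smul_apply, smul_smul, ← zpow_add₀ hq]
      congr 2
      push_cast
      ring
    · change (S.tens T).at 0 0 0 (tm x y) = _ • (tm x y)
      rw [LOp.tens_at, Matrix.mul_apply, Fin.sum_univ_two, lm_apply, lm_apply, lm_apply, lm_apply,
        hT.B_zero, map_zero, zero_mul, add_zero, Module.End.mul_apply, iL_tm, iR_tm, hx', hy',
        map_smul, map_smul, LinearMap.smul_apply, smul_smul, ← zpow_add₀ hq]
      congr 2
      push_cast
      ring

end UMod

/-! ### The L-operator of an evaluation module -/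

namespace UMod

/-- The L-operator of `V(ℓ,a)`. -/
def evT (q : ℂ) (ℓ : ℕ) (a : ℂ) : LOp (ev q ℓ a) :=
  !![Polynomial.C (dg q ℓ a fun i => q ^ (-(i : ℤ))) -
        Polynomial.X * Polynomial.C (dg q ℓ a fun i => a * q ^ ((i : ℤ) - ℓ)),
      Polynomial.X * Polynomial.C ((ev q ℓ a).X * dg q ℓ a fun i => q ^ (-(i : ℤ)) * (1 - q⁻¹ ^ 2));
    Polynomial.C ((ev q ℓ a).E * dg q ℓ a fun i => q ^ ((i : ℤ) - ℓ) * (1 - q⁻¹ ^ 2)),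
      Polynomial.C (dg q ℓ a fun i => q ^ ((i : ℤ) - ℓ)) -
        Polynomial.X * Polynomial.C (dg q ℓ a fun i => a * q ^ (-(i : ℤ)))]

set_option linter.unusedSimpArgs false

variable {q : ℂ} {ℓ : ℕ} {a : ℂ}

theorem evT_A (u : ℂ) (i : ℕ) : (evT q ℓ a).at u 0 0 (bv q ℓ a i) =
    (q ^ (-(i : ℤ)) - u * a * q ^ ((i : ℤ) - ℓ)) • bv q ℓ a i := by
  simp [evT, LOp.at, sub_smul, mul_smul]

theorem evT_B (u : ℂ) (i : ℕ) : (evT q ℓ a).at u 0 1 (bv q ℓ a i) =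
    (u * (q ^ (-(i : ℤ)) * (1 - q⁻¹ ^ 2)) * (a * q * qnum q ((i : ℤ) + 1))) •
      bv q ℓ a (i + 1) := by
  simp only [evT, LOp.at, RingHom.mapMatrix_apply, Matrix.map_apply, Matrix.of_apply,
    Matrix.cons_val', Matrix.cons_val_zero, Matrix.cons_val_one, Matrix.cons_val_fin_one, map_mul,
    evu_X, evu_C, Module.End.mul_apply, dg_bv, map_smul, ev_X, Module.algebraMap_end_apply,
    smul_smul, mul_assoc]
  congr 1
  ring

theorem evT_C_zero (u : ℂ) : (evT q ℓ a).at u 1 0 (bv q ℓ a 0) = 0 := by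
  simp [evT, LOp.at]

theorem evT_C_succ (u : ℂ) (i : ℕ) : (evT q ℓ a).at u 1 0 (bv q ℓ a (i + 1)) =
    (q ^ ((i : ℤ) + 1 - ℓ) * (1 - q⁻¹ ^ 2) * qnum q ((ℓ : ℤ) - i)) • bv q ℓ a i := by
  simp [evT, LOp.at, smul_smul]

theorem evT_D (u : ℂ) (i : ℕ) : (evT q ℓ a).at u 1 1 (bv q ℓ a i) =
    (q ^ ((i : ℤ) - ℓ) - u * a * q ^ (-(i : ℤ))) • bv q ℓ a i := by
  simp [evT, LOp.at, sub_smul, mul_smul]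

theorem mat_ext {R : Type*} {m n : Mat R} (h00 : m 0 0 = n 0 0) (h01 : m 0 1 = n 0 1)
    (h10 : m 1 0 = n 1 0) (h11 : m 1 1 = n 1 1) : m = n := by
  ext i j
  fin_cases i <;> fin_cases j <;> assumption

theorem mat_iff {R : Type*} {m n : Mat R} : m = n ↔
    m 0 0 = n 0 0 ∧ m 0 1 = n 0 1 ∧ m 1 0 = n 1 0 ∧ m 1 1 = n 1 1 :=
  ⟨fun h => by simp [h], fun h => mat_ext h.1 h.2.1 h.2.2.1 h.2.2.2⟩

section entries
variable {R : Type*} [Ring R] [Algebra ℂ R]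

theorem relE_iff {T : Mat R} {E K : R} :
    T * (sc R (kM q) * sm E + sc R eM) = (sm K * sc R eM + sm E) * T ↔
    q • (T 0 0 * E) = K * T 1 0 + E * T 0 0 ∧ q⁻¹ • (T 0 1 * E) + T 0 0 = K * T 1 1 + E * T 0 1 ∧
    q • (T 1 0 * E) = E * T 1 0 ∧ q⁻¹ • (T 1 1 * E) + T 1 0 = E * T 1 1 := by
  simp [mat_iff, sc, sm, kM, eM, Matrix.mul_apply, Fin.sum_univ_two, ← Algebra.smul_def, add_comm]

theorem relX_iff {T : Mat R} {X K : R} :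
    T * (sc R (kM' q) * sm X + sc R fM) = (sm K * sc R fM + sm X) * T ↔
    q⁻¹ • (T 0 0 * X) + T 0 1 = X * T 0 0 ∧ q • (T 0 1 * X) = X * T 0 1 ∧
    q⁻¹ • (T 1 0 * X) + T 1 1 = K * T 0 0 + X * T 1 0 ∧ q • (T 1 1 * X) = K * T 0 1 + X * T 1 1 := by
  simp [mat_iff, sc, sm, kM', fM, Matrix.mul_apply, Fin.sum_univ_two, ← Algebra.smul_def]

theorem relK1_iff {T : Mat R} {K : R} :
    T * (sc R (kM q) * sm K) = sc R (kM q) * sm K * T ↔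
    q • (T 0 0 * K) = q • (K * T 0 0) ∧ q⁻¹ • (T 0 1 * K) = q • (K * T 0 1) ∧
    q • (T 1 0 * K) = q⁻¹ • (K * T 1 0) ∧ q⁻¹ • (T 1 1 * K) = q⁻¹ • (K * T 1 1) := by
  simp [mat_iff, sc, sm, kM, Matrix.mul_apply, Fin.sum_univ_two, ← Algebra.smul_def]

theorem relK0_iff {T : Mat R} {K : R} :
    T * (sc R (kM' q) * sm K) = sc R (kM' q) * sm K * T ↔
    q⁻¹ • (T 0 0 * K) = q⁻¹ • (K * T 0 0) ∧ q • (T 0 1 * K) = q⁻¹ • (K * T 0 1) ∧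
    q⁻¹ • (T 1 0 * K) = q • (K * T 1 0) ∧ q • (T 1 1 * K) = q • (K * T 1 1) := by
  simp [mat_iff, sc, sm, kM', Matrix.mul_apply, Fin.sum_univ_two, ← Algebra.smul_def]

theorem qdet_iff {T S : Mat R} {δ : ℂ} :
    T * sc R (jM q) * S.transpose = δ • sc R (jM q) ↔
    T 0 0 * S 0 1 - q • (T 0 1 * S 0 0) = 0 ∧
    T 0 0 * S 1 1 - q • (T 0 1 * S 1 0) = δ • 1 ∧
    T 1 0 * S 0 1 - q • (T 1 1 * S 0 0) = - (q * δ) • 1 ∧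
    T 1 0 * S 1 1 - q • (T 1 1 * S 1 0) = 0 := by
  simp [mat_iff, sc, jM, Matrix.mul_apply, Fin.sum_univ_two, sub_eq_add_neg, add_comm,
    Algebra.algebraMap_eq_smul_one, smul_smul, mul_comm]

end entries

theorem qnum_eq (h : Generic q) (t : ℤ) : qnum q t = q * (q ^ t - (q ^ t)⁻¹) / (q ^ 2 - 1) := by
  have h0 := h.ne0
  have h1 := h.sub_inv_ne
  have h2 := h.sq_sub_one_ne
  rw [qnum, zpow_neg]
  have h3 : q - q⁻¹ = (q ^ 2 - 1) / q := by field_simp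
  rw [h3, div_div_eq_mul_div]
  ring

/-- Reduces an operator identity on `V(ℓ,a)` to `v₀` and the `vᵢ₊₁`. -/
theorem bv_ext' {P : Type*} [AddCommGroup P] [Module ℂ P] {f g : (ev q ℓ a).V →ₗ[ℂ] P}
    (h0 : f (bv q ℓ a 0) = g (bv q ℓ a 0))
    (h : ∀ i, f (bv q ℓ a (i + 1)) = g (bv q ℓ a (i + 1))) : f = g := by
  refine bv_ext fun i _ => ?_
  cases i with
  | zero => exact h0
  | succ i => exact h i

theorem evT_relE (h : Generic q) (u : ℂ) :
    (evT q ℓ a).at u * (sc _ (kM q) * sm (ev q ℓ a).E + sc _ eM) =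
      (sm (ev q ℓ a).K1 * sc _ eM + sm (ev q ℓ a).E) * (evT q ℓ a).at u := by
  have h0 := h.ne0
  have h2 := h.sq_sub_one_ne
  rw [relE_iff]
  refine ⟨bv_ext' ?_ fun i => ?_, bv_ext' ?_ fun i => ?_, bv_ext' ?_ fun i => ?_,
    bv_ext' ?_ fun i => ?_⟩
  on_goal 6 => rcases i with _ | i
  all_goals
    simp only [LinearMap.add_apply, LinearMap.sub_apply, LinearMap.smul_apply,
      Module.End.mul_apply, Module.End.one_apply, map_smul, map_zero,
      smul_zero, evT_A, evT_B, evT_C_zero, evT_C_succ, evT_D, ev_E_zero, ev_E_succ, ev_K1, ev_K0,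
      ev_X, smul_smul, zero_add, add_zero, sub_zero, zero_sub, ← neg_smul, ← add_smul, ← sub_smul]
  all_goals
    simp only [qnum_eq h, mul_add, zpow_add₀ h0, zpow_sub₀ h0, zpow_neg, zpow_mul, zpow_natCast,
      zpow_one, zpow_ofNat, Nat.cast_add, Nat.cast_one, Nat.cast_zero, mul_zero, zpow_zero]
  all_goals
    first
    | (congr 1; field_simp; ring1)
    | (congr 1; field_simp)

theorem evT_relX (h : Generic q) (u : ℂ) :
    (evT q ℓ a).at u * (sc _ (kM' q) * sm (u • (ev q ℓ a).X) + sc _ fM) =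
      (sm (ev q ℓ a).K0 * sc _ fM + sm (u • (ev q ℓ a).X)) * (evT q ℓ a).at u := by
  have h0 := h.ne0
  have h2 := h.sq_sub_one_ne
  rw [relX_iff]
  refine ⟨bv_ext' ?_ fun i => ?_, bv_ext' ?_ fun i => ?_, bv_ext' ?_ fun i => ?_,
    bv_ext' ?_ fun i => ?_⟩
  on_goal 6 => rcases i with _ | i
  all_goals
    simp only [LinearMap.add_apply, LinearMap.sub_apply, LinearMap.smul_apply,
      Module.End.mul_apply, Module.End.one_apply, map_smul, map_zero,
      smul_zero, evT_A, evT_B, evT_C_zero, evT_C_succ, evT_D, ev_E_zero, ev_E_succ, ev_K1, ev_K0,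
      ev_X, smul_smul, zero_add, add_zero, sub_zero, zero_sub, ← neg_smul, ← add_smul, ← sub_smul]
  all_goals
    simp only [qnum_eq h, mul_add, zpow_add₀ h0, zpow_sub₀ h0, zpow_neg, zpow_mul, zpow_natCast,
      zpow_one, zpow_ofNat, Nat.cast_add, Nat.cast_one, Nat.cast_zero, mul_zero, zpow_zero]
  all_goals
    first
    | (congr 1; field_simp; ring1)
    | (congr 1; field_simp)

theorem evT_relK1 (h : Generic q) (u : ℂ) :
    (evT q ℓ a).at u * (sc _ (kM q) * sm (ev q ℓ a).K1) =
      sc _ (kM q) * sm (ev q ℓ a).K1 * (evT q ℓ a).at u := by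
  have h0 := h.ne0
  have h2 := h.sq_sub_one_ne
  rw [relK1_iff]
  refine ⟨bv_ext' ?_ fun i => ?_, bv_ext' ?_ fun i => ?_, bv_ext' ?_ fun i => ?_,
    bv_ext' ?_ fun i => ?_⟩
  on_goal 6 => rcases i with _ | i
  all_goals
    simp only [LinearMap.add_apply, LinearMap.sub_apply, LinearMap.smul_apply,
      Module.End.mul_apply, Module.End.one_apply, map_smul, map_zero,
      smul_zero, evT_A, evT_B, evT_C_zero, evT_C_succ, evT_D, ev_E_zero, ev_E_succ, ev_K1, ev_K0,
      ev_X, smul_smul, zero_add, add_zero, sub_zero, zero_sub, ← neg_smul, ← add_smul, ← sub_smul]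
  all_goals
    simp only [qnum_eq h, mul_add, zpow_add₀ h0, zpow_sub₀ h0, zpow_neg, zpow_mul, zpow_natCast,
      zpow_one, zpow_ofNat, Nat.cast_add, Nat.cast_one, Nat.cast_zero, mul_zero, zpow_zero]
  all_goals
    first
    | (congr 1; field_simp; ring1)
    | (congr 1; field_simp)

theorem evT_relK0 (h : Generic q) (u : ℂ) :
    (evT q ℓ a).at u * (sc _ (kM' q) * sm (ev q ℓ a).K0) =
      sc _ (kM' q) * sm (ev q ℓ a).K0 * (evT q ℓ a).at u := by
  have h0 := h.ne0
  have h2 := h.sq_sub_one_ne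
  rw [relK0_iff]
  refine ⟨bv_ext' ?_ fun i => ?_, bv_ext' ?_ fun i => ?_, bv_ext' ?_ fun i => ?_,
    bv_ext' ?_ fun i => ?_⟩
  on_goal 6 => rcases i with _ | i
  all_goals
    simp only [LinearMap.add_apply, LinearMap.sub_apply, LinearMap.smul_apply,
      Module.End.mul_apply, Module.End.one_apply, map_smul, map_zero,
      smul_zero, evT_A, evT_B, evT_C_zero, evT_C_succ, evT_D, ev_E_zero, ev_E_succ, ev_K1, ev_K0,
      ev_X, smul_smul, zero_add, add_zero, sub_zero, zero_sub, ← neg_smul, ← add_smul, ← sub_smul]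
  all_goals
    simp only [qnum_eq h, mul_add, zpow_add₀ h0, zpow_sub₀ h0, zpow_neg, zpow_mul, zpow_natCast,
      zpow_one, zpow_ofNat, Nat.cast_add, Nat.cast_one, Nat.cast_zero, mul_zero, zpow_zero]
  all_goals
    first
    | (congr 1; field_simp; ring1)
    | (congr 1; field_simp)

theorem evT_qdet (h : Generic q) (u : ℂ) :
    (evT q ℓ a).at u * sc _ (jM q) * ((evT q ℓ a).at (q ^ 2 * u)).transpose =
      (q ^ (-(ℓ : ℤ)) * (1 - a * q ^ ((ℓ : ℤ) + 2) * u) * (1 - a * q ^ (-(ℓ : ℤ)) * u)) •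
        sc _ (jM q) := by
  have h0 := h.ne0
  have h2 := h.sq_sub_one_ne
  rw [qdet_iff]
  refine ⟨bv_ext' ?_ fun i => ?_, bv_ext' ?_ fun i => ?_, bv_ext' ?_ fun i => ?_,
    bv_ext' ?_ fun i => ?_⟩
  on_goal 6 => rcases i with _ | i
  all_goals
    try simp only [LinearMap.add_apply, LinearMap.sub_apply, LinearMap.smul_apply,
      LinearMap.zero_apply,
      Module.End.mul_apply, Module.End.one_apply, map_smul, map_zero,
      smul_zero, evT_A, evT_B, evT_C_zero, evT_C_succ, evT_D, ev_E_zero, ev_E_succ, ev_K1, ev_K0,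
      ev_X, smul_smul, zero_add, add_zero, sub_zero, zero_sub, ← neg_smul, ← add_smul, ← sub_smul]
  all_goals
    try simp only [qnum_eq h, mul_add, zpow_add₀ h0, zpow_sub₀ h0, zpow_neg, zpow_mul, zpow_natCast,
      zpow_one, zpow_ofNat, Nat.cast_add, Nat.cast_one, Nat.cast_zero, mul_zero, zpow_zero]
  all_goals
    first
    | (congr 1; field_simp; ring1)
    | (congr 1; field_simp; done)
    | (refine smul_eq_zero_of_left ?_ _; field_simp; ring1)

theorem zspan_bv (q : ℂ) (ℓ : ℕ) (a : ℂ) :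
    Submodule.span ℂ {v | ∃ i ≤ ℓ, v = bv q ℓ a i} = ⊤ := by
  refine eq_top_iff.2 fun v _ => ?_
  rw [bv_decomp v]
  refine Submodule.sum_mem _ fun i hi => Submodule.smul_mem _ _ (Submodule.subset_span ⟨i, ?_, rfl⟩)
  have := Finset.mem_range.1 hi
  omega

/-- The matrix `evT` satisfies the relations of an L-operator. -/
theorem evLaw (h : Generic q) (ℓ : ℕ) (a : ℂ) : Law q (ev q ℓ a) (evT q ℓ a) where
  K0K1 := bv_ext fun i _ => by
    simp [smul_smul, ← zpow_add₀ h.ne0]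
  K1K0 := bv_ext fun i _ => by
    simp [smul_smul, ← zpow_add₀ h.ne0]
  relE := evT_relE h
  relX := evT_relX h
  relK1 := evT_relK1 h
  relK0 := evT_relK0 h
  qdet := ⟨Polynomial.C (q ^ (-(ℓ : ℤ))) * (1 - Polynomial.C (a * q ^ ((ℓ : ℤ) + 2)) * Polynomial.X) *
    (1 - Polynomial.C (a * q ^ (-(ℓ : ℤ))) * Polynomial.X), fun u => by
      rw [evT_qdet h]; simp⟩
  weights := ⟨ℓ, eq_top_iff.2 ((zspan_bv q ℓ a).symm.le.trans (Submodule.span_mono (by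
    rintro _ ⟨i, hi, rfl⟩
    exact ⟨i, hi, ev_K1 i, by simp [evT_A]⟩)))⟩

/-- The L-operator of the trivial module. -/
def oneT : LOp one := 1

theorem oneT_at (u : ℂ) : oneT.at u = 1 := by
  rw [oneT, LOp.at, map_one]

theorem one_E : one.E = 0 := rfl
theorem one_X : one.X = 0 := rfl
theorem one_K0 : one.K0 = 1 := rfl
theorem one_K1 : one.K1 = 1 := rfl

theorem oneLaw (q : ℂ) : Law q one oneT where
  K0K1 := rfl
  K1K0 := rfl
  relE u := by
    rw [relE_iff, oneT_at]
    simp [one_E, one_X, one_K0, one_K1]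
  relX u := by
    rw [relX_iff, oneT_at]
    simp [one_E, one_X, one_K0, one_K1]
  relK1 u := by simp [oneT_at]
  relK0 u := by simp [oneT_at]
  qdet := ⟨1, fun u => by simp [oneT_at]⟩
  weights := ⟨0, eq_top_iff.2 fun v _ => Submodule.subset_span ⟨0, le_rfl, by simp [one_K1],
    by simp [oneT_at]⟩⟩

/-- The L-operator of an iterated tensor product of evaluation modules. -/
def ModT (q : ℂ) : (L : List (ℕ × ℂ)) → LOp (Mod q L)
  | [] => oneT
  | x :: L => (evT q x.1 x.2).tens (ModT q L)

theorem modLaw (h : Generic q) : (L : List (ℕ × ℂ)) → Law q (Mod q L) (ModT q L)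
  | [] => oneLaw q
  | x :: L => (evLaw h x.1 x.2).tens (modLaw h L) h.ne0

end UMod

/-! ### Invariant subspaces are stable under the L-operator -/

section polyext
variable {R : Type*} [Ring R] [Algebra ℂ R]

/-- A polynomial over a complex algebra is determined by its values at scalars. -/
theorem evu_ext {p r : Polynomial R} (h : ∀ u, evu R u p = evu R u r) : p = r := by
  rw [← sub_eq_zero]
  set s := p - r with hs
  have hs0 : ∀ u, evu R u s = 0 := fun u => by rw [hs, map_sub, h, sub_self]
  ext k
  rw [Polynomial.coeff_zero, ← Module.forall_dual_apply_eq_zero_iff ℂ]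
  intro φ
  set P : Polynomial ℂ := ∑ k ∈ Finset.range (s.natDegree + 1),
    Polynomial.monomial k (φ (s.coeff k)) with hP
  have hP0 : P = 0 := by
    refine Polynomial.funext fun u => ?_
    have := congrArg φ (hs0 u)
    rw [evu_sum u s (Nat.lt_succ_self _), map_sum, map_zero] at this
    rw [hP, Polynomial.eval_finsetSum, Polynomial.eval_zero, ← this]
    refine Finset.sum_congr rfl fun i _ => ?_
    rw [Polynomial.eval_monomial, map_smul, smul_eq_mul, mul_comm]
  by_cases hk : k ≤ s.natDegree
  · have := congrArg (fun p => p.coeff k) hP0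
    simp only [hP, Polynomial.finsetSum_coeff, Polynomial.coeff_monomial] at this
    rw [Finset.sum_ite_eq' , if_pos (by simpa using Nat.lt_succ_of_le hk)] at this
    simpa using this
  · rw [Polynomial.coeff_eq_zero_of_natDegree_lt (by omega), map_zero]

theorem evu_smul (u c : ℂ) (p : Polynomial R) : evu R u (c • p) = c • evu R u p := by
  rw [Algebra.smul_def, Algebra.smul_def, map_mul]
  congr 1
  exact evu_C u _

/-- The polynomial `p(cu)`. -/
def shp (c : ℂ) (p : Polynomial R) : Polynomial R :=
  p.comp (Polynomial.C (algebraMap ℂ R c) * Polynomial.X)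

theorem shp_coeff (c : ℂ) (p : Polynomial R) (k : ℕ) : (shp c p).coeff k = c ^ k • p.coeff k := by
  rw [shp, Polynomial.comp_C_mul_X_coeff, ← map_pow, Algebra.smul_def, Algebra.commutes]

theorem evu_shp (c u : ℂ) (p : Polynomial R) : evu R u (shp c p) = evu R (c * u) p := by
  rw [evu_sum u (shp c p) (n := max (shp c p).natDegree p.natDegree + 1) (by omega),
    evu_sum (c * u) p (n := max (shp c p).natDegree p.natDegree + 1) (by omega)]
  refine Finset.sum_congr rfl fun k _ => ?_
  rw [shp_coeff, smul_smul, mul_pow, mul_comm]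

end polyext

/-- The algebra of operators preserving a subspace. -/
def stab {V : Type*} [AddCommGroup V] [Module ℂ V] (W : Submodule ℂ V) :
    Subalgebra ℂ (Module.End ℂ V) where
  carrier := {f | ∀ v ∈ W, f v ∈ W}
  mul_mem' hf hg v hv := hf _ (hg v hv)
  add_mem' hf hg v hv := W.add_mem (hf v hv) (hg v hv)
  algebraMap_mem' r v hv := by
    rw [Module.algebraMap_end_apply]
    exact W.smul_mem r hv

theorem mem_stab {V : Type*} [AddCommGroup V] [Module ℂ V] {W : Submodule ℂ V}
    {f : Module.End ℂ V} : f ∈ stab W ↔ ∀ v ∈ W, f v ∈ W := Iff.rfl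

namespace UMod

theorem LOp.at_apply {M : UMod} (T : LOp M) (u : ℂ) (i j : Fin 2) :
    T.at u i j = evu (Module.End ℂ M.V) u (T i j) := rfl

section coeffs
variable {q : ℂ} {M : UMod} {T : LOp M}

/-- `C` is a twisted commutator of `E` and `D`. -/
theorem Law.coeffC (h : Law q M T) (k : ℕ) : (T 1 0).coeff k =
    M.E * (T 1 1).coeff k - q⁻¹ • ((T 1 1).coeff k * M.E) := by
  have h1 : q⁻¹ • (T 1 1 * Polynomial.C M.E) + T 1 0 = Polynomial.C M.E * T 1 1 := by
    refine evu_ext fun u => ?_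
    have := (relE_iff.1 (h.relE u)).2.2.2
    simp only [map_add, map_mul, evu_smul, evu_C]
    exact this
  have := congrArg (fun p => p.coeff k) h1
  simp only [Polynomial.coeff_add, Polynomial.coeff_smul, Polynomial.coeff_mul_C,
    Polynomial.coeff_C_mul] at this
  rw [← this]
  abel

/-- `A` is determined by `D`, `B` and the generators. -/
theorem Law.coeffA (h : Law q M T) (k : ℕ) : (T 0 0).coeff k = M.K1 * (T 1 1).coeff k +
    (M.E * (T 0 1).coeff k - q⁻¹ • ((T 0 1).coeff k * M.E)) := by
  have h1 : q⁻¹ • (T 0 1 * Polynomial.C M.E) + T 0 0 =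
      Polynomial.C M.K1 * T 1 1 + Polynomial.C M.E * T 0 1 := by
    refine evu_ext fun u => ?_
    have := (relE_iff.1 (h.relE u)).2.1
    simp only [map_add, map_mul, evu_smul, evu_C]
    exact this
  have := congrArg (fun p => p.coeff k) h1
  simp only [Polynomial.coeff_add, Polynomial.coeff_smul, Polynomial.coeff_mul_C,
    Polynomial.coeff_C_mul] at this
  rw [← add_sub_assoc, ← this]
  abel

theorem Law.coeffB_zero (h : Law q M T) : (T 0 1).coeff 0 = 0 := by
  rw [← evu_zero]
  exact h.B_zero

/-- The next coefficient of `B` is a twisted commutator of `X` and the coefficient of `A`. -/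
theorem Law.coeffB_succ (h : Law q M T) (k : ℕ) : (T 0 1).coeff (k + 1) =
    M.X * (T 0 0).coeff k - q⁻¹ • ((T 0 0).coeff k * M.X) := by
  have h1 : q⁻¹ • (Polynomial.X * (T 0 0 * Polynomial.C M.X)) + T 0 1 =
      Polynomial.X * (Polynomial.C M.X * T 0 0) := by
    refine evu_ext fun u => ?_
    have := (relX_iff.1 (h.relX u)).1
    simp only [map_add, map_mul, evu_smul, evu_C, evu_X, ← Algebra.smul_def]
    rw [mul_smul_comm, smul_mul_assoc] at this
    exact this
  have := congrArg (fun p => p.coeff (k + 1)) h1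
  simp only [Polynomial.coeff_add, Polynomial.coeff_smul, Polynomial.coeff_mul_C,
    Polynomial.coeff_C_mul, Polynomial.coeff_X_mul] at this
  rw [← this]
  abel

theorem Law.coeffK1D (h : Law q M T) (hq : q ≠ 0) (k : ℕ) :
    Commute M.K1 ((T 1 1).coeff k) := by
  have h1 : T 1 1 * Polynomial.C M.K1 = Polynomial.C M.K1 * T 1 1 := by
    refine evu_ext fun u => ?_
    have := (relK1_iff.1 (h.relK1 u)).2.2.2
    simp only [map_mul, evu_C]
    exact smul_right_injective _ (inv_ne_zero hq) this
  have := congrArg (fun p => p.coeff k) h1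
  simp only [Polynomial.coeff_mul_C, Polynomial.coeff_C_mul] at this
  exact this.symm

/-- The `q`-determinant relation, coefficientwise. -/
theorem Law.coeff_qdet (h : Law q M T) (k : ℕ) : ∃ c : ℂ,
    ∑ x ∈ Finset.HasAntidiagonal.antidiagonal k, (q ^ 2) ^ x.2 • ((T 0 0).coeff x.1 * (T 1 1).coeff x.2) -
      q • ∑ x ∈ Finset.HasAntidiagonal.antidiagonal k, (q ^ 2) ^ x.2 • ((T 0 1).coeff x.1 * (T 1 0).coeff x.2) =
      c • 1 := by
  obtain ⟨δ, hδ⟩ := h.qdet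
  refine ⟨δ.coeff k, ?_⟩
  have h1 : T 0 0 * shp (q ^ 2) (T 1 1) - q • (T 0 1 * shp (q ^ 2) (T 1 0)) =
      Polynomial.map (algebraMap ℂ (Module.End ℂ M.V)) δ := by
    refine evu_ext fun u => ?_
    have := (qdet_iff.1 (hδ u)).2.1
    simp only [map_sub, map_mul, evu_smul, evu_shp]
    refine Eq.trans this ?_
    have h2 := evu_map (Algebra.ofId ℂ (Module.End ℂ M.V)) u δ
    have h3 : evu ℂ u δ = δ.eval u := rfl
    rw [h3, Algebra.ofId_apply, Algebra.algebraMap_eq_smul_one] at h2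
    exact h2.symm
  have := congrArg (fun p => p.coeff k) h1
  simp only [Polynomial.coeff_sub, Polynomial.coeff_smul, Polynomial.coeff_mul, shp_coeff,
    Polynomial.coeff_map, mul_smul_comm] at this
  rw [this, Algebra.algebraMap_eq_smul_one]

/-- `A(0)` is an invertible polynomial in `K₁`, by Lagrange interpolation on the weights. -/
theorem Law.exists_aeval (h : Law q M T) (hg : Generic q) : ∃ p r : Polynomial ℂ,
    (T 0 0).coeff 0 = Polynomial.aeval M.K1 p ∧
    Polynomial.aeval M.K1 p * Polynomial.aeval M.K1 r = 1 := by
  obtain ⟨d, hd⟩ := h.weights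
  have hinj : Set.InjOn (fun i : ℕ => q ^ ((d : ℤ) - 2 * i)) (Finset.range (d + 1)) := by
    intro i _ j _ hij
    have := hg.zpow_inj hij
    omega
  have key : ∀ (f : ℕ → ℂ) (v : M.V) (i : ℕ), i ≤ d → M.K1 v = q ^ ((d : ℤ) - 2 * i) • v →
      Polynomial.aeval M.K1 (Lagrange.interpolate (Finset.range (d + 1))
        (fun i : ℕ => q ^ ((d : ℤ) - 2 * i)) f) v = f i • v := by
    intro f v i hi hv
    by_cases hv0 : v = 0
    · simp [hv0]
    · have hev : M.K1.HasEigenvector (q ^ ((d : ℤ) - 2 * i)) v :=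
        ⟨Module.End.mem_eigenspace_iff.2 hv, hv0⟩
      rw [Module.End.aeval_apply_of_hasEigenvector hev,
        Lagrange.eval_interpolate_at_node (v := fun i : ℕ => q ^ ((d : ℤ) - 2 * i)) f hinj
          (Finset.mem_range.2 (by omega))]
  refine ⟨Lagrange.interpolate (Finset.range (d + 1)) (fun i : ℕ => q ^ ((d : ℤ) - 2 * i))
      fun i => q ^ (-(i : ℤ)),
    Lagrange.interpolate (Finset.range (d + 1)) (fun i : ℕ => q ^ ((d : ℤ) - 2 * i))
      fun i => q ^ (i : ℤ), LinearMap.ext_on hd ?_, LinearMap.ext_on hd ?_⟩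
  · rintro v ⟨i, hi, h1, h2⟩
    rw [key _ v i hi h1, ← h2, LOp.at_apply, evu_zero]
  · rintro v ⟨i, hi, h1, h2⟩
    rw [Module.End.mul_apply, key _ v i hi h1, map_smul, key _ v i hi h1, smul_smul,
      ← zpow_add₀ hg.ne0]
    simp

/-- The coefficients of the L-operator preserve every invariant subspace. By induction on the degree:
`B_{k+1}` is obtained from `A_k` and the generators, then the `q`-determinant determines
`(1 + q^{2k+2}) A_0 D_{k+1}` up to known terms, and `A_{k+1}`, `C_{k+1}` follow from `D_{k+1}`. -/
theorem Law.coeff_mem (h : Law q M T) (hg : Generic q) {W : Submodule ℂ M.V} (hW : M.Inv W)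
    (i j : Fin 2) (k : ℕ) : (T i j).coeff k ∈ stab W := by
  have hX : M.X ∈ stab W := hW.X
  have hE : M.E ∈ stab W := hW.E
  have hK0 : M.K0 ∈ stab W := hW.K0
  have hK1 : M.K1 ∈ stab W := hW.K1
  obtain ⟨p, r, hp, hpr⟩ := h.exists_aeval hg
  have haev : ∀ p : Polynomial ℂ, Polynomial.aeval M.K1 p ∈ stab W := fun p => by
    have := Polynomial.aeval_mem_adjoin_singleton (R := ℂ) M.K1 (p := p)
    exact Algebra.adjoin_le (Set.singleton_subset_iff.2 hK1) this
  have hA0 : (T 0 0).coeff 0 ∈ stab W := hp ▸ haev p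
  have hB0 := h.coeffB_zero
  have hD0' : (T 1 1).coeff 0 = M.K0 * (T 0 0).coeff 0 := by
    rw [h.coeffA 0, hB0]
    simp [← mul_assoc, h.K0K1]
  have hD0 : (T 1 1).coeff 0 ∈ stab W := hD0' ▸ mul_mem hK0 hA0
  have hC : ∀ k, (T 1 1).coeff k ∈ stab W → (T 1 0).coeff k ∈ stab W := fun k hk => by
    rw [h.coeffC]
    exact sub_mem (mul_mem hE hk) ((stab W).smul_mem (mul_mem hk hE) _)
  have main : ∀ k, ∀ j ≤ k, (T 0 0).coeff j ∈ stab W ∧ (T 0 1).coeff j ∈ stab W ∧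
      (T 1 0).coeff j ∈ stab W ∧ (T 1 1).coeff j ∈ stab W := by
    intro k
    induction k with
    | zero =>
      intro j hj
      obtain rfl : j = 0 := by omega
      exact ⟨hA0, hB0 ▸ zero_mem _, hC 0 hD0, hD0⟩
    | succ k ih =>
      have hB : (T 0 1).coeff (k + 1) ∈ stab W := by
        have := (ih k le_rfl).1
        rw [h.coeffB_succ]
        exact sub_mem (mul_mem hX this) ((stab W).smul_mem (mul_mem this hX) _)
      have hR : M.E * (T 0 1).coeff (k + 1) - q⁻¹ • ((T 0 1).coeff (k + 1) * M.E) ∈ stab W :=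
        sub_mem (mul_mem hE hB) ((stab W).smul_mem (mul_mem hB hE) _)
      obtain ⟨c, hc⟩ := h.coeff_qdet (k + 1)
      have hBC : ∑ x ∈ Finset.HasAntidiagonal.antidiagonal (k + 1),
          (q ^ 2) ^ x.2 • ((T 0 1).coeff x.1 * (T 1 0).coeff x.2) ∈ stab W := by
        refine sum_mem fun x hx => (stab W).smul_mem ?_ _
        have hx' := Finset.HasAntidiagonal.mem_antidiagonal.1 hx
        rcases Nat.eq_zero_or_pos x.1 with h0 | h0
        · rw [h0, hB0, zero_mul]
          exact zero_mem _
        · refine mul_mem ?_ (ih x.2 (by omega)).2.2.1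
          rcases Nat.lt_or_ge k x.1 with h1 | h1
          · rw [show x.1 = k + 1 by omega]
            exact hB
          · exact (ih x.1 h1).2.1
      have hAD : ∑ x ∈ Finset.HasAntidiagonal.antidiagonal (k + 1),
          (q ^ 2) ^ x.2 • ((T 0 0).coeff x.1 * (T 1 1).coeff x.2) ∈ stab W := by
        rw [sub_eq_iff_eq_add] at hc
        rw [hc]
        exact add_mem ((stab W).smul_mem (one_mem _) _) ((stab W).smul_mem hBC _)
      rw [← Finset.add_sum_erase _ _ (a := (0, k + 1)) (by simp),
        ← Finset.add_sum_erase _ _ (a := (k + 1, 0)) (by simp)] at hAD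
      have hrest : ∑ x ∈ ((Finset.HasAntidiagonal.antidiagonal (k + 1)).erase (0, k + 1)).erase (k + 1, 0),
          (q ^ 2) ^ x.2 • ((T 0 0).coeff x.1 * (T 1 1).coeff x.2) ∈ stab W := by
        refine sum_mem fun x hx => (stab W).smul_mem ?_ _
        simp only [Finset.mem_erase, Finset.HasAntidiagonal.mem_antidiagonal, ne_eq, Prod.ext_iff] at hx
        exact mul_mem (ih x.1 (by omega)).1 (ih x.2 (by omega)).2.2.2
      have h3 := sub_mem hAD hrest
      rw [← add_assoc, add_sub_cancel_right] at h3
      simp only [pow_zero, one_smul] at h3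
      have h4 : (1 + (q ^ 2) ^ (k + 1)) • ((T 0 0).coeff 0 * (T 1 1).coeff (k + 1)) ∈ stab W := by
        have h5 := sub_mem h3 (mul_mem hR hD0)
        rw [h.coeffA (k + 1), add_mul, add_sub_assoc, add_sub_cancel_right, hD0'] at h5
        have hcomm : M.K1 * (T 1 1).coeff (k + 1) * (M.K0 * (T 0 0).coeff 0) =
            (T 0 0).coeff 0 * (T 1 1).coeff (k + 1) := by
          have e1 := h.coeffK1D hg.ne0 (k + 1)
          have e2 : Commute ((T 0 0).coeff 0) ((T 1 1).coeff (k + 1)) := by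
            rw [hp]
            exact Polynomial.induction_on p
              (fun a => by rw [Polynomial.aeval_C]; exact Algebra.commutes _ _)
              (fun p r hp hr => by rw [map_add]; exact hp.add_left hr)
              (fun n a _ => by
                rw [map_mul, Polynomial.aeval_C, map_pow, Polynomial.aeval_X]
                exact Commute.mul_left (Algebra.commutes _ _) (e1.pow_left _))
          rw [e1.eq, mul_assoc, ← mul_assoc M.K1, h.K1K0, one_mul, e2.eq]
        rw [hcomm] at h5
        rw [add_smul, one_smul, add_comm]
        exact h5
      have hne : 1 + (q ^ 2) ^ (k + 1) ≠ 0 := by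
        intro h0
        refine hg.pow_ne (4 * (k + 1)) (by omega) ?_
        have h6 : (q ^ 2) ^ (k + 1) = -1 := by linear_combination h0
        calc q ^ (4 * (k + 1)) = ((q ^ 2) ^ (k + 1)) ^ 2 := by ring
          _ = 1 := by rw [h6]; norm_num
      have h7 := (stab W).smul_mem h4 (1 + (q ^ 2) ^ (k + 1))⁻¹
      rw [smul_smul, inv_mul_cancel₀ hne, one_smul, hp] at h7
      have h8 := mul_mem (haev r) h7
      have hrp : Polynomial.aeval M.K1 r * Polynomial.aeval M.K1 p = 1 := by
        rw [← hpr, ← map_mul, ← map_mul, mul_comm]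
      rw [← mul_assoc, hrp, one_mul] at h8
      intro j hj
      rcases Nat.lt_or_ge k j with h1 | h1
      · rw [show j = k + 1 by omega]
        refine ⟨?_, hB, hC _ h8, h8⟩
        rw [h.coeffA]
        exact add_mem (mul_mem hK1 h8) hR
      · exact ih j h1
  have := main k k le_rfl
  fin_cases i <;> fin_cases j
  exacts [this.1, this.2.1, this.2.2.1, this.2.2.2]

theorem Law.at_mem (h : Law q M T) (hg : Generic q) {W : Submodule ℂ M.V} (hW : M.Inv W)
    (i j : Fin 2) (u : ℂ) {v : M.V} (hv : v ∈ W) : T.at u i j v ∈ W := by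
  have : T.at u i j ∈ stab W := by
    rw [LOp.at_apply, evu_sum u _ (Nat.lt_succ_self _)]
    exact sum_mem fun k _ => (stab W).smul_mem (h.coeff_mem hg hW i j k) _
  exact this v hv

/-- Every nonzero invariant subspace contains a nonzero vector killed by `C(u)`, as `C(u)`
multiplies the `K₁`-weight by `q²`. -/
theorem Law.exists_killed (h : Law q M T) (hg : Generic q) {W : Submodule ℂ M.V} (hW : M.Inv W)
    (hne : W ≠ ⊥) : ∃ w ∈ W, w ≠ 0 ∧ ∀ u, T.at u 1 0 w = 0 := by
  by_contra hcon
  push Not at hcon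
  have hnt : Nontrivial W := Submodule.nontrivial_iff_ne_bot.2 hne
  obtain ⟨μ, hμ⟩ := Module.End.exists_eigenvalue (M.K1.restrict hW.K1)
  obtain ⟨w, hw⟩ := hμ.exists_hasEigenvector
  have hw1 : M.K1 (w : M.V) = μ • (w : M.V) := congrArg Subtype.val hw.apply_eq_smul
  have hw0 : (w : M.V) ≠ 0 := fun h0 => hw.2 (Subtype.ext h0)
  have hμ0 : μ ≠ 0 := by
    rintro rfl
    have := LinearMap.congr_fun h.K0K1 (w : M.V)
    rw [Module.End.mul_apply, hw1, zero_smul, map_zero] at this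
    exact hw0 this.symm
  have step : ∀ n : ℕ, ∃ v ∈ W, v ≠ 0 ∧ M.K1 v = ((q ^ 2) ^ n * μ) • v := by
    intro n
    induction n with
    | zero => exact ⟨w, w.2, hw0, by rw [hw1]; simp⟩
    | succ n ih =>
      obtain ⟨v, hv, hv0, hv1⟩ := ih
      obtain ⟨u, hu⟩ := hcon v hv hv0
      refine ⟨_, h.at_mem hg hW 1 0 u hv, hu, ?_⟩
      have h1 := LinearMap.congr_fun (relK1_iff.1 (h.relK1 u)).2.2.1 v
      simp only [LinearMap.smul_apply, Module.End.mul_apply, hv1, map_smul] at h1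
      have h2 := congrArg (fun x => q • x) h1
      simp only [smul_smul, mul_inv_cancel₀ hg.ne0, one_smul] at h2
      rw [← h2]
      congr 1
      ring
  have hfin := Module.End.finite_hasEigenvalue M.K1
  refine Set.infinite_of_injective_forall_mem (f := fun n : ℕ => (q ^ 2) ^ n * μ) ?_ ?_ hfin
  · intro m n hmn
    have h1 := mul_right_cancel₀ hμ0 hmn
    have h2 : q ^ ((2 : ℤ) * m) = q ^ ((2 : ℤ) * n) := by
      simpa only [zpow_mul, zpow_natCast, zpow_ofNat] using h1
    have := hg.zpow_inj h2
    omega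
  · intro n
    obtain ⟨v, _, hv0, hv1⟩ := step n
    exact Module.End.hasEigenvalue_of_hasEigenvector ⟨Module.End.mem_eigenspace_iff.2 hv1, hv0⟩

end coeffs

end UMod

/-! ### Highest weight vectors -/

/-- A vector-valued polynomial which vanishes outside a finite set has zero coefficients. -/
theorem vpoly_zero {V : Type*} [AddCommGroup V] [Module ℂ V] (f : ℕ → V) (n : ℕ) {s : Set ℂ}
    (hs : s.Finite) (h : ∀ u ∉ s, ∑ k ∈ Finset.range n, u ^ k • f k = 0) :
    ∀ k < n, f k = 0 := by
  intro k hk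
  rw [← Module.forall_dual_apply_eq_zero_iff ℂ]
  intro φ
  set P : Polynomial ℂ := ∑ k ∈ Finset.range n, Polynomial.monomial k (φ (f k)) with hP
  have hP0 : P = 0 := by
    refine Polynomial.eq_zero_of_infinite_isRoot _ (hs.infinite_compl.mono fun u hu => ?_)
    have := congrArg φ (h u hu)
    rw [map_sum, map_zero] at this
    change Polynomial.eval u P = 0
    rw [hP, Polynomial.eval_finsetSum, ← this]
    refine Finset.sum_congr rfl fun i _ => ?_
    rw [Polynomial.eval_monomial, map_smul, smul_eq_mul, mul_comm]
  have := congrArg (fun p => p.coeff k) hP0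
  simp only [hP, Polynomial.finsetSum_coeff, Polynomial.coeff_monomial] at this
  rw [Finset.sum_ite_eq' , if_pos (by simpa using hk)] at this
  simpa using this

/-- If `p(u) v + r(u) w = 0` for all but finitely many `u`, it holds coefficientwise. -/
theorem coeff_apply_zero {V : Type*} [AddCommGroup V] [Module ℂ V]
    (p r : Polynomial (Module.End ℂ V)) (v w : V) {s : Set ℂ} (hs : s.Finite)
    (h : ∀ u ∉ s, evu _ u p v + evu _ u r w = 0) (k : ℕ) : p.coeff k v + r.coeff k w = 0 := by
  set n := max p.natDegree r.natDegree + 1 with hn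
  by_cases hk : k < n
  · refine vpoly_zero (fun k => p.coeff k v + r.coeff k w) n hs (fun u hu => ?_) k hk
    rw [← h u hu, evu_sum u p (n := n) (by omega), evu_sum u r (n := n) (by omega)]
    simp only [LinearMap.sum_apply, LinearMap.smul_apply, smul_add, Finset.sum_add_distrib]
  · rw [Polynomial.coeff_eq_zero_of_natDegree_lt (by omega),
      Polynomial.coeff_eq_zero_of_natDegree_lt (by omega)]
    simp

namespace UMod

/-- The highest weight vector `v₀ ⊗ ⋯ ⊗ v₀`. -/
def Om (q : ℂ) : (L : List (ℕ × ℂ)) → (Mod q L).V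
  | [] => (1 : ℂ)
  | x :: L => tm (bv q x.1 x.2 0) (Om q L)

/-- The eigenvalue of `A(u)` on the highest weight vector. -/
def alphaP (q u : ℂ) (L : List (ℕ × ℂ)) : ℂ :=
  (L.map fun x => 1 - u * x.2 * q ^ (-(x.1 : ℤ))).prod

/-- The eigenvalue of `D(u)` on the highest weight vector. -/
def deltaP (q u : ℂ) (L : List (ℕ × ℂ)) : ℂ :=
  (L.map fun x => q ^ (-(x.1 : ℤ)) - u * x.2).prod

section tensEntries
variable {A B : UMod} (S : LOp A) (T : LOp B) (u : ℂ) (x : A.V) (y : B.V)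

theorem tens_at_apply (i j : Fin 2) : (S.tens T).at u i j (tm x y) =
    tm (S.at u 0 j x) (T.at u i 0 y) + tm (S.at u 1 j x) (T.at u i 1 y) := by
  rw [LOp.tens_at, Matrix.mul_apply, Fin.sum_univ_two]
  simp

theorem tens_apply (i j : Fin 2) : (S.tens T) i j =
    Polynomial.map (iR A B : _ →+* _) (T i 0) * Polynomial.map (iL A B : _ →+* _) (S 0 j) +
    Polynomial.map (iR A B : _ →+* _) (T i 1) * Polynomial.map (iL A B : _ →+* _) (S 1 j) := by
  rw [LOp.tens, Matrix.mul_apply, Fin.sum_univ_two]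
  rfl

end tensEntries

theorem mod_C_Om (q : ℂ) (L : List (ℕ × ℂ)) (u : ℂ) : (ModT q L).at u 1 0 (Om q L) = 0 := by
  induction L with
  | nil =>
    change oneT.at u 1 0 (1 : ℂ) = (0 : one.V)
    rw [oneT_at]; rfl
  | cons x L ih =>
    change ((evT q x.1 x.2).tens (ModT q L)).at u 1 0 (tm (bv q x.1 x.2 0) (Om q L)) =
      (0 : (tens (ev q x.1 x.2) (Mod q L)).V)
    rw [tens_at_apply, ih, evT_C_zero]
    simp

theorem mod_A_Om (q : ℂ) (L : List (ℕ × ℂ)) (u : ℂ) :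
    (ModT q L).at u 0 0 (Om q L) = alphaP q u L • Om q L := by
  induction L with
  | nil =>
    change oneT.at u 0 0 (1 : ℂ) = (alphaP q u [] • (1 : ℂ) : ℂ)
    rw [oneT_at]; simp [alphaP]; rfl
  | cons x L ih =>
    change ((evT q x.1 x.2).tens (ModT q L)).at u 0 0 (tm (bv q x.1 x.2 0) (Om q L)) =
      (alphaP q u (x :: L) • tm (bv q x.1 x.2 0) (Om q L) : (tens (ev q x.1 x.2) (Mod q L)).V)
    rw [tens_at_apply, ih, evT_C_zero, evT_A]
    simp [alphaP, smul_smul, mul_comm]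

theorem mod_D_Om (q : ℂ) (L : List (ℕ × ℂ)) (u : ℂ) :
    (ModT q L).at u 1 1 (Om q L) = deltaP q u L • Om q L := by
  induction L with
  | nil =>
    change oneT.at u 1 1 (1 : ℂ) = (deltaP q u [] • (1 : ℂ) : ℂ)
    rw [oneT_at]; simp [deltaP]; rfl
  | cons x L ih =>
    change ((evT q x.1 x.2).tens (ModT q L)).at u 1 1 (tm (bv q x.1 x.2 0) (Om q L)) =
      (deltaP q u (x :: L) • tm (bv q x.1 x.2 0) (Om q L) : (tens (ev q x.1 x.2) (Mod q L)).V)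
    rw [tens_at_apply, ih, mod_C_Om, evT_D]
    simp [deltaP, smul_smul, mul_comm]

/-- A vector annihilated by the operators `C(u)` is a multiple of the highest weight vector. -/
def Ckill (q : ℂ) (L : List (ℕ × ℂ)) : Prop :=
  ∀ b : (Mod q L).V, (∀ u, (ModT q L).at u 1 0 b = 0) → ∃ c : ℂ, b = c • Om q L

/-- The highest weight vector generates. -/
def Cyc (q : ℂ) (L : List (ℕ × ℂ)) : Prop :=
  ∀ W : Submodule ℂ (Mod q L).V, (Mod q L).Inv W → Om q L ∈ W → W = ⊤

/-- A nonzero submodule contains a vector killed by `C(u)`, hence `Ω`, hence everything. -/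
theorem irr_of_cyc {q : ℂ} (h : Generic q) {L : List (ℕ × ℂ)} (h1 : Cyc q L) (h2 : Ckill q L) :
    (Mod q L).Irr := by
  intro W hW
  by_cases h0 : W = ⊥
  · exact Or.inl h0
  · obtain ⟨w, hw, hw0, hwu⟩ := (modLaw h L).exists_killed h hW h0
    obtain ⟨c, rfl⟩ := h2 w hwu
    have hc : c ≠ 0 := by
      rintro rfl
      simp at hw0
    refine Or.inr (h1 W hW ?_)
    have := W.smul_mem c⁻¹ hw
    rwa [smul_smul, inv_mul_cancel₀ hc, one_smul] at this

section coord
variable {q : ℂ} {ℓ : ℕ} {a : ℂ} {B : UMod}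

/-- The component along `vₖ` of a vector of `V(ℓ,a) ⊗ B`. -/
def cf (q : ℂ) (ℓ : ℕ) (a : ℂ) (B : UMod) (k : ℕ) : (tens (ev q ℓ a) B).V →ₗ[ℂ] B.V :=
  tlift (LinearMap.lsmul ℂ B.V ∘ₗ bc q ℓ a k)

@[simp] theorem cf_tm (k : ℕ) (x : (ev q ℓ a).V) (y : B.V) :
    cf q ℓ a B k (tm x y) = bc q ℓ a k x • y := by
  simp [cf]

theorem bc_gt {k : ℕ} (h : ℓ < k) : bc q ℓ a k = 0 := by
  rw [bc, vcoord, dif_neg (by omega)]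
  rfl

theorem cf_decomp (w : (tens (ev q ℓ a) B).V) :
    w = ∑ k ∈ Finset.range (ℓ + 1), tm (bv q ℓ a k) (cf q ℓ a B k w) := by
  have : (LinearMap.id : (tens (ev q ℓ a) B).V →ₗ[ℂ] _) =
      ∑ k ∈ Finset.range (ℓ + 1), (tm (bv q ℓ a k)) ∘ₗ cf q ℓ a B k := by
    refine tens_ext fun x y => ?_
    conv_lhs => rw [bv_decomp x]
    simp
  have := LinearMap.congr_fun this w
  simpa using this

theorem Om_ne_zero (q : ℂ) (L : List (ℕ × ℂ)) : Om q L ≠ 0 := by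
  induction L with
  | nil => exact one_ne_zero (α := ℂ)
  | cons x L ih =>
    intro h
    have := congrArg (cf q x.1 x.2 (Mod q L) 0) h
    change cf q x.1 x.2 (Mod q L) 0 (tm (bv q x.1 x.2 0) (Om q L)) =
      cf q x.1 x.2 (Mod q L) 0 0 at this
    rw [cf_tm, bc_bv (Nat.zero_le _), map_zero] at this
    simp at this
    exact ih this

/-- The component along `vₖ` of `C(u) w` involves only the components of `w` along `vₖ`
and `vₖ₊₁`. -/
theorem cf_C (T : LOp B) (u : ℂ) {k : ℕ} (hk : k ≤ ℓ) (w : (tens (ev q ℓ a) B).V) :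
    cf q ℓ a B k (((evT q ℓ a).tens T).at u 1 0 w) =
      (q ^ (-(k : ℤ)) - u * a * q ^ ((k : ℤ) - ℓ)) • T.at u 1 0 (cf q ℓ a B k w) +
      (q ^ ((k : ℤ) + 1 - ℓ) * (1 - q⁻¹ ^ 2) * qnum q ((ℓ : ℤ) - k)) •
        T.at u 1 1 (cf q ℓ a B (k + 1) w) := by
  have : cf q ℓ a B k ∘ₗ ((evT q ℓ a).tens T).at u 1 0 =
      (q ^ (-(k : ℤ)) - u * a * q ^ ((k : ℤ) - ℓ)) • T.at u 1 0 ∘ₗ cf q ℓ a B k +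
      (q ^ ((k : ℤ) + 1 - ℓ) * (1 - q⁻¹ ^ 2) * qnum q ((ℓ : ℤ) - k)) •
        T.at u 1 1 ∘ₗ cf q ℓ a B (k + 1) := by
    refine tens_ext fun x y => ?_
    simp only [LinearMap.comp_apply, tens_at_apply, map_add, cf_tm, LinearMap.add_apply,
      LinearMap.smul_apply, map_smul, smul_smul]
    have e1 : bc q ℓ a k ∘ₗ (evT q ℓ a).at u 0 0 =
        (q ^ (-(k : ℤ)) - u * a * q ^ ((k : ℤ) - ℓ)) • bc q ℓ a k := by
      refine bv_ext fun j hj => ?_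
      simp only [LinearMap.comp_apply, evT_A, map_smul, LinearMap.smul_apply, bc_bv hk]
      split_ifs with h
      · rw [h]
      · simp
    have e2 : bc q ℓ a k ∘ₗ (evT q ℓ a).at u 1 0 =
        (q ^ ((k : ℤ) + 1 - ℓ) * (1 - q⁻¹ ^ 2) * qnum q ((ℓ : ℤ) - k)) • bc q ℓ a (k + 1) := by
      refine bv_ext fun j hj => ?_
      rcases j with _ | j
      · rw [LinearMap.comp_apply, evT_C_zero, LinearMap.smul_apply, map_zero]
        by_cases h : k + 1 ≤ ℓ
        · simp [bc_bv h]
        · simp [bc_gt (show ℓ < k + 1 by omega)]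
      · rw [LinearMap.comp_apply, evT_C_succ, LinearMap.smul_apply, map_smul, bc_bv hk]
        by_cases h : k + 1 ≤ ℓ
        · rw [bc_bv h]
          by_cases h' : k = j
          · simp [h']
          · simp [h']
        · rw [if_neg (by omega), bc_gt (show ℓ < k + 1 by omega)]
          simp
    have f1 := LinearMap.congr_fun e1 x
    have f2 := LinearMap.congr_fun e2 x
    simp only [LinearMap.comp_apply, LinearMap.smul_apply, smul_eq_mul] at f1 f2
    rw [f1, f2]
  exact LinearMap.congr_fun this w

end coord

/-- The part of the argument for `Ckill` that does not depend on whether `a = 0`. -/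
theorem Ckill_step {q : ℂ} (h : Generic q) {ℓ : ℕ} {a : ℂ} {L : List (ℕ × ℂ)} (hL : Ckill q L)
    (key : ∀ k < ℓ, ∀ (b : (Mod q L).V) (c : ℂ),
      (∀ u, (q ^ (-(k : ℤ)) - u * a * q ^ ((k : ℤ) - ℓ)) • (ModT q L).at u 1 0 b +
        c • (ModT q L).at u 1 1 (Om q L) = 0) → c = 0) : Ckill q ((ℓ, a) :: L) := by
  intro w hw
  change (tens (ev q ℓ a) (Mod q L)).V at w
  change ∀ u, ((evT q ℓ a).tens (ModT q L)).at u 1 0 w = 0 at hw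
  have eqn : ∀ k ≤ ℓ, ∀ u, (q ^ (-(k : ℤ)) - u * a * q ^ ((k : ℤ) - ℓ)) •
      (ModT q L).at u 1 0 (cf q ℓ a (Mod q L) k w) +
      (q ^ ((k : ℤ) + 1 - ℓ) * (1 - q⁻¹ ^ 2) * qnum q ((ℓ : ℤ) - k)) •
        (ModT q L).at u 1 1 (cf q ℓ a (Mod q L) (k + 1) w) = 0 := by
    intro k hk u
    rw [← cf_C _ _ hk, hw, map_zero]
  have low : ∀ k ≤ ℓ, cf q ℓ a (Mod q L) (k + 1) w = 0 →
      ∃ c : ℂ, cf q ℓ a (Mod q L) k w = c • Om q L := by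
    intro k hk h0
    refine hL _ fun u => ?_
    have h1 : ∀ j, ((ModT q L) 1 0).coeff j (cf q ℓ a (Mod q L) k w) = 0 := by
      intro j
      have hfin : {u : ℂ | q ^ (-(k : ℤ)) - u * a * q ^ ((k : ℤ) - ℓ) = 0}.Finite := by
        refine Set.Subsingleton.finite fun u hu v hv => ?_
        have e1 := zpow_ne_zero (-(k : ℤ)) h.ne0
        have e2 := zpow_ne_zero ((k : ℤ) - ℓ) h.ne0
        simp only [Set.mem_ofPred_eq] at hu hv
        have ha : a ≠ 0 := by
          rintro rfl
          simp at hu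
          exact h.ne0 hu.1
        have e3 : a * q ^ ((k : ℤ) - ℓ) ≠ 0 := mul_ne_zero ha e2
        refine mul_right_cancel₀ e3 ?_
        linear_combination hv - hu
      have := coeff_apply_zero ((ModT q L) 1 0) 0 (cf q ℓ a (Mod q L) k w) 0 hfin
        (fun u hu => by
          have h2 := eqn k hk u
          rw [h0, map_zero, smul_zero, add_zero] at h2
          rw [map_zero (evu _ u), map_zero, add_zero]
          exact (smul_eq_zero.1 h2).resolve_left hu) j
      simpa using this
    rw [LOp.at_apply, evu_sum u _ (Nat.lt_succ_self _), LinearMap.sum_apply]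
    exact Finset.sum_eq_zero fun j _ => by rw [LinearMap.smul_apply, h1, smul_zero]
  have top : ∀ n, n ≤ ℓ → cf q ℓ a (Mod q L) (ℓ - n + 1) w = 0 := by
    intro n
    induction n with
    | zero =>
      intro _
      rw [cf, bc_gt (by omega), LinearMap.comp_zero]
      have : tlift (0 : (ev q ℓ a).V →ₗ[ℂ] (Mod q L).V →ₗ[ℂ] (Mod q L).V) = 0 :=
        tens_ext fun x y => by simp
      rw [this]
      rfl
    | succ n ih =>
      intro hn
      obtain ⟨c, hc⟩ := low (ℓ - n) (by omega) (ih (by omega))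
      have e1 := eqn (ℓ - (n + 1)) (by omega)
      rw [show ℓ - (n + 1) + 1 = ℓ - n by omega, hc] at e1
      have e2 := key (ℓ - (n + 1)) (by omega) _ (_ * c) fun u => by
        have := e1 u
        rw [map_smul, smul_smul] at this
        exact this
      have e3 : c = 0 := by
        refine (mul_eq_zero.1 e2).resolve_left (mul_ne_zero (mul_ne_zero (zpow_ne_zero _ h.ne0) ?_)
          (h.qnum_ne (by omega)))
        have := h.pow_ne 2 (by norm_num)
        rw [inv_pow, sub_ne_zero, ne_eq, eq_comm, inv_eq_one]
        exact this
      rw [show ℓ - (n + 1) + 1 = ℓ - n by omega, hc, e3, zero_smul]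
  have top' : ∀ k, k < ℓ → cf q ℓ a (Mod q L) (k + 1) w = 0 := fun k hk => by
    have := top (ℓ - k) (by omega)
    rwa [show ℓ - (ℓ - k) + 1 = k + 1 by omega] at this
  obtain ⟨c, hc⟩ := low 0 (by omega) (by
    have := top ℓ le_rfl
    simpa using this)
  refine ⟨c, ?_⟩
  rw [cf_decomp (B := Mod q L) w, Finset.sum_range_succ', Finset.sum_eq_zero, hc, zero_add, map_smul]
  · rfl
  · intro k hk
    rw [top' k (Finset.mem_range.1 hk), map_zero]

/-- The part of the argument for `Cyc` that does not depend on whether `a = 0`. -/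
theorem Cyc_step {q : ℂ} (h : Generic q) {ℓ : ℕ} {a : ℂ} {L : List (ℕ × ℂ)} (hL : Cyc q L)
    (key : ∀ W : Submodule ℂ (tens (ev q ℓ a) (Mod q L)).V,
      (tens (ev q ℓ a) (Mod q L)).Inv W →
      ∀ k < ℓ, tm (bv q ℓ a k) (Om q L) ∈ W → tm (bv q ℓ a (k + 1)) (Om q L) ∈ W) :
    Cyc q ((ℓ, a) :: L) := by
  intro W hW h0
  change Submodule ℂ (tens (ev q ℓ a) (Mod q L)).V at W
  change (tens (ev q ℓ a) (Mod q L)).Inv W at hW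
  change tm (bv q ℓ a 0) (Om q L) ∈ W at h0
  have h1 : ∀ k ≤ ℓ, tm (bv q ℓ a k) (Om q L) ∈ W := by
    intro k
    induction k with
    | zero => exact fun _ => h0
    | succ k ih => exact fun hk => key W hW k hk (ih (by omega))
  have h2 : ∀ x, tm x (Om q L) ∈ W := by
    intro x
    rw [bv_decomp x, map_sum, LinearMap.sum_apply]
    refine W.sum_mem fun k hk => ?_
    rw [map_smul, LinearMap.smul_apply]
    have := Finset.mem_range.1 hk
    exact W.smul_mem _ (h1 k (by omega))
  set W' : Submodule ℂ (Mod q L).V := ⨅ x, W.comap (tm x) with hW'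
  have mem : ∀ b, b ∈ W' ↔ ∀ x, tm x b ∈ W := fun b => by simp [hW', Submodule.mem_iInf]
  have hAL := evLaw h ℓ a
  have hBL := modLaw h L
  have a01 : ∀ x, (ev q ℓ a).K0 ((ev q ℓ a).K1 x) = x := LinearMap.congr_fun hAL.K0K1
  have a10 : ∀ x, (ev q ℓ a).K1 ((ev q ℓ a).K0 x) = x := LinearMap.congr_fun hAL.K1K0
  have k0 : ∀ b ∈ W', (Mod q L).K0 b ∈ W' := fun b hb => (mem _).2 fun x => by
    have := hW.K0 _ ((mem _).1 hb ((ev q ℓ a).K1 x))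
    rwa [tens_K0, a01] at this
  have inv : (Mod q L).Inv W' := by
    refine ⟨fun b hb => (mem _).2 fun x => ?_, fun b hb => (mem _).2 fun x => ?_,
      fun b hb => (mem _).2 fun x => ?_, k0, fun b hb => (mem _).2 fun x => ?_⟩
    · have := hW.X _ ((mem _).1 hb ((ev q ℓ a).K1 x))
      rw [tens_X, a01] at this
      exact (W.add_mem_iff_left ((mem _).1 hb _)).1 this
    · have := hW.E _ ((mem _).1 hb ((ev q ℓ a).K0 x))
      rw [tens_E, a10] at this
      exact (W.add_mem_iff_left ((mem _).1 hb _)).1 this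
    · have := hW.F _ ((mem _).1 hb x)
      rw [tens_F] at this
      exact (W.add_mem_iff_left ((mem _).1 (k0 b hb) _)).1 this
    · have := hW.K1 _ ((mem _).1 hb ((ev q ℓ a).K0 x))
      rwa [tens_K1, a10] at this
  have htop := hL W' inv ((mem _).2 h2)
  refine eq_top_iff.2 fun w _ => ?_
  change (w : (tens (ev q ℓ a) (Mod q L)).V) ∈ W
  rw [cf_decomp (B := Mod q L) w]
  exact W.sum_mem fun k _ => (mem _).1 (htop ▸ trivial) _

end UMod

/-! ### Irreducibility of sorted tensor products -/

namespace UMod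

theorem alphaP_ne {q u : ℂ} {L : List (ℕ × ℂ)}
    (h : ∀ y ∈ L, 1 - u * y.2 * q ^ (-(y.1 : ℤ)) ≠ 0) : alphaP q u L ≠ 0 := by
  rw [alphaP]
  refine List.prod_ne_zero fun h0 => ?_
  obtain ⟨y, hy, h1⟩ := List.mem_map.1 h0
  exact h y hy h1

theorem deltaP_ne {q u : ℂ} {L : List (ℕ × ℂ)}
    (h : ∀ y ∈ L, q ^ (-(y.1 : ℤ)) - u * y.2 ≠ 0) : deltaP q u L ≠ 0 := by
  rw [deltaP]
  refine List.prod_ne_zero fun h0 => ?_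
  obtain ⟨y, hy, h1⟩ := List.mem_map.1 h0
  exact h y hy h1

/-- At `u = q^{ℓ-2k}/a` the operator `A(u)` kills `vₖ`, so only the term with `D(u) Ω` is left, and
the eigenvalue of `D(u)` on `Ω` does not vanish there. -/
theorem Ckill_step_ne {q : ℂ} (h : Generic q) {ℓ : ℕ} {a : ℂ} {L : List (ℕ × ℂ)} (hL : Ckill q L)
    (ha : a ≠ 0) (hg : ∀ y ∈ L, ∀ k < ℓ, a ≠ y.2 * q ^ ((ℓ : ℤ) + y.1 - 2 * k)) :
    Ckill q ((ℓ, a) :: L) := by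
  refine Ckill_step h hL fun k hk b c hc => ?_
  have h0 := h.ne0
  have h1 := hc (q ^ ((ℓ : ℤ) - 2 * k) / a)
  rw [div_mul_cancel₀ _ ha, ← zpow_add₀ h0, show (ℓ : ℤ) - 2 * k + (k - ℓ) = -k by ring, sub_self,
    zero_smul, zero_add, mod_D_Om, smul_smul] at h1
  refine ((mul_eq_zero.1 ((smul_eq_zero.1 h1).resolve_right (Om_ne_zero q L)))).resolve_right
    (deltaP_ne fun y hy h2 => hg y hy k hk ?_)
  rw [div_mul_eq_mul_div, sub_eq_zero, eq_div_iff ha, zpow_neg, inv_mul_eq_iff_eq_mul₀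
    (zpow_ne_zero _ h0)] at h2
  rw [h2, show (ℓ : ℤ) + y.1 - 2 * k = y.1 + (ℓ - 2 * k) by ring, zpow_add₀ h0]
  ring

/-- At `u = q^{2k-ℓ}/a` the operator `D(u)` kills `vₖ`, so `B(u)` maps `vₖ ⊗ Ω` to a multiple of
`vₖ₊₁ ⊗ Ω`, with a nonzero factor because the eigenvalue of `A(u)` on `Ω` does not
vanish there. -/
theorem Cyc_step_ne {q : ℂ} (h : Generic q) {ℓ : ℕ} {a : ℂ} {L : List (ℕ × ℂ)} (hL : Cyc q L)
    (ha : a ≠ 0) (hg : ∀ y ∈ L, ∀ k < ℓ, a ≠ y.2 * q ^ (-((ℓ : ℤ) + y.1 - 2 * k))) :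
    Cyc q ((ℓ, a) :: L) := by
  refine Cyc_step h hL fun W hW k hk hv => ?_
  have h0 := h.ne0
  have h1 := ((evLaw h ℓ a).tens (modLaw h L) h0).at_mem h hW 0 1 (q ^ (2 * (k : ℤ) - ℓ) / a) hv
  have h2 : q ^ ((k : ℤ) - ℓ) - q ^ (2 * (k : ℤ) - ℓ) / a * a * q ^ (-(k : ℤ)) = 0 := by
    rw [div_mul_cancel₀ _ ha, ← zpow_add₀ h0, show 2 * (k : ℤ) - ℓ + -k = k - ℓ by ring, sub_self]
  rw [tens_at_apply, evT_D, h2, zero_smul, map_zero, LinearMap.zero_apply, add_zero, evT_B,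
    mod_A_Om, map_smul, map_smul, LinearMap.smul_apply, smul_smul] at h1
  refine (W.smul_mem_iff (mul_ne_zero (alphaP_ne fun y hy h3 => hg y hy k hk ?_)
    (mul_ne_zero (mul_ne_zero (div_ne_zero (zpow_ne_zero _ h0) ha)
    (mul_ne_zero (zpow_ne_zero _ h0) ?_)) (mul_ne_zero (mul_ne_zero ha h0)
      (h.qnum_ne (by omega)))))).1 h1
  · rw [sub_eq_zero, div_mul_eq_mul_div, div_mul_eq_mul_div, eq_div_iff ha] at h3
    rw [one_mul] at h3
    rw [h3, show -((ℓ : ℤ) + y.1 - 2 * k) = 2 * (k : ℤ) - ℓ + (-y.1) by ring, zpow_add₀ h0]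
    ring
  · have := h.pow_ne 2 (by norm_num)
    rw [inv_pow, sub_ne_zero, ne_eq, eq_comm, inv_eq_one]
    exact this

section top
variable {q : ℂ} {ℓ : ℕ} {a : ℂ}

theorem tens_coeff {A B : UMod} {S : LOp A} {T : LOp B} {N s : ℕ} {i j : Fin 2}
    (hT0 : (T i 0).natDegree ≤ N) (hT1 : (T i 1).natDegree ≤ N) (hS0 : (S 0 j).natDegree ≤ s)
    (hS1 : (S 1 j).natDegree ≤ s) (x : A.V) (y : B.V) :
    ((S.tens T) i j).coeff (N + s) (tm x y) =
      tm ((S 0 j).coeff s x) ((T i 0).coeff N y) + tm ((S 1 j).coeff s x) ((T i 1).coeff N y) := by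
  rw [tens_apply, Polynomial.coeff_add,
    Polynomial.coeff_mul_add_eq_of_natDegree_le (Polynomial.natDegree_map_le.trans hT0)
      (Polynomial.natDegree_map_le.trans hS0),
    Polynomial.coeff_mul_add_eq_of_natDegree_le (Polynomial.natDegree_map_le.trans hT1)
      (Polynomial.natDegree_map_le.trans hS1)]
  simp

theorem natDegree_aux {R : Type*} [Ring R] (x y : R) :
    (Polynomial.C x - Polynomial.X * Polynomial.C y).natDegree ≤ 1 := by
  compute_degree

theorem evT_deg (i j : Fin 2) : ((evT q ℓ a) i j).natDegree ≤ 1 := by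
  fin_cases i <;> fin_cases j
  · exact natDegree_aux _ _
  · change (Polynomial.X * Polynomial.C _).natDegree ≤ 1
    compute_degree
  · change (Polynomial.C _).natDegree ≤ 1
    rw [Polynomial.natDegree_C]
    exact zero_le_one
  · exact natDegree_aux _ _

theorem evT_A_coeff (k : ℕ) : ((evT q ℓ a) 0 0).coeff 1 (bv q ℓ a k) =
    (-(a * q ^ ((k : ℤ) - ℓ))) • bv q ℓ a k := by
  simp [evT, Polynomial.coeff_C]

theorem evT_B_coeff (k : ℕ) : ((evT q ℓ a) 0 1).coeff 1 (bv q ℓ a k) =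
    (q ^ (-(k : ℤ)) * (1 - q⁻¹ ^ 2) * (a * q * qnum q ((k : ℤ) + 1))) • bv q ℓ a (k + 1) := by
  change (Polynomial.X * Polynomial.C ((ev q ℓ a).X * dg q ℓ a fun i =>
    q ^ (-(i : ℤ)) * (1 - q⁻¹ ^ 2)) : Polynomial (Module.End ℂ (ev q ℓ a).V)).coeff (0 + 1) _ = _
  rw [Polynomial.coeff_X_mul, Polynomial.coeff_C_zero, Module.End.mul_apply, dg_bv, map_smul, ev_X,
    smul_smul]

theorem evT_C_coeff : ((evT q ℓ a) 1 0).coeff 1 = 0 := by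
  simp [evT]

theorem evT_D_coeff (k : ℕ) : ((evT q ℓ a) 1 1).coeff 1 (bv q ℓ a k) =
    (-(a * q ^ (-(k : ℤ)))) • bv q ℓ a k := by
  simp [evT, Polynomial.coeff_C]

theorem evT_D_coeff_zero (k : ℕ) : ((evT q ℓ a) 1 1).coeff 0 (bv q ℓ a k) =
    q ^ ((k : ℤ) - ℓ) • bv q ℓ a k := by
  simp [evT]

theorem evT_zero_B : (evT q ℓ 0) 0 1 = 0 := by
  have : (ev q ℓ 0).X = 0 := bv_ext fun i _ => by simp
  change Polynomial.X * Polynomial.C (_ * _) = _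
  rw [this, zero_mul, map_zero, mul_zero]

theorem evT_zero_D_deg : ((evT q ℓ 0) 1 1).natDegree ≤ 0 := by
  have : (dg q ℓ 0 fun i => 0 * q ^ (-(i : ℤ))) = 0 := bv_ext fun i _ => by simp
  change (Polynomial.C _ - Polynomial.X * Polynomial.C (dg q ℓ 0 fun i => 0 * q ^ (-(i : ℤ)))).natDegree ≤ 0
  rw [this, map_zero, mul_zero, sub_zero, Polynomial.natDegree_C]

/-- The degrees in `u` of the entries of an L-operator are at most `N`, and that of `C` is
strictly less than `N`. -/
structure DegLe {M : UMod} (T : LOp M) (N : ℕ) : Prop where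
  le : ∀ i j, (T i j).natDegree ≤ N
  C : (T 1 0).coeff N = 0

theorem DegLe.tens {A B : UMod} {S : LOp A} {T : LOp B} {M N : ℕ} (hS : DegLe S M)
    (hT : DegLe T N) : DegLe (S.tens T) (N + M) where
  le i j := by
    rw [tens_apply]
    refine Polynomial.natDegree_add_le_of_degree_le ?_ ?_ <;>
    · refine Polynomial.natDegree_mul_le_of_le ?_ ?_
      · exact Polynomial.natDegree_map_le.trans (hT.le _ _)
      · exact Polynomial.natDegree_map_le.trans (hS.le _ _)
  C := tens_ext fun x y => by
    rw [tens_coeff (hT.le _ _) (hT.le _ _) (hS.le _ _) (hS.le _ _), hT.C, hS.C]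
    simp

theorem evT_degLe : DegLe (evT q ℓ a) 1 := ⟨evT_deg, evT_C_coeff⟩

theorem oneT_degLe : DegLe oneT 0 where
  le i j := by
    rw [oneT, Matrix.one_apply]
    split_ifs <;> simp
  C := by simp [oneT]

theorem modT_degLe (q : ℂ) (L : List (ℕ × ℂ)) : DegLe (ModT q L) L.length := by
  induction L with
  | nil => exact oneT_degLe
  | cons x L ih => exact evT_degLe.tens ih

/-- The leading coefficient of the eigenvalue of `A(u)` on the highest weight vector. -/
def alphaN (q : ℂ) (L : List (ℕ × ℂ)) : ℂ := (L.map fun x => -(x.2 * q ^ (-(x.1 : ℤ)))).prod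

/-- The leading coefficient of the eigenvalue of `D(u)` on the highest weight vector. -/
def deltaN (L : List (ℕ × ℂ)) : ℂ := (L.map fun x => -x.2).prod

/-- The highest weight. -/
def dsum (L : List (ℕ × ℂ)) : ℕ := (L.map Prod.fst).sum

theorem K0_Om (h : q ≠ 0) (L : List (ℕ × ℂ)) :
    (Mod q L).K0 (Om q L) = q ^ (-(dsum L : ℤ)) • Om q L := by
  induction L with
  | nil =>
    change (1 : ℂ) = (q ^ (-(dsum [] : ℤ)) • (1 : ℂ) : ℂ)
    simp [dsum]
  | cons x L ih =>
    change (tens (ev q x.1 x.2) (Mod q L)).K0 (tm (bv q x.1 x.2 0) (Om q L)) =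
      q ^ (-(dsum (x :: L) : ℤ)) • tm (bv q x.1 x.2 0) (Om q L)
    rw [tens_K0, ih, ev_K0, map_smul, map_smul, LinearMap.smul_apply, smul_smul, ← zpow_add₀ h]
    congr 2
    simp [dsum]

theorem top_A (q : ℂ) (L : List (ℕ × ℂ)) :
    ((ModT q L) 0 0).coeff L.length (Om q L) = alphaN q L • Om q L := by
  induction L with
  | nil =>
    change (oneT 0 0).coeff 0 (1 : ℂ) = (alphaN q [] • (1 : ℂ) : ℂ)
    simp [oneT, alphaN]
    rfl
  | cons x L ih =>
    change (((evT q x.1 x.2).tens (ModT q L)) 0 0).coeff (L.length + 1)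
      (tm (bv q x.1 x.2 0) (Om q L)) = alphaN q (x :: L) • tm (bv q x.1 x.2 0) (Om q L)
    rw [tens_coeff ((modT_degLe q L).le _ _) ((modT_degLe q L).le _ _) (evT_deg _ _) (evT_deg _ _),
      ih, evT_A_coeff, evT_C_coeff]
    simp [alphaN, smul_smul, mul_comm]

theorem top_D (q : ℂ) (L : List (ℕ × ℂ)) :
    ((ModT q L) 1 1).coeff L.length (Om q L) = deltaN L • Om q L := by
  induction L with
  | nil =>
    change (oneT 1 1).coeff 0 (1 : ℂ) = (deltaN [] • (1 : ℂ) : ℂ)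
    simp [oneT, deltaN]
    rfl
  | cons x L ih =>
    change (((evT q x.1 x.2).tens (ModT q L)) 1 1).coeff (L.length + 1)
      (tm (bv q x.1 x.2 0) (Om q L)) = deltaN (x :: L) • tm (bv q x.1 x.2 0) (Om q L)
    rw [tens_coeff ((modT_degLe q L).le _ _) ((modT_degLe q L).le _ _) (evT_deg _ _) (evT_deg _ _),
      ih, evT_D_coeff, (modT_degLe q L).C]
    simp [deltaN, smul_smul, mul_comm]

/-- The leading coefficient of `B(u)` acts on the highest weight vector as a multiple of `F`. -/
theorem top_B (h : Generic q) (L : List (ℕ × ℂ)) :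
    ((ModT q L) 0 1).coeff L.length (Om q L) =
      (-(q - q⁻¹) * q ^ (dsum L : ℤ) * alphaN q L) • (Mod q L).F (Om q L) := by
  have h0 := h.ne0
  induction L with
  | nil =>
    change (oneT 0 1).coeff 0 (1 : ℂ) = (_ • one.F (1 : ℂ) : ℂ)
    have : one.F = 0 := rfl
    rw [this]
    simp [oneT]
    exact (mul_zero (M₀ := ℂ) _).symm
  | cons x L ih =>
    change (((evT q x.1 x.2).tens (ModT q L)) 0 1).coeff (L.length + 1)
      (tm (bv q x.1 x.2 0) (Om q L)) = (-(q - q⁻¹) * q ^ (dsum (x :: L) : ℤ) * alphaN q (x :: L)) •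
        (tens (ev q x.1 x.2) (Mod q L)).F (tm (bv q x.1 x.2 0) (Om q L))
    rw [tens_coeff ((modT_degLe q L).le _ _) ((modT_degLe q L).le _ _) (evT_deg _ _) (evT_deg _ _),
      ih, evT_D_coeff, evT_B_coeff, top_A, tens_F, ev_F, K0_Om h0]
    have e1 : alphaN q (x :: L) = -(x.2 * q ^ (-(x.1 : ℤ))) * alphaN q L := by simp [alphaN]
    have e2 : q ^ (dsum (x :: L) : ℤ) = q ^ (x.1 : ℤ) * q ^ (dsum L : ℤ) := by
      rw [← zpow_add₀ h0]
      simp [dsum]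
    have e3 : qnum q 1 = 1 := by
      rw [qnum, zpow_one, zpow_neg_one, div_self h.sub_inv_ne]
    rw [e1, e2, add_comm]
    simp only [map_smul, LinearMap.smul_apply, smul_smul, smul_add, Nat.cast_zero, zero_add, e3,
      neg_zero, zpow_zero, zpow_neg]
    have z1 : q ^ (x.1 : ℤ) ≠ 0 := zpow_ne_zero _ h0
    have z2 : q ^ (dsum L : ℤ) ≠ 0 := zpow_ne_zero _ h0
    congr 2 <;> field_simp

theorem alphaN_ne (h : q ≠ 0) {L : List (ℕ × ℂ)} (hL : ∀ y ∈ L, y.2 ≠ 0) : alphaN q L ≠ 0 := by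
  refine List.prod_ne_zero fun h0 => ?_
  obtain ⟨y, hy, h1⟩ := List.mem_map.1 h0
  exact neg_ne_zero.2 (mul_ne_zero (hL y hy) (zpow_ne_zero _ h)) h1

theorem deltaN_ne {L : List (ℕ × ℂ)} (hL : ∀ y ∈ L, y.2 ≠ 0) : deltaN L ≠ 0 := by
  refine List.prod_ne_zero fun h0 => ?_
  obtain ⟨y, hy, h1⟩ := List.mem_map.1 h0
  exact neg_ne_zero.2 (hL y hy) h1

/-- For `a = 0`, compare coefficients of `u^N`, `N` the number of factors in `L`: `C(u)` has smaller
degree, while the coefficient in `D(u) Ω` is a nonzero multiple of `Ω`. -/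
theorem Ckill_step_zero (h : Generic q) {L : List (ℕ × ℂ)} (hL : Ckill q L)
    (hg : ∀ y ∈ L, y.2 ≠ 0) : Ckill q ((ℓ, 0) :: L) := by
  refine Ckill_step h hL fun k hk b c hc => ?_
  have h1 := coeff_apply_zero ((ModT q L) 1 0) (c • (ModT q L) 1 1) (q ^ (-(k : ℤ)) • b) (Om q L)
    Set.finite_empty (fun u _ => by
      have := hc u
      rw [mul_zero, zero_mul, sub_zero] at this
      rw [map_smul, evu_smul, LinearMap.smul_apply]
      exact this) L.length
  rw [(modT_degLe q L).C, LinearMap.zero_apply, zero_add, Polynomial.coeff_smul,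
    LinearMap.smul_apply, top_D, smul_smul] at h1
  exact (mul_eq_zero.1 ((smul_eq_zero.1 h1).resolve_right (Om_ne_zero q L))).resolve_right
    (deltaN_ne hg)

/-- For `a = 0`, the leading coefficient of `B(u)` maps `vₖ ⊗ Ω` to a nonzero multiple of `vₖ ⊗ F Ω`;
subtracting this from `F (vₖ ⊗ Ω)` leaves a multiple of `vₖ₊₁ ⊗ Ω`. -/
theorem Cyc_step_zero (h : Generic q) {L : List (ℕ × ℂ)} (hL : Cyc q L)
    (hg : ∀ y ∈ L, y.2 ≠ 0) : Cyc q ((ℓ, 0) :: L) := by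
  refine Cyc_step h hL fun W hW k hk hv => ?_
  have h0 := h.ne0
  have h1 := ((evLaw h ℓ 0).tens (modLaw h L) h0).coeff_mem h hW 0 1 (L.length + 0) _ hv
  rw [tens_coeff ((modT_degLe q L).le _ _) ((modT_degLe q L).le _ _) (by rw [evT_zero_B]; simp)
    evT_zero_D_deg, evT_zero_B, evT_D_coeff_zero, top_B h, Polynomial.coeff_zero,
    LinearMap.zero_apply, map_zero, LinearMap.zero_apply, zero_add, map_smul, map_smul,
    LinearMap.smul_apply, smul_smul] at h1
  have h2 : tm (bv q ℓ 0 k) ((Mod q L).F (Om q L)) ∈ W :=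
    (W.smul_mem_iff (mul_ne_zero (mul_ne_zero (mul_ne_zero (neg_ne_zero.2 h.sub_inv_ne)
      (zpow_ne_zero _ h0)) (alphaN_ne h0 hg)) (zpow_ne_zero _ h0))).1 h1
  have h3 := hW.F _ hv
  rw [tens_F, W.add_mem_iff_right h2, ev_F, K0_Om h0, map_smul, map_smul, LinearMap.smul_apply,
    smul_smul] at h3
  exact (W.smul_mem_iff (mul_ne_zero (zpow_ne_zero _ h0) (h.qnum_ne (by omega)))).1 h3

theorem Ckill_nil : Ckill q [] := by
  intro b _
  change ∃ c : ℂ, (b : ℂ) = c • (1 : ℂ)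
  exact ⟨b, (mul_one (show ℂ from b)).symm⟩

theorem Cyc_nil : Cyc q [] := by
  intro W _ h1
  refine eq_top_iff.2 fun b _ => ?_
  have := W.smul_mem (show ℂ from b) h1
  have e : (show ℂ from b) • Om q [] = b := by
    change (show ℂ from b) * (1 : ℂ) = b
    exact mul_one _
  rwa [e] at this

/-- The condition `a ≠ b q^{±(ℓ+m-2p)}` for `p < min(ℓ,m)` on two factors `V(ℓ,a)` and `V(m,b)`. -/
def Good (q : ℂ) (x y : ℕ × ℂ) : Prop :=
  ∀ p < min x.1 y.1, x.2 ≠ y.2 * q ^ ((x.1 : ℤ) + y.1 - 2 * p) ∧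
    x.2 ≠ y.2 * q ^ (-((x.1 : ℤ) + y.1 - 2 * p))

theorem Good.symm (h : q ≠ 0) {x y : ℕ × ℂ} (hxy : Good q x y) : Good q y x := by
  intro p hp
  obtain ⟨h1, h2⟩ := hxy p (by rwa [min_comm])
  refine ⟨fun h3 => h2 ?_, fun h3 => h1 ?_⟩
  · rw [h3, mul_assoc, ← zpow_add₀ h, show (y.1 : ℤ) + x.1 - 2 * p + -(x.1 + y.1 - 2 * p) = 0 by ring,
      zpow_zero, mul_one]
  · rw [h3, mul_assoc, ← zpow_add₀ h, show -((y.1 : ℤ) + x.1 - 2 * p) + (x.1 + y.1 - 2 * p) = 0 by ring,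
      zpow_zero, mul_one]

/-- A list of factors in increasing order of dimension, pairwise in general position, gives a
module which is generated by its highest weight vector and has no other vector killed by `C`. -/
theorem sorted_cyc (h : Generic q) {L : List (ℕ × ℂ)} (h0 : ∀ y ∈ L, y.2 ≠ 0)
    (hs : L.Pairwise fun x y => x.1 ≤ y.1) (hg : L.Pairwise (Good q)) : Cyc q L ∧ Ckill q L := by
  induction L with
  | nil => exact ⟨Cyc_nil, Ckill_nil⟩
  | cons x L ih =>
    rw [List.pairwise_cons] at hs hg
    obtain ⟨i1, i2⟩ := ih (fun y hy => h0 y (List.mem_cons_of_mem _ hy)) hs.2 hg.2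
    have hx := h0 x List.mem_cons_self
    exact ⟨Cyc_step_ne h i1 hx fun y hy k hk =>
        (hg.1 y hy k (by rwa [min_eq_left (hs.1 y hy)])).2,
      Ckill_step_ne h i2 hx fun y hy k hk =>
        (hg.1 y hy k (by rwa [min_eq_left (hs.1 y hy)])).1⟩

end top

theorem sorted_irr {q : ℂ} (h : Generic q) {L : List (ℕ × ℂ)} (h0 : ∀ y ∈ L, y.2 ≠ 0)
    (hs : L.Pairwise fun x y => x.1 ≤ y.1) (hg : L.Pairwise (Good q)) : (Mod q L).Irr :=
  irr_of_cyc h (sorted_cyc h h0 hs hg).1 (sorted_cyc h h0 hs hg).2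

theorem sorted_irr_zero {q : ℂ} (h : Generic q) (ℓ : ℕ) {L : List (ℕ × ℂ)} (h0 : ∀ y ∈ L, y.2 ≠ 0)
    (hs : L.Pairwise fun x y => x.1 ≤ y.1) (hg : L.Pairwise (Good q)) :
    (Mod q ((ℓ, 0) :: L)).Irr :=
  irr_of_cyc h (Cyc_step_zero h (sorted_cyc h h0 hs hg).1 h0)
    (Ckill_step_zero h (sorted_cyc h h0 hs hg).2 h0)

end UMod

/-! ### Defining relations -/

/-- The cubic `q`-Serre expression in `x` and `e`. -/
def serre {R : Type*} [Ring R] [Algebra ℂ R] (q : ℂ) (x e : R) : R :=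
  x * (x * (x * e)) - (q ^ 2 + 1 + (q ^ 2)⁻¹) • (x * (x * (e * x))) +
    (q ^ 2 + 1 + (q ^ 2)⁻¹) • (x * (e * (x * x))) - e * (x * (x * x))

/-- The Serre expression is additive on `q`-commuting pairs. -/
theorem serre_add {R : Type*} [Ring R] [Algebra ℂ R] {q : ℂ} (hq : q ≠ 0) {x e y f : R}
    (h1 : y * x = q ^ 2 • (x * y)) (h2 : f * x = (q ^ 2)⁻¹ • (x * f))
    (h3 : y * e = (q ^ 2)⁻¹ • (e * y)) :
    serre q (y + x) (f + e) = serre q y f + serre q x e := by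
  have h1' : ∀ z, y * (x * z) = q ^ 2 • (x * (y * z)) := fun z => by
    rw [← mul_assoc, h1, smul_mul_assoc, mul_assoc]
  have h2' : ∀ z, f * (x * z) = (q ^ 2)⁻¹ • (x * (f * z)) := fun z => by
    rw [← mul_assoc, h2, smul_mul_assoc, mul_assoc]
  have h3' : ∀ z, y * (e * z) = (q ^ 2)⁻¹ • (e * (y * z)) := fun z => by
    rw [← mul_assoc, h3, smul_mul_assoc, mul_assoc]
  simp only [serre, mul_add, add_mul, h1, h2, h3, h1', h2', h3', mul_smul_comm, smul_smul, smul_add]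
  match_scalars <;> field_simp <;> ring

namespace UMod

/-- Defining relations of the quantum loop algebra among the five operators. -/
structure Rel (q : ℂ) (M : UMod) : Prop where
  K0K1 : M.K0 * M.K1 = 1
  K1K0 : M.K1 * M.K0 = 1
  KE : M.K1 * M.E = q ^ 2 • (M.E * M.K1)
  KF : M.K1 * M.F = (q ^ 2)⁻¹ • (M.F * M.K1)
  KX : M.K1 * M.X = (q ^ 2)⁻¹ • (M.X * M.K1)
  EF : M.E * M.F = M.F * M.E + (q - q⁻¹)⁻¹ • (M.K1 - M.K0)
  XF : M.X * M.F = M.F * M.X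
  serre : serre q M.X M.E = 0

theorem evRel {q : ℂ} (h : Generic q) (ℓ : ℕ) (a : ℂ) : Rel q (ev q ℓ a) := by
  have h0 := h.ne0
  have h2 := h.sq_sub_one_ne
  have h3 : q - q⁻¹ = (q ^ 2 - 1) / q := by field_simp
  have hL := evLaw h ℓ a
  refine ⟨hL.K0K1, hL.K1K0, bv_ext' ?_ fun i => ?_, bv_ext' ?_ fun i => ?_, bv_ext' ?_ fun i => ?_,
    bv_ext' ?_ fun i => ?_, bv_ext' ?_ fun i => ?_, bv_ext' ?_ fun i => ?_⟩ <;>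
  simp only [_root_.serre, Module.End.mul_apply, LinearMap.smul_apply, LinearMap.add_apply, LinearMap.sub_apply,
    LinearMap.zero_apply, ev_X, ev_F, ev_E_zero, ev_E_succ, ev_K0, ev_K1, map_smul, smul_smul,
    map_zero, smul_zero, zero_add, Nat.cast_zero, h3] <;>
  match_scalars <;> push_cast <;> simp only [qnum_eq h, zpow_add₀ h0, zpow_sub₀ h0, zpow_one, two_mul, zpow_natCast, zpow_zero] <;>
    field_simp <;> ring

theorem Rel.K0comm {q : ℂ} {M : UMod} (h : Rel q M) {x : Module.End ℂ M.V} {c : ℂ} (hc : c ≠ 0)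
    (hx : M.K1 * x = c • (x * M.K1)) : M.K0 * x = c⁻¹ • (x * M.K0) := by
  have h1 : M.K0 * (M.K1 * x) * M.K0 = c • (M.K0 * (x * M.K1) * M.K0) := by
    rw [hx, mul_smul_comm, smul_mul_assoc]
  rw [← mul_assoc, h.K0K1, one_mul, ← mul_assoc, mul_assoc _ M.K1, h.K1K0, mul_one] at h1
  rw [h1, smul_smul, inv_mul_cancel₀ hc, one_smul]

/-- The defining relations are inherited by tensor products. -/
theorem Rel.tens {q : ℂ} (hq : q ≠ 0) {A B : UMod} (hA : Rel q A) (hB : Rel q B) :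
    Rel q (tens A B) := by
  have hq2 : q ^ 2 ≠ 0 := pow_ne_zero _ hq
  have kF := hA.K0comm (inv_ne_zero hq2) hA.KF
  have kF' := hB.K0comm (inv_ne_zero hq2) hB.KF
  have kE := hA.K0comm hq2 hA.KE
  have kE' := hB.K0comm hq2 hB.KE
  have kX := hA.K0comm (inv_ne_zero hq2) hA.KX
  have kX' := hB.K0comm (inv_ne_zero hq2) hB.KX
  have e := fun {M : UMod} {x y : Module.End ℂ M.V} (h : x = y) v => LinearMap.congr_fun h v
  have a1 := e hA.K0K1
  have a2 := e hA.K1K0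
  have a3 := e hA.KE
  have a4 := e hA.KF
  have a5 := e hA.KX
  have a6 := e hA.EF
  have a7 := e hA.XF
  have a8 := e kF
  have a9 := e kE
  have a10 := e kX
  have b1 := e hB.K0K1
  have b2 := e hB.K1K0
  have b3 := e hB.KE
  have b4 := e hB.KF
  have b5 := e hB.KX
  have b6 := e hB.EF
  have b7 := e hB.XF
  have b8 := e kF'
  have b9 := e kE'
  have b10 := e kX'
  simp only [Module.End.mul_apply, LinearMap.smul_apply, LinearMap.add_apply, LinearMap.sub_apply,
    Module.End.one_apply, inv_inv] at a1 a2 a3 a4 a5 a6 a7 a8 a9 a10 b1 b2 b3 b4 b5 b6 b7 b8 b9 b10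
  refine ⟨tens_ext fun x y => ?_, tens_ext fun x y => ?_, tens_ext fun x y => ?_,
    tens_ext fun x y => ?_, tens_ext fun x y => ?_, tens_ext fun x y => ?_,
    tens_ext fun x y => ?_, ?_⟩
  iterate 7
    simp only [Module.End.mul_apply, LinearMap.smul_apply, LinearMap.add_apply,
      LinearMap.sub_apply, tens_X, tens_E, tens_F, tens_K0, tens_K1, map_add, map_sub, map_smul,
      a1, a2, a3, a4, a5, a6, a7, a8, b1, b2, b3, b4, b5, b6, b7, b9, b10,
      smul_add, smul_sub, Module.End.one_apply]
    try match_scalars <;> field_simp <;> ring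
  rw [tens_X', tens_E', serre_add hq]
  · have s1 : _root_.serre q (iL A B A.X) (iL A B A.E) = 0 := by
      have := congrArg (iL A B) hA.serre
      simpa only [_root_.serre, map_add, map_sub, map_smul, map_mul, map_zero] using this
    have s2 : _root_.serre q (iL A B A.K0 * iR A B B.X) (iL A B A.K1 * iR A B B.E) =
        iL A B (A.K0 * A.K0) * iR A B (_root_.serre q B.X B.E) := tens_ext fun x y => by
      simp only [_root_.serre, Module.End.mul_apply, LinearMap.smul_apply, LinearMap.add_apply,
        LinearMap.sub_apply, iL_tm, iR_tm, a1, a2, map_add, map_sub, map_smul]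
    rw [s1, s2, hB.serre, map_zero, mul_zero, add_zero]
  · exact tens_ext fun x y => by
      simp [a10]
  · exact tens_ext fun x y => by
      simp [a5]
  · exact tens_ext fun x y => by
      simp [a9]

end UMod

/-! ### Submodules generated by highest weight vectors and the flip isomorphism -/

namespace UMod

section gen
variable {q : ℂ} {M : UMod}

/-- The span of the vectors `Fⁱ w`, `w ∈ s`. -/
def gen (M : UMod) (s : Set M.V) : Submodule ℂ M.V :=
  Submodule.span ℂ {v | ∃ i : ℕ, ∃ w ∈ s, v = (M.F ^ i) w}

theorem gen_le {s : Set M.V} (f : Module.End ℂ M.V) (W : Submodule ℂ M.V)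
    (h : ∀ i : ℕ, ∀ w ∈ s, f ((M.F ^ i) w) ∈ W) : ∀ v ∈ gen M s, f v ∈ W := by
  have : gen M s ≤ W.comap f := by
    refine Submodule.span_le.2 ?_
    rintro _ ⟨i, w, hw, rfl⟩
    exact h i w hw
  exact this

theorem mem_gen {s : Set M.V} (i : ℕ) {w : M.V} (hw : w ∈ s) : (M.F ^ i) w ∈ gen M s :=
  Submodule.subset_span ⟨i, w, hw, rfl⟩

theorem gen_F {s : Set M.V} : ∀ v ∈ gen M s, M.F v ∈ gen M s :=
  gen_le _ _ fun i w hw => by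
    have := mem_gen (i + 1) hw
    rwa [pow_succ'] at this

theorem gen_F_pow {s : Set M.V} (i : ℕ) : ∀ v ∈ gen M s, (M.F ^ i) v ∈ gen M s := by
  induction i with
  | zero => exact fun v hv => hv
  | succ i ih =>
    intro v hv
    rw [pow_succ']
    exact gen_F _ (ih v hv)

theorem gen_X (R : Rel q M) {s : Set M.V} (hX : ∀ w ∈ s, M.X w ∈ gen M s) :
    ∀ v ∈ gen M s, M.X v ∈ gen M s :=
  gen_le _ _ fun i w hw => by
    have h1 : M.X * M.F ^ i = M.F ^ i * M.X := ((show Commute M.X M.F from R.XF).pow_right i)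
    have h2 := LinearMap.congr_fun h1 w
    rw [Module.End.mul_apply, Module.End.mul_apply] at h2
    rw [h2]
    exact gen_F_pow i _ (hX w hw)

/-- The span of `Fⁱ w`, `w ∈ s`, is a submodule as soon as `X` and `E` send `s` into it. -/
theorem gen_inv (R : Rel q M) (hq : q ≠ 0) {s : Set M.V} (hK : ∀ w ∈ s, ∃ c : ℂ, c ≠ 0 ∧ M.K1 w = c • w)
    (hX : ∀ w ∈ s, M.X w ∈ gen M s) (hE : ∀ w ∈ s, M.E w ∈ gen M s) : M.Inv (gen M s) := by
  have hw1 : ∀ i : ℕ, ∀ w ∈ s, ∃ c : ℂ, c ≠ 0 ∧ M.K1 ((M.F ^ i) w) = c • (M.F ^ i) w := by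
    intro i w hw
    induction i with
    | zero => exact hK w hw
    | succ i ih =>
      obtain ⟨c, hc, h1⟩ := ih
      refine ⟨(q ^ 2)⁻¹ * c, mul_ne_zero (inv_ne_zero (pow_ne_zero _ hq)) hc, ?_⟩
      have h2 := LinearMap.congr_fun R.KF ((M.F ^ i) w)
      rw [Module.End.mul_apply, LinearMap.smul_apply, Module.End.mul_apply, h1, map_smul] at h2
      rw [pow_succ', Module.End.mul_apply, h2, smul_smul]
  have k1 : ∀ v ∈ gen M s, M.K1 v ∈ gen M s := gen_le _ _ fun i w hw => by
    obtain ⟨c, _, h1⟩ := hw1 i w hw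
    rw [h1]
    exact Submodule.smul_mem _ _ (mem_gen i hw)
  have k0 : ∀ v ∈ gen M s, M.K0 v ∈ gen M s := gen_le _ _ fun i w hw => by
    obtain ⟨c, hc, h1⟩ := hw1 i w hw
    have h2 := congrArg M.K0 h1
    have h3 := LinearMap.congr_fun R.K0K1 ((M.F ^ i) w)
    rw [Module.End.mul_apply, Module.End.one_apply] at h3
    rw [h3, map_smul] at h2
    have h4 : M.K0 ((M.F ^ i) w) = c⁻¹ • (M.F ^ i) w := by
      rw [h2, smul_smul, inv_mul_cancel₀ hc, one_smul, ← h2]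
    rw [h4]
    exact Submodule.smul_mem _ _ (mem_gen i hw)
  refine ⟨gen_X R hX, gen_le _ _ fun i w hw => ?_, gen_F, k0, k1⟩
  induction i with
  | zero => exact hE w hw
  | succ i ih =>
    have h2 := LinearMap.congr_fun R.EF ((M.F ^ i) w)
    simp only [Module.End.mul_apply, LinearMap.add_apply, LinearMap.smul_apply,
      LinearMap.sub_apply] at h2
    rw [pow_succ', Module.End.mul_apply, h2]
    exact Submodule.add_mem _ (gen_F _ ih) (Submodule.smul_mem _ _
      (Submodule.sub_mem _ (k1 _ (mem_gen i hw)) (k0 _ (mem_gen i hw))))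

/-- The submodule generated by a highest weight vector `ω` is spanned by `FⁱXʲω`, provided that
`EXω` and `EX²ω` are as in a tensor product of two evaluation modules. -/
theorem gen_hw (R : Rel q M) (hq : q ≠ 0) {ω : M.V} {c c1 c2 c3 : ℂ} (hc : c ≠ 0)
    (hK : M.K1 ω = c • ω) (h0 : M.E ω = 0) (h1 : M.E (M.X ω) = c1 • ω)
    (h2 : M.E (M.X (M.X ω)) = c2 • M.X ω + c3 • M.F ω) :
    M.Inv (gen M {v | ∃ j : ℕ, v = (M.X ^ j) ω}) := by
  set s : Set M.V := {v | ∃ j : ℕ, v = (M.X ^ j) ω} with hs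
  have ms : ∀ j : ℕ, (M.X ^ j) ω ∈ gen M s := fun j => mem_gen 0 ⟨j, rfl⟩
  have hX : ∀ w ∈ s, M.X w ∈ gen M s := by
    rintro _ ⟨j, rfl⟩
    have := ms (j + 1)
    rwa [pow_succ'] at this
  have gX := gen_X R hX
  refine gen_inv R hq ?_ hX ?_
  · rintro _ ⟨j, rfl⟩
    induction j with
    | zero => exact ⟨c, hc, hK⟩
    | succ i ih =>
      obtain ⟨c, hc, h1⟩ := ih
      refine ⟨(q ^ 2)⁻¹ * c, mul_ne_zero (inv_ne_zero (pow_ne_zero _ hq)) hc, ?_⟩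
      have h2 := LinearMap.congr_fun R.KX ((M.X ^ i) ω)
      rw [Module.End.mul_apply, LinearMap.smul_apply, Module.End.mul_apply, h1, map_smul] at h2
      rw [pow_succ', Module.End.mul_apply, h2, smul_smul]
  · have key : ∀ j : ℕ, M.E ((M.X ^ j) ω) ∈ gen M s ∧ M.E ((M.X ^ (j + 1)) ω) ∈ gen M s ∧
        M.E ((M.X ^ (j + 2)) ω) ∈ gen M s := by
      intro j
      induction j with
      | zero =>
        refine ⟨?_, ?_, ?_⟩
        · change M.E ω ∈ _
          rw [h0]
          exact Submodule.zero_mem _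
        · rw [zero_add, pow_one, h1]
          exact Submodule.smul_mem _ _ (ms 0)
        · rw [zero_add, pow_two, Module.End.mul_apply, h2]
          exact Submodule.add_mem _ (Submodule.smul_mem _ _ (gX _ (ms 0)))
            (Submodule.smul_mem _ _ (gen_F _ (ms 0)))
      | succ j ih =>
        refine ⟨ih.2.1, ih.2.2, ?_⟩
        have h3 := LinearMap.congr_fun R.serre ((M.X ^ j) ω)
        simp only [serre, Module.End.mul_apply, LinearMap.add_apply, LinearMap.smul_apply,
          LinearMap.sub_apply, LinearMap.zero_apply] at h3
        obtain ⟨i1, i2, i3⟩ := ih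
        simp only [pow_succ', Module.End.mul_apply] at i1 i2 i3 ⊢
        rw [← sub_eq_zero.1 h3]
        exact Submodule.add_mem _ (Submodule.sub_mem _ (gX _ (gX _ (gX _ i1)))
          (Submodule.smul_mem _ _ (gX _ (gX _ i2)))) (Submodule.smul_mem _ _ (gX _ i3))
    rintro _ ⟨j, rfl⟩
    exact (key j).1

end gen

/-- The direct sum of two modules. -/
def prod (M N : UMod) : UMod where
  V := M.V × N.V
  X := M.X.prodMap N.X
  E := M.E.prodMap N.E
  F := M.F.prodMap N.F
  K0 := M.K0.prodMap N.K0
  K1 := M.K1.prodMap N.K1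

section prod
variable {M N : UMod}

/-- The first projection of a direct sum. -/
def p1 : (prod M N).V →ₗ[ℂ] M.V := LinearMap.fst ℂ M.V N.V
/-- The second projection of a direct sum. -/
def p2 : (prod M N).V →ₗ[ℂ] N.V := LinearMap.snd ℂ M.V N.V
/-- The pair `(x, y)` in the direct sum. -/
def pr (x : M.V) (y : N.V) : (prod M N).V := (x, y)

@[simp] theorem p1_pr (x : M.V) (y : N.V) : p1 (pr x y) = x := rfl
@[simp] theorem p2_pr (x : M.V) (y : N.V) : p2 (pr x y) = y := rfl
@[simp] theorem p1_X (v : (prod M N).V) : p1 ((prod M N).X v) = M.X (p1 v) := rfl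
@[simp] theorem p1_E (v : (prod M N).V) : p1 ((prod M N).E v) = M.E (p1 v) := rfl
@[simp] theorem p1_F (v : (prod M N).V) : p1 ((prod M N).F v) = M.F (p1 v) := rfl
@[simp] theorem p1_K0 (v : (prod M N).V) : p1 ((prod M N).K0 v) = M.K0 (p1 v) := rfl
@[simp] theorem p1_K1 (v : (prod M N).V) : p1 ((prod M N).K1 v) = M.K1 (p1 v) := rfl
@[simp] theorem p2_X (v : (prod M N).V) : p2 ((prod M N).X v) = N.X (p2 v) := rfl
@[simp] theorem p2_E (v : (prod M N).V) : p2 ((prod M N).E v) = N.E (p2 v) := rfl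
@[simp] theorem p2_F (v : (prod M N).V) : p2 ((prod M N).F v) = N.F (p2 v) := rfl
@[simp] theorem p2_K0 (v : (prod M N).V) : p2 ((prod M N).K0 v) = N.K0 (p2 v) := rfl
@[simp] theorem p2_K1 (v : (prod M N).V) : p2 ((prod M N).K1 v) = N.K1 (p2 v) := rfl

theorem pr_ext {v w : (prod M N).V} (h1 : p1 v = p1 w) (h2 : p2 v = p2 w) : v = w :=
  Prod.ext h1 h2

theorem pEnd_ext {f g : Module.End ℂ (prod M N).V} (h1 : ∀ v, p1 (f v) = p1 (g v))
    (h2 : ∀ v, p2 (f v) = p2 (g v)) : f = g := LinearMap.ext fun v => pr_ext (h1 v) (h2 v)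

theorem Rel.prod {q : ℂ} (hM : Rel q M) (hN : Rel q N) : Rel q (prod M N) := by
  refine ⟨pEnd_ext (fun v => ?_) fun v => ?_, pEnd_ext (fun v => ?_) fun v => ?_,
    pEnd_ext (fun v => ?_) fun v => ?_, pEnd_ext (fun v => ?_) fun v => ?_,
    pEnd_ext (fun v => ?_) fun v => ?_, pEnd_ext (fun v => ?_) fun v => ?_,
    pEnd_ext (fun v => ?_) fun v => ?_, pEnd_ext (fun v => ?_) fun v => ?_⟩
  · exact LinearMap.congr_fun hM.K0K1 (p1 v)
  · exact LinearMap.congr_fun hN.K0K1 (p2 v)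
  · exact LinearMap.congr_fun hM.K1K0 (p1 v)
  · exact LinearMap.congr_fun hN.K1K0 (p2 v)
  · exact LinearMap.congr_fun hM.KE (p1 v)
  · exact LinearMap.congr_fun hN.KE (p2 v)
  · exact LinearMap.congr_fun hM.KF (p1 v)
  · exact LinearMap.congr_fun hN.KF (p2 v)
  · exact LinearMap.congr_fun hM.KX (p1 v)
  · exact LinearMap.congr_fun hN.KX (p2 v)
  · exact LinearMap.congr_fun hM.EF (p1 v)
  · exact LinearMap.congr_fun hN.EF (p2 v)
  · exact LinearMap.congr_fun hM.XF (p1 v)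
  · exact LinearMap.congr_fun hN.XF (p2 v)
  · exact LinearMap.congr_fun hM.serre (p1 v)
  · exact LinearMap.congr_fun hN.serre (p2 v)

/-- A submodule of `M ⊕ N` which meets `M` trivially and projects onto `M` is the graph of an
isomorphism when `M` and `N` have the same dimension. -/
theorem iso_of_graph (hM : M.Irr) (hd : Module.finrank ℂ M.V = Module.finrank ℂ N.V)
    (S : Submodule ℂ (prod M N).V) (hS : (prod M N).Inv S) {x : M.V} (hx : x ≠ 0)
    (h1 : ∃ y, pr x y ∈ S) (h2 : pr x 0 ∉ S) : Nonempty (Iso M N) := by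
  have ker : ∀ v, pr v 0 ∈ S → v = 0 := by
    set W : Submodule ℂ M.V := S.comap (LinearMap.inl ℂ M.V N.V) with hW
    have mW : ∀ v, v ∈ W ↔ (pr v 0 : (prod M N).V) ∈ S := fun v => Iff.rfl
    have hi : M.Inv W := by
      refine ⟨fun v hv => ?_, fun v hv => ?_, fun v hv => ?_, fun v hv => ?_, fun v hv => ?_⟩ <;>
      rw [mW] at hv ⊢
      · exact (pr_ext (by simp) (by simp) : pr (M.X v) 0 = (prod M N).X (pr v 0)) ▸ hS.X _ hv
      · exact (pr_ext (by simp) (by simp) : pr (M.E v) 0 = (prod M N).E (pr v 0)) ▸ hS.E _ hv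
      · exact (pr_ext (by simp) (by simp) : pr (M.F v) 0 = (prod M N).F (pr v 0)) ▸ hS.F _ hv
      · exact (pr_ext (by simp) (by simp) : pr (M.K0 v) 0 = (prod M N).K0 (pr v 0)) ▸ hS.K0 _ hv
      · exact (pr_ext (by simp) (by simp) : pr (M.K1 v) 0 = (prod M N).K1 (pr v 0)) ▸ hS.K1 _ hv
    rcases hM W hi with h | h
    · intro v hv
      rw [← mW, h, Submodule.mem_bot] at hv
      exact hv
    · exact absurd ((mW x).1 (h ▸ trivial)) h2
  have surj : ∀ v, ∃ s ∈ S, p1 s = v := by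
    have hi : M.Inv (S.map p1) := by
      refine ⟨?_, ?_, ?_, ?_, ?_⟩ <;> rintro _ ⟨s, hs, rfl⟩
      · exact ⟨_, hS.X s hs, p1_X s⟩
      · exact ⟨_, hS.E s hs, p1_E s⟩
      · exact ⟨_, hS.F s hs, p1_F s⟩
      · exact ⟨_, hS.K0 s hs, p1_K0 s⟩
      · exact ⟨_, hS.K1 s hs, p1_K1 s⟩
    rcases hM _ hi with h | h
    · obtain ⟨y, hy⟩ := h1
      have : x ∈ S.map p1 := ⟨_, hy, rfl⟩
      rw [h, Submodule.mem_bot] at this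
      exact absurd this hx
    · intro v
      have : v ∈ S.map p1 := h ▸ trivial
      exact this
  set f : S →ₗ[ℂ] M.V := p1.domRestrict S with hf
  set g : S →ₗ[ℂ] N.V := p2.domRestrict S with hg
  have fs : Function.Surjective f := fun v => by
    obtain ⟨s, hs, h⟩ := surj v
    exact ⟨⟨s, hs⟩, h⟩
  have gi : Function.Injective g := by
    rw [injective_iff_map_eq_zero]
    rintro ⟨s, hs⟩ h
    change p2 s = 0 at h
    have e : s = pr (p1 s) 0 := pr_ext rfl h
    have h3 := ker (p1 s) (e ▸ hs)
    refine Subtype.ext (pr_ext ?_ ?_)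
    · change p1 s = p1 0
      rw [h3, map_zero]
    · change p2 s = p2 0
      rw [h, map_zero]
  have d1 : Module.finrank ℂ M.V ≤ Module.finrank ℂ S := LinearMap.finrank_le_finrank_of_surjective fs
  have d2 : Module.finrank ℂ S ≤ Module.finrank ℂ N.V := LinearMap.finrank_le_finrank_of_injective gi
  have fi : Function.Injective f :=
    (LinearMap.injective_iff_surjective_of_finrank_eq_finrank (by omega)).2 fs
  have gs : Function.Surjective g :=
    (LinearMap.injective_iff_surjective_of_finrank_eq_finrank (by omega)).1 gi
  set e := (LinearEquiv.ofBijective f ⟨fi, fs⟩).symm.trans (LinearEquiv.ofBijective g ⟨gi, gs⟩)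
    with he
  have main : ∀ s ∈ S, e (p1 s) = p2 s := fun s hs => by
    have : (LinearEquiv.ofBijective f ⟨fi, fs⟩).symm (p1 s) = ⟨s, hs⟩ := by
      rw [LinearEquiv.symm_apply_eq]
      rfl
    rw [he, LinearEquiv.trans_apply, this]
    rfl
  refine ⟨⟨e, fun v => ?_, fun v => ?_, fun v => ?_, fun v => ?_, fun v => ?_⟩⟩ <;>
    obtain ⟨s, hs, rfl⟩ := surj v <;> rw [main s hs]
  · rw [← p1_X, ← p2_X, main _ (hS.X s hs)]
  · rw [← p1_E, ← p2_E, main _ (hS.E s hs)]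
  · rw [← p1_F, ← p2_F, main _ (hS.F s hs)]
  · rw [← p1_K0, ← p2_K0, main _ (hS.K0 s hs)]
  · rw [← p1_K1, ← p2_K1, main _ (hS.K1 s hs)]

end prod

section pair
variable {q : ℂ}

/-- The vector `vᵢ ⊗ uⱼ` in `V(ℓ,a) ⊗ V(m,b)`. -/
abbrev b2 (q : ℂ) (ℓ : ℕ) (a : ℂ) (m : ℕ) (b : ℂ) (i j : ℕ) : (tens (ev q ℓ a) (ev q m b)).V :=
  tm (bv q ℓ a i) (bv q m b j)

/-- The scalar is symmetric under exchanging `(ℓ,a)` and `(m,b)`. -/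
theorem pair_EX (h : Generic q) (ℓ m : ℕ) (a b : ℂ) :
    (tens (ev q ℓ a) (ev q m b)).E ((tens (ev q ℓ a) (ev q m b)).X (b2 q ℓ a m b 0 0)) =
      (q * (a * qnum q ℓ + b * qnum q m)) • b2 q ℓ a m b 0 0 := by
  have h0 := h.ne0
  have h2 := h.sq_sub_one_ne
  simp only [b2, tens_X, tens_E, ev_X, ev_K0, ev_K1, ev_E_zero, ev_E_succ, map_smul, map_add, map_zero,
    LinearMap.smul_apply, LinearMap.zero_apply, smul_smul, zero_add, add_zero]
  match_scalars
  push_cast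
  simp only [qnum_eq h, zpow_sub₀ h0, zpow_one, zpow_natCast, zpow_zero]
  field_simp
  ring

/-- Both coefficients are symmetric under exchanging `(ℓ,a)` and `(m,b)`. -/
theorem pair_EXX (h : Generic q) (ℓ m : ℕ) (a b : ℂ) :
    (tens (ev q ℓ a) (ev q m b)).E ((tens (ev q ℓ a) (ev q m b)).X
      ((tens (ev q ℓ a) (ev q m b)).X (b2 q ℓ a m b 0 0))) =
      (qnum q 2 * q * (a * qnum q ((ℓ : ℤ) - 1) + b * qnum q ((m : ℤ) - 1))) •
        (tens (ev q ℓ a) (ev q m b)).X (b2 q ℓ a m b 0 0) +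
      (qnum q 2 * q ^ 2 * (a * b)) • (tens (ev q ℓ a) (ev q m b)).F (b2 q ℓ a m b 0 0) := by
  have h0 := h.ne0
  have h2 := h.sq_sub_one_ne
  simp only [b2, tens_X, tens_E, tens_F, ev_F, ev_X, ev_K0, ev_K1, ev_E_zero, ev_E_succ, map_smul, map_add, map_zero,
    LinearMap.smul_apply, LinearMap.zero_apply, smul_smul, smul_add, zero_add, add_zero]
  match_scalars <;> push_cast <;>
  simp only [qnum_eq h, zpow_add₀ h0, zpow_sub₀ h0, zpow_one, zpow_natCast, zpow_zero,
    show (2 : ℤ) = 1 + 1 from rfl] <;>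
  field_simp <;>
  ring

/-- The coefficient of the highest weight vector; it vanishes on the images of `X` and `F`. -/
def chi (q : ℂ) (ℓ : ℕ) (a : ℂ) (m : ℕ) (b : ℂ) : (tens (ev q ℓ a) (ev q m b)).V →ₗ[ℂ] ℂ :=
  tlift ((LinearMap.mul ℂ ℂ).compl₁₂ (bc q ℓ a 0) (bc q m b 0))

theorem chi_X (ℓ m : ℕ) (a b : ℂ) (v : (tens (ev q ℓ a) (ev q m b)).V) :
    chi q ℓ a m b ((tens (ev q ℓ a) (ev q m b)).X v) = 0 := by
  have e : ∀ (ℓ : ℕ) (a : ℂ) x, bc q ℓ a 0 ((ev q ℓ a).X x) = 0 := fun ℓ a x => by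
    have : bc q ℓ a 0 ∘ₗ (ev q ℓ a).X = 0 := bv_ext fun i _ => by simp [bc_bv]
    exact LinearMap.congr_fun this x
  have : chi q ℓ a m b ∘ₗ (tens (ev q ℓ a) (ev q m b)).X = 0 :=
    tens_ext fun x y => by simp [chi, e]
  exact LinearMap.congr_fun this v

theorem chi_F (ℓ m : ℕ) (a b : ℂ) (v : (tens (ev q ℓ a) (ev q m b)).V) :
    chi q ℓ a m b ((tens (ev q ℓ a) (ev q m b)).F v) = 0 := by
  have e : ∀ (ℓ : ℕ) (a : ℂ) x, bc q ℓ a 0 ((ev q ℓ a).F x) = 0 := fun ℓ a x => by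
    have : bc q ℓ a 0 ∘ₗ (ev q ℓ a).F = 0 := bv_ext fun i _ => by simp [bc_bv]
    exact LinearMap.congr_fun this x
  have : chi q ℓ a m b ∘ₗ (tens (ev q ℓ a) (ev q m b)).F = 0 :=
    tens_ext fun x y => by simp [chi, e]
  exact LinearMap.congr_fun this v

theorem chi_b2 (ℓ m : ℕ) (a b : ℂ) : chi q ℓ a m b (b2 q ℓ a m b 0 0) = 1 := by
  simp [chi, bc_bv]

theorem pair_K1 (h : Generic q) (ℓ m : ℕ) (a b : ℂ) :
    (tens (ev q ℓ a) (ev q m b)).K1 (b2 q ℓ a m b 0 0) =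
      q ^ ((ℓ : ℤ) + m) • b2 q ℓ a m b 0 0 := by
  have h0 := h.ne0
  simp only [b2, tens_K1, ev_K1, map_smul, LinearMap.smul_apply, smul_smul, ← zpow_add₀ h0]
  push_cast
  congr 2
  ring

theorem pair_E (ℓ m : ℕ) (a b : ℂ) :
    (tens (ev q ℓ a) (ev q m b)).E (b2 q ℓ a m b 0 0) = 0 := by
  simp only [b2, tens_E, ev_E_zero, map_zero, LinearMap.zero_apply, add_zero]

/-- An irreducible `V(ℓ,a) ⊗ V(m,b)` is isomorphic to `V(m,b) ⊗ V(ℓ,a)`. -/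
theorem swap_iso (h : Generic q) (ℓ m : ℕ) (a b : ℂ) (hI : (tens (ev q ℓ a) (ev q m b)).Irr) :
    Nonempty (Iso (tens (ev q ℓ a) (ev q m b)) (tens (ev q m b) (ev q ℓ a))) := by
  have h0 := h.ne0
  obtain ⟨ω, hω⟩ : ∃ ω : (prod (tens (ev q ℓ a) (ev q m b)) (tens (ev q m b) (ev q ℓ a))).V,
    ω = pr (b2 q ℓ a m b 0 0) (b2 q m b ℓ a 0 0) := ⟨_, rfl⟩
  have w1 : p1 ω = b2 q ℓ a m b 0 0 := by rw [hω, p1_pr]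
  have w2 : p2 ω = b2 q m b ℓ a 0 0 := by rw [hω, p2_pr]
  have R : Rel q (prod (tens (ev q ℓ a) (ev q m b)) (tens (ev q m b) (ev q ℓ a))) :=
    ((evRel h ℓ a).tens h0 (evRel h m b)).prod ((evRel h m b).tens h0 (evRel h ℓ a))
  have c0 : q ^ ((ℓ : ℤ) + m) ≠ 0 := zpow_ne_zero _ h0
  have inv := gen_hw R h0 (ω := ω) c0
    (pr_ext (by rw [p1_K1, map_smul, w1, pair_K1 h])
      (by rw [p2_K1, map_smul, w2, pair_K1 h, add_comm (ℓ : ℤ)]))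
    (pr_ext (by rw [p1_E, w1, pair_E, map_zero]) (by rw [p2_E, w2, pair_E, map_zero]))
    (c1 := q * (a * qnum q ℓ + b * qnum q m))
    (pr_ext (by rw [p1_E, p1_X, map_smul, w1, pair_EX h])
      (by rw [p2_E, p2_X, map_smul, w2, pair_EX h, add_comm (a * _)]))
    (c2 := qnum q 2 * q * (a * qnum q ((ℓ : ℤ) - 1) + b * qnum q ((m : ℤ) - 1)))
    (c3 := qnum q 2 * q ^ 2 * (a * b))
    (pr_ext (by rw [p1_E, p1_X, p1_X, map_add, map_smul, map_smul, p1_X, p1_F, w1, pair_EXX h])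
      (by rw [p2_E, p2_X, p2_X, map_add, map_smul, map_smul, p2_X, p2_F, w2, pair_EXX h,
        add_comm (a * _), mul_comm a b]))
  have kill : ∀ v ∈ gen _ {v | ∃ j : ℕ, v = ((prod _ _).X ^ j) ω},
      chi q ℓ a m b (p1 v) - chi q m b ℓ a (p2 v) = 0 := by
    intro v hv
    refine Submodule.span_induction ?_ ?_ ?_ ?_ hv
    · rintro _ ⟨i, _, ⟨j, rfl⟩, rfl⟩
      cases i with
      | zero =>
        cases j with
        | zero =>
          change chi q ℓ a m b (p1 ω) - chi q m b ℓ a (p2 ω) = 0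
          rw [w1, w2, chi_b2, chi_b2, sub_self]
        | succ j =>
          rw [pow_zero, Module.End.one_apply, pow_succ', Module.End.mul_apply, p1_X, p2_X, chi_X,
            chi_X, sub_self]
      | succ i =>
        rw [pow_succ', Module.End.mul_apply, p1_F, p2_F, chi_F, chi_F, sub_self]
    · simp
    · intro x y _ _ hx hy
      simp only [map_add]
      linear_combination hx + hy
    · intro c x _ hx
      simp only [map_smul, smul_eq_mul]
      linear_combination c * hx
  have nz : b2 q ℓ a m b 0 0 ≠ 0 := fun h1 => by
    have := chi_b2 (q := q) ℓ m a b
    rw [h1, map_zero] at this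
    exact zero_ne_one this
  refine iso_of_graph hI ?_ _ inv nz ⟨b2 q m b ℓ a 0 0, hω ▸ mem_gen 0 ⟨0, rfl⟩⟩ fun h1 => ?_
  · exact (TensorProduct.comm ℂ (ev q ℓ a).V (ev q m b).V).finrank_eq
  · have := kill _ h1
    rw [p1_pr, p2_pr, chi_b2, map_zero, sub_zero] at this
    exact one_ne_zero this

end pair

end UMod

/-! ### Reducible pairs and tensor factors of irreducible modules -/

namespace UMod

section bad
variable {q : ℂ}

/-- The coefficients of the functional `∑ᵢ g(i) vᵢ* ⊗ u*_{p+1-i}` which vanishes on the image of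
`F`. -/
def gco (q : ℂ) (m p : ℕ) : ℕ → ℂ
  | 0 => 1
  | i + 1 => -(q ^ ((m : ℤ) - 2 * ((p : ℤ) - i)) * qnum q ((p : ℤ) - i + 1) / qnum q ((i : ℤ) + 1))
      * gco q m p i

/-- The functional `∑ᵢ g(i) vᵢ* ⊗ u*_{p+1-i}` on `V(ℓ,a) ⊗ V(m,b)`. -/
def psi (q : ℂ) (ℓ : ℕ) (a : ℂ) (m : ℕ) (b : ℂ) (p : ℕ) :
    (tens (ev q ℓ a) (ev q m b)).V →ₗ[ℂ] ℂ :=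
  tlift (∑ i ∈ Finset.range (p + 2),
    gco q m p i • (LinearMap.mul ℂ ℂ).compl₁₂ (bc q ℓ a i) (bc q m b (p + 1 - i)))

theorem psi_b2 {ℓ m : ℕ} {a b : ℂ} {p : ℕ} (hl : p < ℓ) (hm : p < m) (i j : ℕ) :
    psi q ℓ a m b p (b2 q ℓ a m b i j) = if i + j = p + 1 then gco q m p i else 0 := by
  rw [psi, b2, tlift_tm, LinearMap.sum_apply, LinearMap.sum_apply]
  have : ∀ k ∈ Finset.range (p + 2), ((gco q m p k • (LinearMap.mul ℂ ℂ).compl₁₂ (bc q ℓ a k)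
      (bc q m b (p + 1 - k))) (bv q ℓ a i)) (bv q m b j) =
      if k = i then (if i + j = p + 1 then gco q m p i else 0) else 0 := by
    intro k hk
    rw [Finset.mem_range] at hk
    rw [LinearMap.smul_apply, LinearMap.smul_apply, LinearMap.compl₁₂_apply, LinearMap.mul_apply',
      bc_bv (by omega), bc_bv (by omega), smul_eq_mul]
    by_cases h1 : k = i
    · subst h1
      by_cases h2 : p + 1 - k = j
      · rw [if_pos rfl, if_pos h2, if_pos rfl, if_pos (by omega), mul_one, mul_one]
      · rw [if_neg h2, if_pos rfl, if_pos rfl, if_neg (by omega), mul_zero, mul_zero]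
    · rw [if_neg h1, if_neg h1, zero_mul, mul_zero]
  rw [Finset.sum_congr rfl this, Finset.sum_ite_eq']
  split_ifs with h1 h2 h2
  · rfl
  · rfl
  · rw [Finset.mem_range] at h1
    omega
  · rfl

theorem psi_F (h : Generic q) {ℓ m : ℕ} {a b : ℂ} {p : ℕ} (hl : p < ℓ) (hm : p < m) (v) :
    psi q ℓ a m b p ((tens (ev q ℓ a) (ev q m b)).F v) = 0 := by
  have : psi q ℓ a m b p ∘ₗ (tens (ev q ℓ a) (ev q m b)).F = 0 := by
    refine tens_ext fun x y => ?_
    rw [LinearMap.zero_apply]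
    have e : ∀ i j, psi q ℓ a m b p ((tens (ev q ℓ a) (ev q m b)).F (b2 q ℓ a m b i j)) = 0 := by
      intro i j
      rw [b2, tens_F, ev_F, ev_F, ev_K0, map_smul, map_smul, map_smul, LinearMap.smul_apply, map_add,
        map_smul, map_smul, map_smul, psi_b2 hl hm, psi_b2 hl hm]
      by_cases hij : i + j = p
      · rw [if_pos (by omega), if_pos (by omega), gco]
        have h1 : (p : ℤ) = i + j := by omega
        have h2 := h.qnum_ne (t := (i : ℤ) + 1) (by omega)
        rw [h1, add_sub_cancel_left]
        simp only [smul_eq_mul]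
        have h3 : q ^ (2 * (j : ℤ) - m) * q ^ ((m : ℤ) - 2 * j) = 1 := by
          rw [← zpow_add₀ h.ne0]
          simp
        field_simp
        linear_combination (-gco q m p i * qnum q ((j : ℤ) + 1)) * h3
      · rw [if_neg (by omega), if_neg (by omega), smul_zero, smul_zero, smul_zero, add_zero]
    rw [bv_decomp x, bv_decomp y]
    simp only [map_sum, LinearMap.sum_apply, map_smul, LinearMap.smul_apply, LinearMap.comp_apply]
    refine Finset.sum_eq_zero fun i _ => ?_
    refine smul_eq_zero_of_right _ (Finset.sum_eq_zero fun j _ => ?_)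
    exact smul_eq_zero_of_right _ (e _ _)
  exact LinearMap.congr_fun this v

/-- If `a = b q^{2p-ℓ-m}` with `p < min(ℓ,m)`, the vectors `Fⁱ(vⱼ ⊗ u₀)`, `j ≤ p`, span a proper
submodule. -/
theorem bad_red (h : Generic q) {ℓ m : ℕ} {a b : ℂ} {p : ℕ} (hl : p < ℓ) (hm : p < m)
    (hab : a = b * q ^ (-((ℓ : ℤ) + m - 2 * p))) : ¬ (tens (ev q ℓ a) (ev q m b)).Irr := by
  intro hI
  have h0 := h.ne0
  have inv : (tens (ev q ℓ a) (ev q m b)).Inv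
      (gen _ {v | ∃ j ≤ p, v = b2 q ℓ a m b j 0}) := by
    refine gen_inv ((evRel h ℓ a).tens h0 (evRel h m b)) h0 ?_ ?_ ?_
    · rintro _ ⟨j, hj, rfl⟩
      refine ⟨q ^ ((ℓ : ℤ) - 2 * j) * q ^ (m : ℤ),
        mul_ne_zero (zpow_ne_zero _ h0) (zpow_ne_zero _ h0), ?_⟩
      rw [b2, tens_K1, ev_K1, ev_K1, map_smul, map_smul, LinearMap.smul_apply, smul_smul, mul_comm]
      push_cast
      simp
    · rintro _ ⟨j, hj, rfl⟩
      have e : (tens (ev q ℓ a) (ev q m b)).X (b2 q ℓ a m b j 0) =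
          (b * q ^ (2 * (j : ℤ) - ℓ + 1)) • (tens (ev q ℓ a) (ev q m b)).F (b2 q ℓ a m b j 0) +
          (q * qnum q ((j : ℤ) + 1) * (a - b * q ^ (2 * (j : ℤ) - ℓ - m))) •
            b2 q ℓ a m b (j + 1) 0 := by
        have h2 := h.sq_sub_one_ne
        simp only [b2, tens_X, tens_F, ev_X, ev_F, ev_K0, map_smul, LinearMap.smul_apply, smul_smul,
          smul_add]
        match_scalars <;> push_cast <;>
        simp only [qnum_eq h, zpow_add₀ h0, zpow_sub₀ h0, zpow_one, zpow_zero,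
          zpow_natCast] <;>
        field_simp
        ring
      rw [e]
      refine Submodule.add_mem _ (Submodule.smul_mem _ _ (gen_F _ (mem_gen 0 ⟨j, hj, rfl⟩))) ?_
      rcases Nat.lt_or_ge j p with h1 | h1
      · exact Submodule.smul_mem _ _ (mem_gen 0 ⟨j + 1, h1, rfl⟩)
      · have : j = p := by omega
        have e : a - b * q ^ (2 * (j : ℤ) - ℓ - m) = 0 := by
          rw [hab, this, show -((ℓ : ℤ) + m - 2 * p) = 2 * (p : ℤ) - ℓ - m by ring, sub_self]
        rw [e, mul_zero, zero_smul]
        exact Submodule.zero_mem _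
    · rintro _ ⟨j, hj, rfl⟩
      cases j with
      | zero =>
        rw [pair_E]
        exact Submodule.zero_mem _
      | succ j =>
        rw [b2, tens_E, ev_E_zero, map_zero, zero_add, ev_E_succ, map_smul, LinearMap.smul_apply]
        exact Submodule.smul_mem _ _ (mem_gen 0 ⟨j, by omega, rfl⟩)
  have kill : ∀ v ∈ gen (tens (ev q ℓ a) (ev q m b)) {v | ∃ j ≤ p, v = b2 q ℓ a m b j 0},
      psi q ℓ a m b p v ∈ (⊥ : Submodule ℂ ℂ) := by
    have := gen_le (M := tens (ev q ℓ a) (ev q m b)) (s := {v | ∃ j ≤ p, v = b2 q ℓ a m b j 0})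
      LinearMap.id (LinearMap.ker (psi q ℓ a m b p)) ?_
    · exact this
    · rintro i _ ⟨j, hj, rfl⟩
      rw [LinearMap.id_apply, LinearMap.mem_ker]
      cases i with
      | zero =>
        rw [pow_zero, Module.End.one_apply, psi_b2 hl hm, if_neg (by omega)]
      | succ i => rw [pow_succ', Module.End.mul_apply, psi_F h hl hm]
  rcases hI _ inv with h1 | h1
  · have h2 := mem_gen (M := tens (ev q ℓ a) (ev q m b)) 0
      (show b2 q ℓ a m b 0 0 ∈ {v | ∃ j ≤ p, v = b2 q ℓ a m b j 0} from ⟨0, Nat.zero_le _, rfl⟩)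
    rw [h1, Submodule.mem_bot] at h2
    have h3 := chi_b2 (q := q) ℓ m a b
    rw [show b2 q ℓ a m b 0 0 = 0 from h2, map_zero] at h3
    exact zero_ne_one h3
  · have h2 := kill (b2 q ℓ a m b 0 (p + 1)) (h1 ▸ trivial)
    rw [psi_b2 hl hm, if_pos (by omega), Submodule.mem_bot] at h2
    exact one_ne_zero h2

/-- The case of the positive exponent is reduced to `bad_red` by exchanging the two factors. -/
theorem good_of_irr (h : Generic q) {x y : ℕ × ℂ}
    (hI : (tens (ev q x.1 x.2) (ev q y.1 y.2)).Irr) : Good q x y := by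
  intro p hp
  rw [lt_min_iff] at hp
  constructor
  · intro h1
    obtain ⟨f⟩ := swap_iso h _ _ _ _ hI
    refine bad_red h hp.2 hp.1 ?_ (f.irr hI)
    rw [h1, mul_assoc, ← zpow_add₀ h.ne0]
    simp [add_comm]
  · intro h1
    exact bad_red h hp.1 hp.2 h1 hI

end bad

theorem exists_dual_ne {V : Type*} [AddCommGroup V] [Module ℂ V] {x : V} (hx : x ≠ 0) :
    ∃ f : V →ₗ[ℂ] ℂ, f x ≠ 0 := by
  by_contra! h
  exact hx ((Module.forall_dual_apply_eq_zero_iff ℂ x).1 h)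

/-- The left tensor factor of an irreducible module is irreducible. -/
theorem irr_left {A B : UMod} {y₀ : B.V} (hy : y₀ ≠ 0) (hI : (tens A B).Irr) : A.Irr := by
  intro W hW
  obtain ⟨S, hS⟩ : ∃ S : Submodule ℂ (tens A B).V, S = Submodule.span ℂ {v | ∃ w ∈ W, ∃ y, v = tm w y} :=
    ⟨_, rfl⟩
  have mS : ∀ w ∈ W, ∀ y, tm w y ∈ S := fun w hw y => by
    rw [hS]
    exact Submodule.subset_span ⟨w, hw, y, rfl⟩
  have ind : ∀ f : Module.End ℂ (tens A B).V, (∀ w ∈ W, ∀ y, f (tm w y) ∈ S) →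
      ∀ v ∈ S, f v ∈ S := by
    intro f hf
    have : S ≤ S.comap f := by
      conv_lhs => rw [hS]
      refine Submodule.span_le.2 ?_
      rintro _ ⟨w, hw, y, rfl⟩
      exact hf w hw y
    exact this
  have inv : (tens A B).Inv S := by
    refine ⟨ind _ fun w hw y => ?_, ind _ fun w hw y => ?_, ind _ fun w hw y => ?_,
      ind _ fun w hw y => ?_, ind _ fun w hw y => ?_⟩
    · rw [tens_X]
      exact S.add_mem (mS _ (hW.K0 _ hw) _) (mS _ (hW.X _ hw) _)
    · rw [tens_E]
      exact S.add_mem (mS _ (hW.K1 _ hw) _) (mS _ (hW.E _ hw) _)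
    · rw [tens_F]
      exact S.add_mem (mS _ hw _) (mS _ (hW.F _ hw) _)
    · rw [tens_K0]
      exact mS _ (hW.K0 _ hw) _
    · rw [tens_K1]
      exact mS _ (hW.K1 _ hw) _
  obtain ⟨f, hf⟩ := exists_dual_ne hy
  rcases hI S inv with h | h
  · left
    rw [eq_bot_iff]
    intro w hw
    have h1 := mS w hw y₀
    rw [h, Submodule.mem_bot] at h1
    have h2 := congrArg (tlift ((LinearMap.lsmul ℂ A.V).flip.compl₂ f)) h1
    rw [tlift_tm, map_zero] at h2
    exact (Submodule.mem_bot ℂ).2 ((smul_eq_zero.1 h2).resolve_left hf)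
  · right
    rw [eq_top_iff]
    intro x _
    have k : S ≤ LinearMap.ker (tlift ((LinearMap.lsmul ℂ (A.V ⧸ W)).flip.compl₁₂ W.mkQ f)) := by
      rw [hS]
      refine Submodule.span_le.2 ?_
      rintro _ ⟨w, hw, y, rfl⟩
      rw [SetLike.mem_coe, LinearMap.mem_ker, tlift_tm, LinearMap.compl₁₂_apply,
        (Submodule.Quotient.mk_eq_zero W).2 hw |> (show W.mkQ w = 0 from ·), map_zero,
        LinearMap.zero_apply]
    have h2 := k (x := tm x y₀) (h ▸ trivial)
    rw [LinearMap.mem_ker, tlift_tm] at h2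
    exact (Submodule.Quotient.mk_eq_zero W).1 ((smul_eq_zero.1 h2).resolve_left hf)

/-- The right tensor factor of an irreducible module is irreducible. -/
theorem irr_right {A B : UMod} {x₀ : A.V} (hx : x₀ ≠ 0) (hI : (tens A B).Irr) : B.Irr := by
  intro W hW
  obtain ⟨S, hS⟩ : ∃ S : Submodule ℂ (tens A B).V, S = Submodule.span ℂ {v | ∃ w ∈ W, ∃ x, v = tm x w} :=
    ⟨_, rfl⟩
  have mS : ∀ w ∈ W, ∀ x, tm x w ∈ S := fun w hw x => by
    rw [hS]
    exact Submodule.subset_span ⟨w, hw, x, rfl⟩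
  have ind : ∀ f : Module.End ℂ (tens A B).V, (∀ w ∈ W, ∀ x, f (tm x w) ∈ S) →
      ∀ v ∈ S, f v ∈ S := by
    intro f hf
    have : S ≤ S.comap f := by
      conv_lhs => rw [hS]
      refine Submodule.span_le.2 ?_
      rintro _ ⟨w, hw, y, rfl⟩
      exact hf w hw y
    exact this
  have inv : (tens A B).Inv S := by
    refine ⟨ind _ fun w hw y => ?_, ind _ fun w hw y => ?_, ind _ fun w hw y => ?_,
      ind _ fun w hw y => ?_, ind _ fun w hw y => ?_⟩
    · rw [tens_X]
      exact S.add_mem (mS _ (hW.X _ hw) _) (mS _ hw _)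
    · rw [tens_E]
      exact S.add_mem (mS _ (hW.E _ hw) _) (mS _ hw _)
    · rw [tens_F]
      exact S.add_mem (mS _ (hW.F _ hw) _) (mS _ (hW.K0 _ hw) _)
    · rw [tens_K0]
      exact mS _ (hW.K0 _ hw) _
    · rw [tens_K1]
      exact mS _ (hW.K1 _ hw) _
  obtain ⟨f, hf⟩ := exists_dual_ne hx
  rcases hI S inv with h | h
  · left
    rw [eq_bot_iff]
    intro w hw
    have h1 := mS w hw x₀
    rw [h, Submodule.mem_bot] at h1
    have h2 := congrArg (tlift ((LinearMap.lsmul ℂ B.V) ∘ₗ f)) h1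
    rw [tlift_tm, map_zero] at h2
    exact (Submodule.mem_bot ℂ).2 ((smul_eq_zero.1 h2).resolve_left hf)
  · right
    rw [eq_top_iff]
    intro x _
    have k : S ≤ LinearMap.ker (tlift ((LinearMap.lsmul ℂ (B.V ⧸ W)).compl₁₂ f W.mkQ)) := by
      rw [hS]
      refine Submodule.span_le.2 ?_
      rintro _ ⟨w, hw, y, rfl⟩
      rw [SetLike.mem_coe, LinearMap.mem_ker, tlift_tm, LinearMap.compl₁₂_apply,
        (Submodule.Quotient.mk_eq_zero W).2 hw |> (show W.mkQ w = 0 from ·), map_zero]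
    have h2 := k (x := tm x₀ x) (h ▸ trivial)
    rw [LinearMap.mem_ker, tlift_tm] at h2
    exact (Submodule.Quotient.mk_eq_zero W).1 ((smul_eq_zero.1 h2).resolve_left hf)

end UMod

/-! ### Permuting the factors -/

namespace UMod

/-- The linear equivalence underlying `A ⊗ 1 ≅ A`. -/
def oneE (A : UMod) : (tens A one).V ≃ₗ[ℂ] A.V := TensorProduct.rid ℂ A.V

theorem oneE_tm (A : UMod) (x : A.V) (c : one.V) :
    oneE A (tm x c) = (show ℂ from c) • x := TensorProduct.rid_tmul (R := ℂ) (M := A.V) x c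

/-- `A ⊗ 1 ≅ A`. -/
def Iso.unit (A : UMod) : Iso (UMod.tens A one) A := by
  refine Iso.mk' (oneE A) (tens_ext fun x c => ?_) (tens_ext fun x c => ?_)
    (tens_ext fun x c => ?_) (tens_ext fun x c => ?_) (tens_ext fun x c => ?_)
  · change oneE A (tm (A.K0 x) (0 : one.V) + tm (A.X x) c) = A.X (oneE A (tm x c))
    rw [map_zero, zero_add, oneE_tm, oneE_tm, map_smul]
  · change oneE A (tm (A.K1 x) (0 : one.V) + tm (A.E x) c) = A.E (oneE A (tm x c))
    rw [map_zero, zero_add, oneE_tm, oneE_tm, map_smul]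
  · change oneE A (tm x (0 : one.V) + tm (A.F x) c) = A.F (oneE A (tm x c))
    rw [map_zero, zero_add, oneE_tm, oneE_tm, map_smul]
  · change oneE A (tm (A.K0 x) c) = A.K0 (oneE A (tm x c))
    rw [oneE_tm, oneE_tm, map_smul]
  · change oneE A (tm (A.K1 x) c) = A.K1 (oneE A (tm x c))
    rw [oneE_tm, oneE_tm, map_smul]

section perm
variable {q : ℂ}

theorem pair_swap (h : Generic q) {x y : ℕ × ℂ} (hx : x.2 ≠ 0) (hy : y.2 ≠ 0) (hg : Good q x y) :
    Nonempty (Iso (tens (ev q x.1 x.2) (ev q y.1 y.2)) (tens (ev q y.1 y.2) (ev q x.1 x.2))) := by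
  have main : ∀ x y : ℕ × ℂ, x.2 ≠ 0 → y.2 ≠ 0 → Good q x y → x.1 ≤ y.1 →
      Nonempty (Iso (tens (ev q x.1 x.2) (ev q y.1 y.2))
        (tens (ev q y.1 y.2) (ev q x.1 x.2))) := by
    intro x y hx hy hg hl
    have hI : (Mod q [x, y]).Irr := sorted_irr h (by simp [hx, hy]) (by simp [hl]) (by simp [hg])
    exact swap_iso h _ _ _ _ (((Iso.refl _).tens (Iso.unit _)).irr hI)
  rcases Nat.le_total x.1 y.1 with hl | hl
  · exact main x y hx hy hg hl
  · obtain ⟨f⟩ := main y x hy hx (hg.symm h.ne0) hl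
    exact ⟨f.symm⟩

theorem cons_iso (x : ℕ × ℂ) {L L' : List (ℕ × ℂ)} (f : Iso (Mod q L) (Mod q L')) :
    Nonempty (Iso (Mod q (x :: L)) (Mod q (x :: L'))) :=
  ⟨(Iso.refl (ev q x.1 x.2)).tens f⟩

/-- Up to isomorphism the order of the factors does not matter when the strings are in general
position. -/
theorem perm_iso (h : Generic q) {L L' : List (ℕ × ℂ)} (hp : L.Perm L') (h0 : ∀ y ∈ L, y.2 ≠ 0)
    (hg : L.Pairwise (Good q)) : Nonempty (Iso (Mod q L) (Mod q L')) := by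
  induction hp with
  | nil => exact ⟨Iso.refl _⟩
  | cons x _ ih =>
    obtain ⟨f⟩ := ih (fun y hy => h0 y (List.mem_cons_of_mem _ hy)) (List.pairwise_cons.1 hg).2
    exact cons_iso x f
  | swap x y L =>
    obtain ⟨f⟩ := pair_swap h (h0 y (by simp)) (h0 x (by simp))
      ((List.pairwise_cons.1 hg).1 x (by simp))
    exact ⟨(Iso.assoc _ _ (Mod q L)).symm.trans ((f.tens (Iso.refl _)).trans (Iso.assoc _ _ _))⟩
  | trans h1 _ ih1 ih2 =>
    obtain ⟨f⟩ := ih1 h0 hg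
    obtain ⟨g⟩ := ih2 (fun y hy => h0 y (h1.mem_iff.2 hy))
      ((h1.pairwise_iff fun hxy => hxy.symm h.ne0).1 hg)
    exact ⟨f.trans g⟩

theorem exists_sorted (L : List (ℕ × ℂ)) :
    ∃ L' : List (ℕ × ℂ), L'.Perm L ∧ L'.Pairwise fun x y => x.1 ≤ y.1 := by
  let r : ℕ × ℂ → ℕ × ℂ → Prop := fun x y => x.1 ≤ y.1
  have : DecidableRel r := fun x y => Nat.decLe _ _
  have : Std.Total r := ⟨fun x y => Nat.le_total _ _⟩
  have : IsTrans _ r := ⟨fun _ _ _ h1 h2 => Nat.le_trans h1 h2⟩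
  exact ⟨L.insertionSort r, List.perm_insertionSort r L, List.pairwise_insertionSort r L⟩

/-- Sort the factors by dimension, keeping `V(ℓ,0)` in front. -/
theorem irr_of_good (h : Generic q) (ℓ : ℕ) {L : List (ℕ × ℂ)} (h0 : ∀ y ∈ L, y.2 ≠ 0)
    (hg : L.Pairwise (Good q)) : (Mod q ((ℓ, 0) :: L)).Irr := by
  obtain ⟨L', hp, hs⟩ := exists_sorted L
  have h0' : ∀ y ∈ L', y.2 ≠ 0 := fun y hy => h0 y (hp.mem_iff.1 hy)
  have hg' : L'.Pairwise (Good q) := (hp.pairwise_iff fun hxy => hxy.symm h.ne0).2 hg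
  obtain ⟨f⟩ := perm_iso h hp h0' hg'
  obtain ⟨g⟩ := cons_iso (ℓ, 0) f
  exact g.irr (sorted_irr_zero h ℓ h0' hs hg')

/-- The first factor is good with any other factor, since that one can be moved next to it. -/
theorem goods_of_irr (h : Generic q) {L : List (ℕ × ℂ)} (h0 : ∀ y ∈ L, y.2 ≠ 0)
    (hI : (Mod q L).Irr) : L.Pairwise (Good q) := by
  induction L with
  | nil => exact List.Pairwise.nil
  | cons x L ih =>
    have h0' : ∀ y ∈ L, y.2 ≠ 0 := fun y hy => h0 y (List.mem_cons_of_mem _ hy)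
    have hL : L.Pairwise (Good q) :=
      ih h0' (irr_right (bv_ne_zero (q := q) (a := x.2) (Nat.zero_le x.1)) hI)
    refine List.pairwise_cons.2 ⟨fun y hy => ?_, hL⟩
    obtain ⟨s, t, rfl⟩ := List.append_of_mem hy
    obtain ⟨f⟩ := perm_iso h List.perm_middle h0' hL
    obtain ⟨g⟩ := cons_iso x f
    have h2 : (tens (tens (ev q x.1 x.2) (ev q y.1 y.2)) (Mod q (s ++ t))).Irr :=
      (Iso.assoc _ _ _).symm.irr (g.irr hI)
    exact good_of_irr h (irr_left (Om_ne_zero q _) h2)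

theorem irr_iff_good (h : Generic q) (ℓ : ℕ) {L : List (ℕ × ℂ)} (h0 : ∀ y ∈ L, y.2 ≠ 0) :
    (Mod q ((ℓ, 0) :: L)).Irr ↔ L.Pairwise (Good q) :=
  ⟨fun hI => goods_of_irr h h0 (irr_right (bv_ne_zero (q := q) (a := 0) (Nat.zero_le ℓ)) hI),
    irr_of_good h ℓ h0⟩

end perm

end UMod

/-! ### `q`-strings in general position -/

section strings
variable {q : ℂ}

open UMod (Good Good.symm)

theorem str_exists (h : Generic q) {a u : ℂ} {ℓ : ℕ} {i : ℤ}
    (ha : a = u * q ^ (2 * i + ℓ - 1)) {z : ℂ} (hz : z ∈ qString q a ℓ) :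
    ∃ k : ℤ, z = u * q ^ (2 * k) := by
  obtain ⟨j, _, rfl⟩ := hz
  refine ⟨i + j, ?_⟩
  rw [ha, mul_assoc, ← zpow_add₀ h.ne0]
  congr 2
  ring

/-- In the progression `u q^{2ℤ}`, the string is the interval `[i, i+ℓ)` of exponents. -/
theorem mem_str (h : Generic q) {a u : ℂ} {ℓ : ℕ} {i : ℤ} (hu : u ≠ 0)
    (ha : a = u * q ^ (2 * i + ℓ - 1)) (k : ℤ) :
    u * q ^ (2 * k) ∈ qString q a ℓ ↔ i ≤ k ∧ k < i + ℓ := by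
  have e : ∀ j : ℕ, a * q ^ (2 * (j : ℤ) - ℓ + 1) = u * q ^ (2 * (i + j)) := fun j => by
    rw [ha, mul_assoc, ← zpow_add₀ h.ne0]
    congr 2
    ring
  constructor
  · rintro ⟨j, hj, h1⟩
    rw [e] at h1
    have := h.zpow_inj (mul_left_cancel₀ hu h1)
    omega
  · rintro ⟨h1, h2⟩
    refine ⟨(k - i).toNat, by omega, ?_⟩
    rw [e]
    congr 3
    omega

/-- Every string contained in the progression `u q^{2ℤ}` is an interval in it. -/
theorem str_pos (h : Generic q) {a u : ℂ} {ℓ : ℕ} (hl : 1 ≤ ℓ) {S : Set ℂ}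
    (hS : ∀ z ∈ S, ∃ k : ℤ, z = u * q ^ (2 * k)) (hsub : qString q a ℓ ⊆ S) :
    ∃ i : ℤ, a = u * q ^ (2 * i + ℓ - 1) := by
  obtain ⟨k, hk⟩ := hS _ (hsub ⟨0, hl, rfl⟩)
  refine ⟨k, ?_⟩
  have := congrArg (· * q ^ ((ℓ : ℤ) - 1)) hk
  simp only [mul_assoc, ← zpow_add₀ h.ne0] at this
  rw [show 2 * k + (ℓ : ℤ) - 1 = 2 * k + (ℓ - 1) by ring, ← this]
  simp

/-- Two intervals `[i, i+ℓ)`, `[j, j+m)` which overlap or touch, the second one sticking out to the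
right, are excluded by `Good`. -/
theorem not_good_of_lt (h : Generic q) {a b u : ℂ} {ℓ m : ℕ} {i j : ℤ}
    (ha : a = u * q ^ (2 * i + ℓ - 1)) (hb : b = u * q ^ (2 * j + m - 1)) (h1 : i < j)
    (h2 : i + ℓ < j + m) (h3 : j ≤ i + ℓ) : ¬ Good q (ℓ, a) (m, b) := by
  intro hg
  refine (hg (i + ℓ - j).toNat (lt_min (by dsimp only; omega) (by dsimp only; omega))).2 ?_
  dsimp only
  rw [ha, hb, mul_assoc, ← zpow_add₀ h.ne0, Int.toNat_of_nonneg (by omega)]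
  congr 2
  ring

/-- If the union of two strings is a string and neither contains the other, then the corresponding
intervals of exponents overlap or touch, contrary to `Good`. -/
theorem genPos_of_good (h : Generic q) {a b : ℂ} {ℓ m : ℕ} (hl : 1 ≤ ℓ) (hm : 1 ≤ m)
    (hg : Good q (ℓ, a) (m, b)) : GenPos q (qString q a ℓ) (qString q b m) := by
  by_contra hn
  rw [GenPos, not_or, not_or, not_not] at hn
  obtain ⟨⟨L, c, hL, hc, hU⟩, n1, n2⟩ := hn
  obtain ⟨u, hu⟩ : ∃ u, u = c * q ^ (1 - (L : ℤ)) := ⟨_, rfl⟩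
  have u0 : u ≠ 0 := hu ▸ mul_ne_zero hc (zpow_ne_zero _ h.ne0)
  have hc' : c = u * q ^ (2 * (0 : ℤ) + L - 1) := by
    rw [hu, mul_assoc, ← zpow_add₀ h.ne0]
    simp
  have hS : ∀ z ∈ qString q c L, ∃ k : ℤ, z = u * q ^ (2 * k) := fun z hz => str_exists h hc' hz
  obtain ⟨i, ha⟩ := str_pos h hl hS (a := a) (hU ▸ Set.subset_union_left)
  obtain ⟨j, hb⟩ := str_pos h hm hS (a := b) (hU ▸ Set.subset_union_right)
  have key : ∀ k : ℤ, (i ≤ k ∧ k < i + ℓ) ∨ (j ≤ k ∧ k < j + m) ↔ 0 ≤ k ∧ k < 0 + L := fun k => by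
    rw [← mem_str h u0 ha, ← mem_str h u0 hb, ← mem_str h u0 hc', ← hU, Set.mem_union]
  have s1 : ¬ (j ≤ i ∧ i + ℓ ≤ j + m) := fun h1 => n1 fun z hz => by
    obtain ⟨k, rfl⟩ := str_exists h ha hz
    rw [mem_str h u0 ha] at hz
    rw [mem_str h u0 hb]
    omega
  have s2 : ¬ (i ≤ j ∧ j + m ≤ i + ℓ) := fun h1 => n2 fun z hz => by
    obtain ⟨k, rfl⟩ := str_exists h hb hz
    rw [mem_str h u0 hb] at hz
    rw [mem_str h u0 ha]
    omega
  have k1 := key i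
  have k2 := key j
  have k3 := key (i + ℓ - 1)
  have k4 := key (j + m - 1)
  have k5 := key (i + ℓ)
  have k6 := key (j + m)
  rcases lt_or_ge i j with hij | hij
  · exact not_good_of_lt h ha hb hij (by omega) (by omega) hg
  · exact not_good_of_lt h hb ha (by omega) (by omega) (by omega) (hg.symm h.ne0)

/-- The intervals of exponents are `[0, ℓ)` and `[ℓ-p, ℓ-p+m)`. -/
theorem not_genPos (h : Generic q) {a b : ℂ} {ℓ m p : ℕ} (ha : a ≠ 0) (hl : p < ℓ) (hm : p < m)
    (hab : a = b * q ^ (-((ℓ : ℤ) + m - 2 * p))) :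
    IsQString q (qString q a ℓ ∪ qString q b m) ∧ ¬ qString q a ℓ ⊆ qString q b m ∧
      ¬ qString q b m ⊆ qString q a ℓ := by
  have h0 := h.ne0
  obtain ⟨u, hu⟩ : ∃ u, u = a * q ^ (1 - (ℓ : ℤ)) := ⟨_, rfl⟩
  have u0 : u ≠ 0 := hu ▸ mul_ne_zero ha (zpow_ne_zero _ h0)
  have ha' : a = u * q ^ (2 * (0 : ℤ) + ℓ - 1) := by
    rw [hu, mul_assoc, ← zpow_add₀ h0]
    simp
  have hb' : b = u * q ^ (2 * ((ℓ : ℤ) - p) + m - 1) := by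
    rw [hu, hab, mul_assoc, mul_assoc, ← zpow_add₀ h0, ← zpow_add₀ h0,
      show -((ℓ : ℤ) + m - 2 * p) + (1 - ℓ + (2 * (ℓ - p) + m - 1)) = 0 by ring, zpow_zero, mul_one]
  obtain ⟨c, hc⟩ : ∃ c, c = u * q ^ (2 * (0 : ℤ) + (ℓ - p + m : ℕ) - 1) := ⟨_, rfl⟩
  refine ⟨⟨ℓ - p + m, c, by omega, hc ▸ mul_ne_zero u0 (zpow_ne_zero _ h0), ?_⟩, ?_, ?_⟩
  · have key : ∀ k : ℤ, u * q ^ (2 * k) ∈ qString q a ℓ ∪ qString q b m ↔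
        u * q ^ (2 * k) ∈ qString q c (ℓ - p + m) := fun k => by
      rw [Set.mem_union, mem_str h u0 ha', mem_str h u0 hb', mem_str h u0 hc]
      omega
    ext z
    constructor
    · intro hz
      obtain ⟨k, rfl⟩ : ∃ k : ℤ, z = u * q ^ (2 * k) :=
        hz.elim (fun hz => str_exists h ha' hz) fun hz => str_exists h hb' hz
      exact (key k).1 hz
    · intro hz
      obtain ⟨k, rfl⟩ := str_exists h hc hz
      exact (key k).2 hz
  · intro hs
    have := (mem_str h u0 hb' 0).1 (hs ((mem_str h u0 ha' 0).2 (by omega)))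
    omega
  · intro hs
    have := (mem_str h u0 ha' ((ℓ : ℤ) - p + m - 1)).1 (hs ((mem_str h u0 hb' _).2 (by omega)))
    omega

/-- The strings `S(ℓ,a)` and `S(m,b)` fail to be in general position exactly when
`a = b q^{±(ℓ+m-2p)}` for some `p < min(ℓ,m)`. -/
theorem genPos_iff_good (h : Generic q) {a b : ℂ} {ℓ m : ℕ} (hl : 1 ≤ ℓ) (hm : 1 ≤ m) (ha : a ≠ 0)
    (hb : b ≠ 0) : GenPos q (qString q a ℓ) (qString q b m) ↔ Good q (ℓ, a) (m, b) := by
  refine ⟨fun hg p hp => ?_, genPos_of_good h hl hm⟩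
  obtain ⟨hp1, hp2⟩ := lt_min_iff.1 hp
  constructor
  · intro h1
    dsimp only at h1
    have h2 : b = a * q ^ (-((m : ℤ) + ℓ - 2 * p)) := by
      rw [h1, mul_assoc, ← zpow_add₀ h.ne0]
      simp [add_comm]
    obtain ⟨n1, n2, n3⟩ := not_genPos h hb hp2 hp1 h2
    rw [Set.union_comm] at n1
    rcases hg with hg | hg | hg
    exacts [hg n1, n3 hg, n2 hg]
  · intro h1
    obtain ⟨n1, n2, n3⟩ := not_genPos h ha hp1 hp2 h1
    rcases hg with hg | hg | hg
    exacts [hg n1, n2 hg, n3 hg]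

end strings

/-! ### Comparison with the tensor product `⨂ᵢ` -/

section consEquiv
variable {N : ℕ} {A : Fin (N + 1) → Type} [∀ i, AddCommGroup (A i)] [∀ i, Module ℂ (A i)]

/-- `a₀ ⊗ ⋯ ⊗ a_N ↦ a₀ ⊗ (a₁ ⊗ ⋯ ⊗ a_N)`. -/
def consFwd : (⨂[ℂ] i, A i) →ₗ[ℂ] A 0 ⊗[ℂ] (⨂[ℂ] i : Fin N, A i.succ) :=
  PiTensorProduct.lift (LinearMap.uncurryLeft
    { toFun := fun x => (TensorProduct.mk ℂ (A 0) (⨂[ℂ] i : Fin N, A i.succ) x).compMultilinearMap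
        (PiTensorProduct.tprod ℂ)
      map_add' := fun x y => by
        ext f
        simp
      map_smul' := fun c x => by
        ext f
        simp })

theorem consFwd_tprod (f : ∀ i, A i) : consFwd (PiTensorProduct.tprod ℂ f) =
    f 0 ⊗ₜ[ℂ] PiTensorProduct.tprod ℂ fun i : Fin N => f i.succ := by
  simp [consFwd, Fin.tail_def]

/-- `a₀ ⊗ (a₁ ⊗ ⋯ ⊗ a_N) ↦ a₀ ⊗ ⋯ ⊗ a_N`. -/
def consBwd : A 0 ⊗[ℂ] (⨂[ℂ] i : Fin N, A i.succ) →ₗ[ℂ] (⨂[ℂ] i, A i) :=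
  TensorProduct.lift ((PiTensorProduct.lift (R := ℂ)).toLinearMap ∘ₗ
    (PiTensorProduct.tprod (R := ℂ) (s := A)).curryLeft)

theorem consBwd_tmul (x : A 0) (g : ∀ i : Fin N, A i.succ) :
    consBwd (x ⊗ₜ[ℂ] PiTensorProduct.tprod ℂ g) =
      PiTensorProduct.tprod ℂ (Fin.cons x g : ∀ i, A i) := by
  simp [consBwd]

/-- Splitting off the first factor of a tensor product. -/
def consEquiv : (⨂[ℂ] i, A i) ≃ₗ[ℂ] A 0 ⊗[ℂ] (⨂[ℂ] i : Fin N, A i.succ) :=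
  LinearEquiv.ofLinearMap consFwd consBwd
    (TensorProduct.ext (LinearMap.ext fun x => PiTensorProduct.ext (MultilinearMap.ext fun g => by
      simp [consBwd_tmul, consFwd_tprod])))
    (PiTensorProduct.ext (MultilinearMap.ext fun f => by
      simp only [LinearMap.compMultilinearMap_apply, LinearMap.comp_apply, consFwd_tprod,
        consBwd_tmul, LinearMap.id_apply]
      congr 1
      exact Fin.cons_self_tail f))

theorem consEquiv_tprod (f : ∀ i, A i) : consEquiv (PiTensorProduct.tprod ℂ f) =
    f 0 ⊗ₜ[ℂ] PiTensorProduct.tprod ℂ fun i : Fin N => f i.succ := consFwd_tprod f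

end consEquiv

namespace UMod

/-- The iterated tensor product of evaluation modules on `⨂ᵢ ℂ^{nᵢ+1}`. -/
def tp (q : ℂ) {N : ℕ} (ns : Fin N → ℕ) (as : Fin N → ℂ) : UMod where
  V := TPS ns
  X := tpE0 q ns as
  E := tpE1p q ns
  F := tpE1m q ns
  K0 := tpK0 q ns
  K1 := tpK1 q ns

section tpCons
variable (q : ℂ) {N : ℕ} (ns : Fin (N + 1) → ℕ) (as : Fin (N + 1) → ℂ)

/-- The linear equivalence underlying `tpCons`. -/
def tpE : (tp q ns as).V ≃ₗ[ℂ]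
    (tens (ev q (ns 0) (as 0)) (tp q (fun i => ns i.succ) fun i => as i.succ)).V :=
  consEquiv (A := fun i => Fin (ns i + 1) → ℂ)

/-- The pure tensor `f₀ ⊗ ⋯ ⊗ f_{N-1}`. -/
def pt {N : ℕ} (ns : Fin N → ℕ) (as : Fin N → ℂ) (f : ∀ i, Fin (ns i + 1) → ℂ) : (tp q ns as).V :=
  PiTensorProduct.tprod ℂ f

/-- A vector of `ℂ^{ℓ+1}`, regarded as an element of `V(ℓ, a)`. -/
def toEv (ℓ : ℕ) (a : ℂ) (v : Fin (ℓ + 1) → ℂ) : (ev q ℓ a).V := v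

theorem tpE_pt (f : ∀ i, Fin (ns i + 1) → ℂ) : tpE q ns as (pt q ns as f) =
    tm (toEv q (ns 0) (as 0) (f 0)) (pt q (fun i => ns i.succ) (fun i => as i.succ) fun i => f i.succ) := consEquiv_tprod f

variable {q ns as} in
theorem pt_ext {N : ℕ} {ns : Fin N → ℕ} {as : Fin N → ℂ} {P : Type*} [AddCommGroup P] [Module ℂ P]
    {g g' : (tp q ns as).V →ₗ[ℂ] P}
    (h : ∀ f, g (pt q ns as f) = g' (pt q ns as f)) : g = g' :=
  PiTensorProduct.ext (MultilinearMap.ext h)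

theorem tp_X {N : ℕ} (ns : Fin N → ℕ) (as : Fin N → ℂ) (f : ∀ i, Fin (ns i + 1) → ℂ) :
    (tp q ns as).X (pt q ns as f) = ∑ j, pt q ns as fun i =>
      (if i < j then evalK0 q (ns i) else if i = j then evalE0 q (as i) (ns i) else LinearMap.id)
        (f i) := by
  change tpE0 q ns as (PiTensorProduct.tprod ℂ f) = _
  rw [tpE0, LinearMap.sum_apply]
  simp only [PiTensorProduct.map_tprod]
  rfl

theorem tp_E {N : ℕ} (ns : Fin N → ℕ) (as : Fin N → ℂ) (f : ∀ i, Fin (ns i + 1) → ℂ) :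
    (tp q ns as).E (pt q ns as f) = ∑ j, pt q ns as fun i =>
      (if i < j then evalK1 q (ns i) else if i = j then evalE1p q (ns i) else LinearMap.id)
        (f i) := by
  change tpE1p q ns (PiTensorProduct.tprod ℂ f) = _
  rw [tpE1p, LinearMap.sum_apply]
  simp only [PiTensorProduct.map_tprod]
  rfl

theorem tp_F {N : ℕ} (ns : Fin N → ℕ) (as : Fin N → ℂ) (f : ∀ i, Fin (ns i + 1) → ℂ) :
    (tp q ns as).F (pt q ns as f) = ∑ j, pt q ns as fun i =>
      (if i < j then LinearMap.id else if i = j then evalE1m q (ns i) else evalK0 q (ns i))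
        (f i) := by
  change tpE1m q ns (PiTensorProduct.tprod ℂ f) = _
  rw [tpE1m, LinearMap.sum_apply]
  simp only [PiTensorProduct.map_tprod]
  rfl

theorem tp_K0 {N : ℕ} (ns : Fin N → ℕ) (as : Fin N → ℂ) (f : ∀ i, Fin (ns i + 1) → ℂ) :
    (tp q ns as).K0 (pt q ns as f) = pt q ns as fun i => evalK0 q (ns i) (f i) :=
  PiTensorProduct.map_tprod _ _

theorem tp_K1 {N : ℕ} (ns : Fin N → ℕ) (as : Fin N → ℂ) (f : ∀ i, Fin (ns i + 1) → ℂ) :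
    (tp q ns as).K1 (pt q ns as f) = pt q ns as fun i => evalK1 q (ns i) (f i) :=
  PiTensorProduct.map_tprod _ _

/-- Splitting off the first factor is compatible with the iterated coproduct. -/
def tpCons :
    Iso (tp q ns as) (tens (ev q (ns 0) (as 0)) (tp q (fun i => ns i.succ) fun i => as i.succ)) := by
  refine Iso.mk' (tpE q ns as) (pt_ext fun f => ?_) (pt_ext fun f => ?_) (pt_ext fun f => ?_)
    (pt_ext fun f => ?_) (pt_ext fun f => ?_)
  · simp only [LinearMap.comp_apply, LinearEquiv.coe_coe]
    rw [tpE_pt, tens_X, tp_X, tp_X, map_sum, Fin.sum_univ_succ, map_sum]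
    refine (add_comm _ _).trans (congrArg₂ (fun x y => x + y)
      (Finset.sum_congr rfl fun j _ => ?_) ?_)
    · rw [tpE_pt]
      simp only [Fin.succ_lt_succ_iff, Fin.succ_inj, Fin.succ_pos, if_true]
      rfl
    · rw [tpE_pt]
      simp only [Fin.not_lt_zero, Fin.succ_ne_zero, if_true, if_false, lt_irrefl]
      rfl
  · simp only [LinearMap.comp_apply, LinearEquiv.coe_coe]
    rw [tpE_pt, tens_E, tp_E, tp_E, map_sum, Fin.sum_univ_succ, map_sum]
    refine (add_comm _ _).trans (congrArg₂ (fun x y => x + y)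
      (Finset.sum_congr rfl fun j _ => ?_) ?_)
    · rw [tpE_pt]
      simp only [Fin.succ_lt_succ_iff, Fin.succ_inj, Fin.succ_pos, if_true]
      rfl
    · rw [tpE_pt]
      simp only [Fin.not_lt_zero, Fin.succ_ne_zero, if_true, if_false, lt_irrefl]
      rfl
  · simp only [LinearMap.comp_apply, LinearEquiv.coe_coe]
    rw [tpE_pt, tens_F, tp_F, tp_F, tp_K0, map_sum, Fin.sum_univ_succ, map_sum]
    refine (add_comm _ _).trans (congrArg₂ (fun x y => x + y)
      (Finset.sum_congr rfl fun j _ => ?_) ?_)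
    · rw [tpE_pt]
      simp only [Fin.succ_lt_succ_iff, Fin.succ_inj, Fin.succ_pos, if_true]
      rfl
    · rw [tpE_pt]
      simp only [Fin.not_lt_zero, Fin.succ_ne_zero, if_true, if_false, lt_irrefl]
      rfl
  · simp only [LinearMap.comp_apply, LinearEquiv.coe_coe]
    rw [tpE_pt, tens_K0, tp_K0, tp_K0, tpE_pt]
    rfl
  · simp only [LinearMap.comp_apply, LinearEquiv.coe_coe]
    rw [tpE_pt, tens_K1, tp_K1, tp_K1, tpE_pt]
    rfl

end tpCons

/-- The module `⨂ᵢ V(nᵢ,aᵢ)` is isomorphic to the iterated tensor product in list form. -/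
theorem tp_iso (q : ℂ) {N : ℕ} (ns : Fin N → ℕ) (as : Fin N → ℂ) :
    Nonempty (Iso (tp q ns as) (Mod q (List.ofFn fun i => (ns i, as i)))) := by
  induction N with
  | zero =>
    let e : (tp q ns as).V ≃ₗ[ℂ] one.V := PiTensorProduct.isEmptyEquiv (Fin 0)
    refine ⟨Iso.mk' (N := one) e (pt_ext fun f => ?_) (pt_ext fun f => ?_) (pt_ext fun f => ?_)
      (pt_ext fun f => ?_) (pt_ext fun f => ?_)⟩
    · simp only [LinearMap.comp_apply, LinearEquiv.coe_coe]
      rw [tp_X, Finset.univ_eq_empty, Finset.sum_empty, map_zero]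
      rfl
    · simp only [LinearMap.comp_apply, LinearEquiv.coe_coe]
      rw [tp_E, Finset.univ_eq_empty, Finset.sum_empty, map_zero]
      rfl
    · simp only [LinearMap.comp_apply, LinearEquiv.coe_coe]
      rw [tp_F, Finset.univ_eq_empty, Finset.sum_empty, map_zero]
      rfl
    · simp only [LinearMap.comp_apply, LinearEquiv.coe_coe]
      rw [tp_K0, Subsingleton.elim (fun i => evalK0 q (ns i) (f i)) f]
      rfl
    · simp only [LinearMap.comp_apply, LinearEquiv.coe_coe]
      rw [tp_K1, Subsingleton.elim (fun i => evalK1 q (ns i) (f i)) f]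
      rfl
  | succ N ih =>
    obtain ⟨f⟩ := ih (fun i => ns i.succ) fun i => as i.succ
    rw [List.ofFn_succ]
    exact ⟨(tpCons q ns as).trans ((Iso.refl _).tens f)⟩

theorem isIrred_iff (M : UMod) : IsIrred M.X M.E M.F M.K0 M.K1 ↔ M.Irr :=
  ⟨fun h W hW => h W hW.X hW.E hW.F hW.K0 hW.K1, fun h W h1 h2 h3 h4 h5 => h W ⟨h1, h2, h3, h4, h5⟩⟩

/-- Every module isomorphic to an iterated tensor product of evaluation modules is of type
`(1,1)`. -/
theorem isType11_of_iso {q : ℂ} (h : Generic q) {L : List (ℕ × ℂ)} {M : UMod}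
    (f : Iso M (Mod q L)) : IsType11 q M.K0 := by
  obtain ⟨d, hd⟩ := (modLaw h L).weights
  refine ⟨d, ?_⟩
  rw [eq_top_iff]
  intro v _
  have key : ∀ w : (Mod q L).V,
      f.e.symm w ∈ ⨆ i : Fin (d + 1), Module.End.eigenspace M.K0 (q ^ (2 * (i : ℤ) - d)) := by
    intro w
    have hw : w ∈ (⊤ : Submodule ℂ (Mod q L).V) := trivial
    rw [← hd] at hw
    refine Submodule.span_induction ?_ ?_ ?_ ?_ hw
    · rintro w ⟨i, hi, h1, -⟩
      refine Submodule.mem_iSup_of_mem ⟨i, by omega⟩ ?_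
      rw [Module.End.mem_eigenspace_iff]
      have h2 := LinearMap.congr_fun (modLaw h L).K0K1 w
      rw [Module.End.mul_apply, Module.End.one_apply, h1, map_smul] at h2
      have h3 : (Mod q L).K0 w = q ^ (2 * (i : ℤ) - d) • w := by
        rw [← one_smul ℂ ((Mod q L).K0 w),
          show (1 : ℂ) = q ^ (2 * (i : ℤ) - d) * q ^ ((d : ℤ) - 2 * i) by
            rw [← zpow_add₀ h.ne0]; simp,
          mul_smul, h2]
      exact (f.symm.K0 w).symm.trans ((congrArg f.e.symm h3).trans (map_smul _ _ _))
    · rw [map_zero]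
      exact Submodule.zero_mem _
    · intro x y _ _ hx hy
      rw [map_add]
      exact Submodule.add_mem _ hx hy
    · intro c x _ hx
      rw [map_smul]
      exact Submodule.smul_mem _ c hx
  rw [← f.e.symm_apply_apply v]
  exact key _

end UMod

/-- `V(ℓ) ⊗ V(ℓ₁,a₁) ⊗ ⋯ ⊗ V(ℓₙ,aₙ)` is irreducible iff all pairs of
`q`-strings `S(ℓᵢ,aᵢ)`, `S(ℓⱼ,aⱼ)` are in general position; in this case it is of
type `(1,1)`. -/
theorem stmt9 (q : ℂ) (hq0 : q ≠ 0) (hq : ∀ n : ℕ, 0 < n → q ^ n ≠ 1)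
    (ℓ n : ℕ) (ℓs : Fin n → ℕ) (as : Fin n → ℂ)
    (hℓs : ∀ i, 1 ≤ ℓs i) (has : ∀ i, as i ≠ 0) :
    (IsIrred (tpE0 q (Fin.cons ℓ ℓs) (Fin.cons 0 as)) (tpE1p q (Fin.cons ℓ ℓs))
        (tpE1m q (Fin.cons ℓ ℓs)) (tpK0 q (Fin.cons ℓ ℓs)) (tpK1 q (Fin.cons ℓ ℓs)) ↔
      ∀ i j : Fin n, GenPos q (qString q (as i) (ℓs i)) (qString q (as j) (ℓs j))) ∧
    (IsIrred (tpE0 q (Fin.cons ℓ ℓs) (Fin.cons 0 as)) (tpE1p q (Fin.cons ℓ ℓs))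
        (tpE1m q (Fin.cons ℓ ℓs)) (tpK0 q (Fin.cons ℓ ℓs)) (tpK1 q (Fin.cons ℓ ℓs)) →
      IsType11 q (tpK0 q (Fin.cons ℓ ℓs))) := by
  have h : Generic q := ⟨hq0, hq⟩
  obtain ⟨f⟩ := UMod.tp_iso q (Fin.cons ℓ ℓs : Fin (n + 1) → ℕ) (Fin.cons 0 as : Fin (n + 1) → ℂ)
  refine ⟨?_, fun _ => UMod.isType11_of_iso h f⟩
  refine (UMod.isIrred_iff (UMod.tp q (Fin.cons ℓ ℓs : Fin (n + 1) → ℕ)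
    (Fin.cons 0 as : Fin (n + 1) → ℂ))).trans (f.irr_iff.trans ?_)
  rw [List.ofFn_succ]
  simp only [Fin.cons_zero, Fin.cons_succ]
  rw [UMod.irr_iff_good h ℓ (by simpa [List.mem_ofFn] using has), List.pairwise_ofFn]
  constructor
  · intro hg i j
    rcases lt_trichotomy i j with hij | rfl | hij
    · exact (genPos_iff_good h (hℓs i) (hℓs j) (has i) (has j)).2 (hg hij)
    · exact Or.inr (Or.inl subset_rfl)
    · exact (genPos_iff_good h (hℓs i) (hℓs j) (has i) (has j)).2 ((hg hij).symm hq0)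
  · intro hg i j _
    exact (genPos_iff_good h (hℓs i) (hℓs j) (has i) (has j)).1 (hg i j)

end
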